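/- arXiv:1411.2759 — 2 statements merged into one kernel-verified Lean document; each statement's English description precedes it below -/
import Mathlib

section
/- (Sharkovskiĭ theorem for S(Ω).) If a map F ∈ S(Ω) has a p-periodic strip, then F has a q-periodic strip for every q ∈ ℕ with p >_Sh q in the Sharkovskiĭ ordering. -/
open Dynamics Set

noncomputable section

/-- The circle `S¹ = ℝ/ℤ`. -/
abbrev S1 : Type := AddCircle (1 : ℝ)

/-- The unit interval `I = [0,1]` as a type. -/
abbrev II : Type := Set.Icc (0 : ℝ) 1

/-- The cylinder `Ω = S¹ × I`. -/
abbrev Cyl : Type := S1 × II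

/-- The fiber of a subset of the cylinder over `θ ∈ S¹`. -/
def fiber (A : Set Cyl) (θ : S1) : Set II := {x : II | (θ, x) ∈ A}

/-- `M_A θ = max {x ∈ I : (θ, x) ∈ A}`. -/
def MA (A : Set Cyl) (θ : S1) : ℝ := sSup (Subtype.val '' fiber A θ)

/-- `m_A θ = min {x ∈ I : (θ, x) ∈ A}`. -/
def mA (A : Set Cyl) (θ : S1) : ℝ := sInf (Subtype.val '' fiber A θ)

/-- A strip: a closed set projecting onto all of `S¹` whose fibers over a residual
set of `θ`'s are (possibly degenerate) nonempty closed intervals. -/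
def IsStrip (A : Set Cyl) : Prop :=
  IsClosed A ∧ (∀ θ : S1, ∃ x : II, (θ, x) ∈ A) ∧
    ∃ G ∈ residual S1, ∀ θ ∈ G, ∃ a b : II, a ≤ b ∧ fiber A θ = Set.Icc a b

/-- `A < B` for strips. -/
def stripLT (A B : Set Cyl) : Prop := ∃ G ∈ residual S1, ∀ θ ∈ G, MA A θ < mA B θ

/-- `A ≤ B` for strips. -/
def stripLE (A B : Set Cyl) : Prop := ∃ G ∈ residual S1, ∀ θ ∈ G, MA A θ ≤ mA B θ

/-- Two strips are ordered if `A < B` or `B < A`. -/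
def StripOrdered (A B : Set Cyl) : Prop := stripLT A B ∨ stripLT B A

/-- Two strips are weakly ordered if `A ≤ B` or `B ≤ A`. -/
def StripWeaklyOrdered (A B : Set Cyl) : Prop := stripLE A B ∨ stripLE B A

/-- The class `S(Ω)` of quasiperiodically forced skew-products on the cylinder:
continuous maps whose first coordinate is an irrational rotation. -/
def IsQPF (F : Cyl → Cyl) : Prop :=
  Continuous F ∧ ∃ ω : ℝ, Irrational ω ∧ ∀ p : Cyl, (F p).1 = p.1 + (ω : S1)

/-- `B` is an `n`-periodic strip of `F`: `F^n(B) = B` and the iterates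
`B, F(B), …, F^{n-1}(B)` are pairwise disjoint and pairwise ordered. -/
def IsPeriodicStripOrbit (F : Cyl → Cyl) (n : ℕ) (B : Set Cyl) : Prop :=
  IsStrip B ∧ F^[n] '' B = B ∧
    ∀ i j : ℕ, i < j → j < n →
      Disjoint (F^[i] '' B) (F^[j] '' B) ∧ StripOrdered (F^[i] '' B) (F^[j] '' B)

/-- A cyclic permutation: the (forward) orbit of any point is everything. -/
def IsCyclicPerm {n : ℕ} (τ : Equiv.Perm (Fin n)) : Prop :=
  ∀ i j : Fin n, ∃ k : ℕ, (τ ^ k) i = j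

/-- `F` exhibits the strips pattern `τ`: it has a periodic orbit of strips,
spatially labelled, moved around according to `τ`. -/
def ExhibitsStripPattern (F : Cyl → Cyl) {n : ℕ} (τ : Equiv.Perm (Fin n)) : Prop :=
  ∃ B : Fin n → Set Cyl,
    (∀ i, IsStrip (B i)) ∧
    (∀ i j : Fin n, i < j → stripLT (B i) (B j)) ∧
    (Pairwise fun i j => Disjoint (B i) (B j)) ∧
    (∀ i, F '' B i = B (τ i))

/-- A continuous interval map has a periodic orbit with interval pattern `τ`. -/
def HasIntervalPattern (f : II → II) {n : ℕ} (τ : Equiv.Perm (Fin n)) : Prop :=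
  ∃ p : Fin n → II, StrictMono p ∧ ∀ i, f (p i) = p (τ i)

/-- `τ` forces `ν` as interval patterns. -/
def ForcesI {n m : ℕ} (τ : Equiv.Perm (Fin n)) (ν : Equiv.Perm (Fin m)) : Prop :=
  ∀ f : II → II, Continuous f → HasIntervalPattern f τ → HasIntervalPattern f ν

/-- `τ` forces `ν` in `Ω`. -/
def ForcesOmega {n m : ℕ} (τ : Equiv.Perm (Fin n)) (ν : Equiv.Perm (Fin m)) : Prop :=
  ∀ F : Cyl → Cyl, IsQPF F → ExhibitsStripPattern F τ → ExhibitsStripPattern F ν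

/-- `p >_Sh q` in the Sharkovskiĭ ordering. -/
def SharkGT (p q : ℕ) : Prop :=
  ∃ i m j l : ℕ, Odd m ∧ Odd l ∧ p = 2 ^ i * m ∧ q = 2 ^ j * l ∧
    ((m = 1 ∧ l = 1 ∧ j < i) ∨ (1 < m ∧ l = 1) ∨
      (1 < m ∧ 1 < l ∧ (i < j ∨ (i = j ∧ m < l))))

/-- The core of a subset of the cylinder. -/
def core (M : Set Cyl) : Set Cyl :=
  ⋂ (G : Set S1) (_ : G ∈ residual S1), closure (M ∩ Prod.fst ⁻¹' G)

/-- A band is a strip equal to its core. -/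
def IsBand (A : Set Cyl) : Prop := IsStrip A ∧ core A = A

/-- Continuity points of a real-valued function on the circle. -/
def contPts (g : S1 → ℝ) : Set S1 := {θ | ContinuousAt g θ}

/-- The top cover `A⁺` of a strip: the closure of the graph of `M_A` restricted to its
residual set of continuity points. -/
def topCover (A : Set Cyl) : Set Cyl :=
  closure {p : Cyl | p.1 ∈ contPts (MA A) ∧ (p.2 : ℝ) = MA A p.1}

/-- The bottom cover `A⁻` of a strip. -/
def botCover (A : Set Cyl) : Set Cyl :=
  closure {p : Cyl | p.1 ∈ contPts (mA A) ∧ (p.2 : ℝ) = mA A p.1}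

/-- `A` positively `F`-covers `B`. -/
def FCoversPos (F : Cyl → Cyl) (A B : Set Cyl) : Prop :=
  stripLE (F '' botCover A) (botCover B) ∧ stripLE (topCover B) (F '' topCover A)

/-- `A` negatively `F`-covers `B`. -/
def FCoversNeg (F : Cyl → Cyl) (A B : Set Cyl) : Prop :=
  stripLE (topCover B) (F '' botCover A) ∧ stripLE (F '' topCover A) (botCover B)

/-- `A` `F`-covers `B`. -/
def FCovers (F : Cyl → Cyl) (A B : Set Cyl) : Prop := FCoversPos F A B ∨ FCoversNeg F A B

/-- An `s`-horseshoe `(J, D)` for `F`. -/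
def IsHorseshoe (F : Cyl → Cyl) (s : ℕ) (J : Set Cyl) (D : Finset (Set Cyl)) : Prop :=
  2 ≤ s ∧ D.card = s ∧ IsBand J ∧
    (∀ L ∈ D, IsBand L ∧ (interior L).Nonempty ∧ FCovers F L J) ∧
    (∀ L ∈ D, ∀ L' ∈ D, L ≠ L' → StripWeaklyOrdered L L')

/-- Topological entropy (cover entropy of the whole space). -/
def hTop {X : Type} [UniformSpace X] (F : X → X) : EReal := coverEntropy F Set.univ

/-- A pseudo-curve: the closure of the graph of a continuous map from a residual
subset of the circle to the interval. -/
def IsPseudoCurve (A : Set Cyl) : Prop :=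
  ∃ G ∈ residual S1, ∃ φ : S1 → II, Continuous (G.restrict φ) ∧
    A = closure {p : Cyl | p.1 ∈ G ∧ p.2 = φ p.1}

/-- The band `E_{AB}` between two pseudo-curves `A < B`. -/
def bandBetween (A B : Set Cyl) : Set Cyl :=
  closure {p : Cyl | p.1 ∈ contPts (MA A) ∧ p.1 ∈ contPts (mA B) ∧
    MA A p.1 < (p.2 : ℝ) ∧ (p.2 : ℝ) < mA B p.1}

/-- `f` is affine on the subinterval `[a, b]` of `I`. -/
def AffineOnIcc (f : II → II) (a b : II) : Prop :=
  ∀ x : II, a ≤ x → x ≤ b →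
    ((b : ℝ) - (a : ℝ)) * ((f x : ℝ) - (f a : ℝ)) =
      ((x : ℝ) - (a : ℝ)) * ((f b : ℝ) - (f a : ℝ))

/-- `f` is the `P`-linear (connect-the-dots) map over the points `p 0 < p 1 < … < p n`:
continuous, affine on each `[p i, p (i+1)]` and constant on both components of
`I ∖ [p 0, p n]`. -/
def IsPLinear {n : ℕ} (f : II → II) (p : Fin (n + 1) → II) : Prop :=
  Continuous f ∧
    (∀ k : Fin n, AffineOnIcc f (p k.castSucc) (p k.succ)) ∧
    (∀ x : II, x ≤ p 0 → f x = f (p 0)) ∧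
    (∀ x : II, p (Fin.last n) ≤ x → f x = f (p (Fin.last n)))

/-- Signed arrow between basic intervals `J_k = [p k, p (k+1)]` and `J_l` in the
`P`-signed Markov graph of `f` (`true` = positive covering, `false` = negative). -/
def IArrow {n : ℕ} (f : II → II) (p : Fin (n + 1) → II) (s : Bool) (k l : Fin n) : Prop :=
  if s then
    (f (p k.castSucc) : ℝ) ≤ (p l.castSucc : ℝ) ∧ (p l.succ : ℝ) ≤ (f (p k.succ) : ℝ)
  else
    (f (p k.succ) : ℝ) ≤ (p l.castSucc : ℝ) ∧ (p l.succ : ℝ) ≤ (f (p k.castSucc) : ℝ)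

/-- A loop of length `m` in the `P`-signed Markov graph of `f`, encoded as `m`-periodic
sequences of vertices (basic intervals) and signs. -/
def IsILoop {n : ℕ} (f : II → II) (p : Fin (n + 1) → II) (m : ℕ)
    (v : ℕ → Fin n) (s : ℕ → Bool) : Prop :=
  0 < m ∧ (∀ i, v (i + m) = v i) ∧ (∀ i, s (i + m) = s i) ∧
    ∀ i, IArrow f p (s i) (v i) (v (i + 1))

/-- A periodic point `x` of (exact) period `m` is associated to the loop with vertex
sequence `v` if `f^i(x) ∈ J_{v i}` for all `i`. -/
def IAssocPt {n : ℕ} (f : II → II) (p : Fin (n + 1) → II) (m : ℕ)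
    (x : II) (v : ℕ → Fin n) : Prop :=
  f^[m] x = x ∧ (∀ i : ℕ, 0 < i → i < m → f^[i] x ≠ x) ∧
    ∀ i : ℕ, p (v i).castSucc ≤ f^[i] x ∧ f^[i] x ≤ p (v i).succ

/-- The sign (`true` = `+`) of the initial segment of length `k` of a signed path. -/
def signAt (s : ℕ → Bool) (k : ℕ) : Bool :=
  decide (Even ((Finset.range k).filter (fun i => s i = false)).card)

/-- Lexicographic ordering of (infinite liftings of) signed paths, comparing the vertex
sequences `v` and `w`; at the first difference the comparison is reversed iff the sign
of the common initial segment is negative. -/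
def seqLT {n : ℕ} (v : ℕ → Fin n) (s : ℕ → Bool) (w : ℕ → Fin n) : Prop :=
  ∃ k : ℕ, (∀ i < k, v i = w i) ∧ v k ≠ w k ∧ (v k < w k ↔ signAt s k = true)

/-- The shift of a sequence by `i`. -/
def shiftSeq {α : Type} (v : ℕ → α) (i : ℕ) : ℕ → α := fun j => v (i + j)

/-- A loop of length `m` (given by `m`-periodic sequences) is simple if it is not the
repetition of a shorter loop. -/
def SimpleLoop {α β : Type} (m : ℕ) (v : ℕ → α) (s : ℕ → β) : Prop :=
  ¬ ∃ d : ℕ, 0 < d ∧ d < m ∧ d ∣ m ∧ (∀ i, v (i + d) = v i) ∧ (∀ i, s (i + d) = s i)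

/-- The basic bands associated to a (spatially labelled) periodic orbit of strips
`B 0 < B 1 < … < B n`: `I_{B_k B_{k+1}} = E_{(B_k)⁺ (B_{k+1})⁻}`. -/
def basicBand {n : ℕ} (B : Fin (n + 1) → Set Cyl) (k : Fin n) : Set Cyl :=
  bandBetween (topCover (B k.castSucc)) (botCover (B k.succ))

/-- Signed arrow between bands in a signed Markov graph of `F`. -/
def BArrow (F : Cyl → Cyl) (s : Bool) (A B : Set Cyl) : Prop :=
  if s then FCoversPos F A B else FCoversNeg F A B

/-- A loop of length `m` in the signed Markov graph of `F` over the basic bands of the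
periodic orbit of strips `B`. -/
def IsBLoop (F : Cyl → Cyl) {n : ℕ} (B : Fin (n + 1) → Set Cyl) (m : ℕ)
    (v : ℕ → Fin n) (s : ℕ → Bool) : Prop :=
  0 < m ∧ (∀ i, v (i + m) = v i) ∧ (∀ i, s (i + m) = s i) ∧
    ∀ i, BArrow F (s i) (basicBand B (v i)) (basicBand B (v (i + 1)))

/-- Equality of patterns given as cyclic permutations of possibly different index sets. -/
def PatternEqNat {a b : ℕ} (τ : Equiv.Perm (Fin a)) (ν : Equiv.Perm (Fin b)) : Prop :=
  a = b ∧ ∀ (i : Fin a) (j : Fin b), (i : ℕ) = (j : ℕ) → ((τ i : ℕ) = (ν j : ℕ))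

/-- The entropy of a strips pattern: the infimum of the entropies of the maps in `S(Ω)`
exhibiting it. -/
def patternEntropy {n : ℕ} (τ : Equiv.Perm (Fin n)) : EReal :=
  sInf {e : EReal | ∃ F : Cyl → Cyl, IsQPF F ∧ ExhibitsStripPattern F τ ∧ e = hTop F}

end

/-! A periodic strip is followed along an invariant residual set of angles, over which its iterates
are measurable families of intervals permuted cyclically, in the same way over every angle, by the
fiber maps. The gaps between neighbouring intervals are the vertices of a Markov graph, the same as
for a periodic orbit of an interval map. Some gap, the center of the cycle, covers itself. If the
cycle switches the two sides of its center, its second iterate is a cycle of half the length, whose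
loops can be doubled. Otherwise a point near the center is thrown back to its own side; the orbit
then spirals out of the center, and the spiral carries loops of every even length and, closed up
through the center, of every length at least `p + 2`.

Along a loop of length `q`, replacing each family of intervals by a part of it stretching exactly
over the next one, and intersecting over all repetitions of this step, gives families of intervals
mapped exactly onto each other. They are bounded by measurable, hence Baire measurable functions,
which are continuous on a residual set; the closures of the families over this set are then strips.
Two of these closures are disjoint, since the angles of their common points form a closed set which
is invariant under the minimal rotation by `q • ω`, but is not the whole circle. -/

noncomputable section

/-! ### Extremal hitting points -/

/-- The leftmost point of `[a, b]` at which `f` reaches the level `y`. -/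
def firstHit (f : ℝ → ℝ) (a b y : ℝ) : ℝ := sInf (Icc a b ∩ {x | y ≤ f x})

/-- The rightmost point of `[a, b]` at which `f` is still at or below the level `y`. -/
def lastHit (f : ℝ → ℝ) (a b y : ℝ) : ℝ := sSup (Icc a b ∩ {x | f x ≤ y})

section Hits

variable {f : ℝ → ℝ} {a b y : ℝ}

lemma firstHit_le {x : ℝ} (hx : x ∈ Icc a b) (hy : y ≤ f x) : firstHit f a b y ≤ x :=
  csInf_le (bddBelow_Icc.mono inter_subset_left) ⟨hx, hy⟩

lemma le_lastHit {x : ℝ} (hx : x ∈ Icc a b) (hy : f x ≤ y) : x ≤ lastHit f a b y :=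
  le_csSup (bddAbove_Icc.mono inter_subset_left) ⟨hx, hy⟩

lemma firstHit_mem (hf : Continuous f) (hab : a ≤ b) (hb : y ≤ f b) :
    firstHit f a b y ∈ Icc a b ∩ {x | y ≤ f x} :=
  (isCompact_Icc.inter_right (isClosed_le continuous_const hf)).sInf_mem
    ⟨b, right_mem_Icc.2 hab, hb⟩

lemma lastHit_mem (hf : Continuous f) (hab : a ≤ b) (ha : f a ≤ y) :
    lastHit f a b y ∈ Icc a b ∩ {x | f x ≤ y} :=
  (isCompact_Icc.inter_right (isClosed_le hf continuous_const)).sSup_mem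
    ⟨a, left_mem_Icc.2 hab, ha⟩

lemma apply_firstHit (hf : Continuous f) (hab : a ≤ b) (ha : f a ≤ y) (hb : y ≤ f b) :
    f (firstHit f a b y) = y := by
  obtain ⟨hmem, hle⟩ := firstHit_mem hf hab hb
  obtain ⟨x, hx, hxy⟩ := intermediate_value_Icc hmem.1 hf.continuousOn ⟨ha, hle⟩
  rwa [((firstHit_le (Icc_subset_Icc_right hmem.2 hx) hxy.ge).antisymm hx.2)]

lemma apply_lastHit (hf : Continuous f) (hab : a ≤ b) (ha : f a ≤ y) (hb : y ≤ f b) :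
    f (lastHit f a b y) = y := by
  obtain ⟨hmem, hle⟩ := lastHit_mem hf hab ha
  obtain ⟨x, hx, hxy⟩ := intermediate_value_Icc hmem.2 hf.continuousOn ⟨hle, hb⟩
  rwa [(hx.1.antisymm (le_lastHit (Icc_subset_Icc_left hmem.1 hx) hxy.le))]

lemma le_of_mem_Icc_firstHit (hf : Continuous f) (hab : a ≤ b) (ha : f a ≤ y) (hb : y ≤ f b)
    {x : ℝ} (hx : x ∈ Icc a (firstHit f a b y)) : f x ≤ y := by
  by_contra! hlt
  have hxb := hx.2.trans (firstHit_mem hf hab hb).1.2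
  have heq := hx.2.antisymm (firstHit_le ⟨hx.1, hxb⟩ hlt.le)
  exact hlt.ne' (heq ▸ apply_firstHit hf hab ha hb)

lemma le_of_mem_Icc_lastHit (hf : Continuous f) (hab : a ≤ b) (ha : f a ≤ y) (hb : y ≤ f b)
    {x : ℝ} (hx : x ∈ Icc (lastHit f a b y) b) : y ≤ f x := by
  by_contra! hlt
  have hax := (lastHit_mem hf hab ha).1.1.trans hx.1
  have heq := hx.1.antisymm (le_lastHit ⟨hax, hx.2⟩ hlt.le)
  exact hlt.ne (heq ▸ apply_lastHit hf hab ha hb)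

lemma firstHit_le_iff (hf : Continuous f) (hab : a ≤ b) (hb : y ≤ f b) {r : ℝ} :
    firstHit f a b y ≤ r ↔ ∃ x ∈ Icc a (min b r), y ≤ f x := by
  refine ⟨fun h => ?_, fun ⟨x, hx, hxy⟩ => ?_⟩
  · obtain ⟨hmem, hle⟩ := firstHit_mem hf hab hb
    exact ⟨_, ⟨hmem.1, le_min hmem.2 h⟩, hle⟩
  · exact (firstHit_le ⟨hx.1, hx.2.trans (min_le_left b r)⟩ hxy).trans
      (hx.2.trans (min_le_right b r))

lemma lastHit_eq_neg_firstHit_neg :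
    lastHit f a b y = -firstHit (fun x => -f (-x)) (-b) (-a) (-y) := by
  rw [lastHit, firstHit, ← Real.sSup_neg]
  congr 1
  ext x
  simp

lemma exists_mem_Icc_le_apply_iff (hf : Continuous f) (hab : a ≤ b) :
    (∃ x ∈ Icc a b, y ≤ f x) ↔ y ≤ ⨆ s : range ((↑) : ℚ → ℝ), f (max a (min b s)) := by
  have hclamp : Continuous fun x => f (max a (min b x)) := by fun_prop
  have hrange : range (fun x => f (max a (min b x))) = f '' Icc a b := by
    refine (range_subset_iff.2 fun x => ?_).antisymm (image_subset_iff.2 fun x hx => ⟨x, ?_⟩)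
    · exact mem_image_of_mem f ⟨le_max_left _ _, max_le hab (min_le_left _ _)⟩
    · simp only [min_eq_right hx.2, max_eq_right hx.1]
  have hcompact : IsCompact (f '' Icc a b) := isCompact_Icc.image hf
  rw [Rat.denseRange_cast.ciSup' hclamp, iSup, hrange]
  refine ⟨fun ⟨x, hx, hxy⟩ => hxy.trans (le_csSup hcompact.bddAbove (mem_image_of_mem f hx)),
    fun h => ?_⟩
  obtain ⟨x, hx, hxs⟩ := hcompact.sSup_mem ((nonempty_Icc.2 hab).image f)
  exact ⟨x, hx, h.trans_eq hxs.symm⟩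

end Hits

section MeasurableHits

variable {X : Type*} [MeasurableSpace X] {g : X → ℝ → ℝ} {a b y : X → ℝ}

lemma measurable_firstHit (hg : Measurable (Function.uncurry g)) (hc : ∀ θ, Continuous (g θ))
    (ha : Measurable a) (hb : Measurable b) (hy : Measurable y)
    (hab : ∀ θ, a θ ≤ b θ) (hyb : ∀ θ, y θ ≤ g θ (b θ)) :
    Measurable fun θ => firstHit (g θ) (a θ) (b θ) (y θ) := by
  refine measurable_of_Iic fun r => ?_
  have hset : (fun θ => firstHit (g θ) (a θ) (b θ) (y θ)) ⁻¹' Iic r = {θ | a θ ≤ min (b θ) r} ∩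
      {θ | y θ ≤ ⨆ s : range ((↑) : ℚ → ℝ), g θ (max (a θ) (min (min (b θ) r) s))} := by
    ext θ
    simp only [mem_preimage, mem_Iic, firstHit_le_iff (hc θ) (hab θ) (hyb θ)]
    refine ⟨fun h => ?_, fun ⟨har, h⟩ => (exists_mem_Icc_le_apply_iff (hc θ) har).2 h⟩
    have har : a θ ≤ min (b θ) r := let ⟨_, hx, _⟩ := h; hx.1.trans hx.2
    exact ⟨har, (exists_mem_Icc_le_apply_iff (hc θ) har).1 h⟩
  have : Countable (range ((↑) : ℚ → ℝ)) := (countable_range _).to_subtype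
  rw [hset]
  refine (measurableSet_le ha (by fun_prop)).inter (measurableSet_le hy (.iSup fun s => ?_))
  exact hg.comp (measurable_id.prodMk (by fun_prop))

lemma measurable_lastHit (hg : Measurable (Function.uncurry g)) (hc : ∀ θ, Continuous (g θ))
    (ha : Measurable a) (hb : Measurable b) (hy : Measurable y)
    (hab : ∀ θ, a θ ≤ b θ) (hya : ∀ θ, g θ (a θ) ≤ y θ) :
    Measurable fun θ => lastHit (g θ) (a θ) (b θ) (y θ) := by
  simp only [lastHit_eq_neg_firstHit_neg]
  refine (measurable_firstHit (g := fun θ x => -g θ (-x)) ?_ (fun θ => by fun_prop)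
    hb.neg ha.neg hy.neg (fun θ => neg_le_neg (hab θ)) fun θ => ?_).neg
  · exact (hg.comp (measurable_fst.prodMk measurable_snd.neg)).neg
  · simpa using hya θ

end MeasurableHits

/-! ### Covering relations -/

/-- The interval `[J.1, J.2]` `f`-covers `[K.1, K.2]` with the sign of `ε`: the images of the
endpoints of `J` lie beyond those of `K`, in the same order if `0 < ε` and in the opposite order
if `ε < 0`. -/
structure Covers (ε : ℝ) (f : ℝ → ℝ) (J K : ℝ × ℝ) : Prop where
  le : J.1 ≤ J.2
  left : ε * f J.1 ≤ min (ε * K.1) (ε * K.2)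
  right : max (ε * K.1) (ε * K.2) ≤ ε * f J.2

/-- A subinterval of `J` which is mapped by `f` exactly onto `K` and whose endpoints go to
endpoints of `K`, when `J` covers `K` with the sign of `ε`. -/
def tighten (ε : ℝ) (f : ℝ → ℝ) (J K : ℝ × ℝ) : ℝ × ℝ :=
  let b := firstHit (fun x => ε * f x) J.1 J.2 (max (ε * K.1) (ε * K.2))
  (lastHit (fun x => ε * f x) J.1 b (min (ε * K.1) (ε * K.2)), b)

namespace Covers

variable {ε : ℝ} {f : ℝ → ℝ} {J K K' : ℝ × ℝ}

lemma firstHit_mem (h : Covers ε f J K) (hf : Continuous f) :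
    firstHit (fun x => ε * f x) J.1 J.2 (max (ε * K.1) (ε * K.2)) ∈ Icc J.1 J.2 :=
  (_root_.firstHit_mem (hf.const_mul ε) h.le h.right).1

lemma apply_tighten_snd (h : Covers ε f J K) (hf : Continuous f) :
    ε * f (tighten ε f J K).2 = max (ε * K.1) (ε * K.2) :=
  apply_firstHit (hf.const_mul ε) h.le (h.left.trans min_le_max) h.right

lemma left_le_apply_tighten_snd (h : Covers ε f J K) (hf : Continuous f) :
    min (ε * K.1) (ε * K.2) ≤ ε * f (tighten ε f J K).2 :=
  min_le_max.trans_eq (h.apply_tighten_snd hf).symm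

lemma apply_tighten_fst (h : Covers ε f J K) (hf : Continuous f) :
    ε * f (tighten ε f J K).1 = min (ε * K.1) (ε * K.2) :=
  apply_lastHit (hf.const_mul ε) (h.firstHit_mem hf).1 h.left (h.left_le_apply_tighten_snd hf)

lemma tighten_fst_mem (h : Covers ε f J K) (hf : Continuous f) :
    (tighten ε f J K).1 ∈ Icc J.1 (tighten ε f J K).2 :=
  (lastHit_mem (hf.const_mul ε) (h.firstHit_mem hf).1 h.left).1

lemma tighten_snd_mem (h : Covers ε f J K) (hf : Continuous f) :
    (tighten ε f J K).2 ∈ Icc J.1 J.2 :=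
  h.firstHit_mem hf

lemma image_tighten (h : Covers ε f J K) (hf : Continuous f) (hε : ε ≠ 0) :
    f '' Icc (tighten ε f J K).1 (tighten ε f J K).2 = uIcc K.1 K.2 := by
  have hεf := hf.const_mul ε
  apply (mul_right_injective₀ hε).image_injective
  rw [image_const_mul_uIcc, image_image]
  refine Subset.antisymm (image_subset_iff.2 fun x hx => ⟨?_, ?_⟩) ?_
  · exact le_of_mem_Icc_lastHit hεf (h.firstHit_mem hf).1 h.left (h.left_le_apply_tighten_snd hf) hx
  · exact le_of_mem_Icc_firstHit hεf h.le (h.left.trans min_le_max) h.right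
      ⟨(h.tighten_fst_mem hf).1.trans hx.1, hx.2⟩
  · have hivt := intermediate_value_Icc (h.tighten_fst_mem hf).2 hεf.continuousOn
    rwa [h.apply_tighten_fst hf, h.apply_tighten_snd hf] at hivt

lemma covers_tighten (h : Covers ε f J K) (hf : Continuous f) (hK : K'.1 ∈ uIcc K.1 K.2)
    (hK' : K'.2 ∈ uIcc K.1 K.2) : Covers ε f (tighten ε f J K) K' := by
  have hmem : ∀ {x}, x ∈ uIcc K.1 K.2 → ε * x ∈ uIcc (ε * K.1) (ε * K.2) := fun hx =>
    image_const_mul_uIcc ε K.1 K.2 ▸ mem_image_of_mem (ε * ·) hx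
  refine ⟨(h.tighten_fst_mem hf).2, ?_, ?_⟩
  · exact (h.apply_tighten_fst hf).trans_le (le_min (hmem hK).1 (hmem hK').1)
  · exact (max_le (hmem hK).2 (hmem hK').2).trans_eq (h.apply_tighten_snd hf).symm

lemma tighten_snd_le_tighten_fst (h' : Covers ε f J K') (hf : Continuous f)
    (hKK' : max (ε * K.1) (ε * K.2) ≤ min (ε * K'.1) (ε * K'.2)) :
    (tighten ε f J K).2 ≤ (tighten ε f J K').1 := by
  have hmem := h'.tighten_fst_mem hf
  exact firstHit_le ⟨hmem.1, hmem.2.trans (h'.tighten_snd_mem hf).2⟩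
    (hKK'.trans_eq (h'.apply_tighten_fst hf).symm)

end Covers

lemma measurable_tighten {X : Type*} [MeasurableSpace X] {g : X → ℝ → ℝ} {ε : ℝ}
    {J K : X → ℝ × ℝ} (hg : Measurable (Function.uncurry g)) (hc : ∀ θ, Continuous (g θ))
    (hJ : Measurable J) (hK : Measurable K) (h : ∀ θ, Covers ε (g θ) (J θ) (K θ)) :
    Measurable fun θ => tighten ε (g θ) (J θ) (K θ) := by
  have hsnd : Measurable fun θ => (tighten ε (g θ) (J θ) (K θ)).2 :=
    measurable_firstHit (hg.const_mul ε) (fun θ => (hc θ).const_mul ε) (by fun_prop) (by fun_prop)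
      (by fun_prop) (fun θ => (h θ).le) fun θ => (h θ).right
  refine (measurable_lastHit (hg.const_mul ε) (fun θ => (hc θ).const_mul ε) (by fun_prop) hsnd
    (by fun_prop) (fun θ => ((h θ).firstHit_mem (hc θ)).1) fun θ => (h θ).left).prodMk hsnd

lemma image_iInter_of_antitone_isCompact {α β : Type*} [TopologicalSpace α] [T2Space α]
    [TopologicalSpace β] [T1Space β] {f : α → β} {s : ℕ → Set α} (hs : Antitone s)
    (hcompact : ∀ n, IsCompact (s n)) (hf : Continuous f) :
    f '' ⋂ n, s n = ⋂ n, f '' s n := by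
  refine (image_iInter_subset s f).antisymm fun y hy => ?_
  have hclosed : IsClosed (f ⁻¹' {y}) := isClosed_singleton.preimage hf
  obtain ⟨x, hx⟩ := IsCompact.nonempty_iInter_of_sequence_nonempty_isCompact_isClosed
    (fun n => s n ∩ f ⁻¹' {y}) (fun n => inter_subset_inter_left _ (hs n.le_succ))
    (fun n => mem_iInter.1 hy n)
    ((hcompact 0).inter_right hclosed) (fun n => (hcompact n).isClosed.inter hclosed)
  rw [mem_iInter] at hx
  exact ⟨x, mem_iInter.2 fun n => (hx n).1, (hx 0).2⟩

/-- The map `(θ, x) ↦ (R θ, g θ x)` is a skew product of Carathéodory type: measurable, with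
continuous fiber maps. -/
structure CaratheodorySkew {X : Type*} [MeasurableSpace X] (R : X → X) (g : X → ℝ → ℝ) : Prop where
  measurable_base : Measurable R
  measurable_uncurry : Measurable (Function.uncurry g)
  continuous : ∀ θ, Continuous (g θ)

/-- A sequence of measurable families of intervals in which the `i`-th one covers the `(i+1)`-st
one over `R`, with the sign of `ε i`, under the skew product of `R` and `g`. -/
structure CoverChain {X : Type*} [MeasurableSpace X] (R : X → X) (g : X → ℝ → ℝ) (ε : ℕ → ℝ)
    (W : ℕ → X → ℝ × ℝ) : Prop extends CaratheodorySkew R g where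
  ne_zero : ∀ i, ε i ≠ 0
  measurable : ∀ i, Measurable (W i)
  covers : ∀ i θ, Covers (ε i) (g θ) (W i θ) (W (i + 1) (R θ))

/-- One step of simultaneous tightening of all the intervals of a chain. -/
def tightenAll {X : Type*} (R : X → X) (g : X → ℝ → ℝ) (ε : ℕ → ℝ) (W : ℕ → X → ℝ × ℝ) :
    ℕ → X → ℝ × ℝ :=
  fun i θ => tighten (ε i) (g θ) (W i θ) (W (i + 1) (R θ))

/-- The intersection of the intervals obtained by repeatedly tightening a chain. -/
def limitInterval {X : Type*} (R : X → X) (g : X → ℝ → ℝ) (ε : ℕ → ℝ) (W : ℕ → X → ℝ × ℝ)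
    (i : ℕ) (θ : X) : ℝ × ℝ :=
  (⨆ n, ((tightenAll R g ε)^[n] W i θ).1, ⨅ n, ((tightenAll R g ε)^[n] W i θ).2)

/-- Two families of intervals are ordered, uniformly in the parameter, up to common endpoints. -/
def Ordered {X : Type*} (A B : X → ℝ × ℝ) : Prop :=
  (∀ θ, (A θ).2 ≤ (B θ).1) ∨ ∀ θ, (B θ).2 ≤ (A θ).1

namespace CoverChain

variable {X : Type*} [MeasurableSpace X] {R : X → X} {g : X → ℝ → ℝ} {ε : ℕ → ℝ}
  {W : ℕ → X → ℝ × ℝ}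

lemma le (h : CoverChain R g ε W) (i : ℕ) (θ : X) : (W i θ).1 ≤ (W i θ).2 :=
  (h.covers i θ).le

lemma tightenAll_fst_ge (h : CoverChain R g ε W) (i : ℕ) (θ : X) :
    (W i θ).1 ≤ (tightenAll R g ε W i θ).1 :=
  ((h.covers i θ).tighten_fst_mem (h.continuous θ)).1

lemma tightenAll_snd_le (h : CoverChain R g ε W) (i : ℕ) (θ : X) :
    (tightenAll R g ε W i θ).2 ≤ (W i θ).2 :=
  ((h.covers i θ).tighten_snd_mem (h.continuous θ)).2

protected lemma tightenAll (h : CoverChain R g ε W) :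
    CoverChain R g ε (tightenAll R g ε W) where
  toCaratheodorySkew := h.toCaratheodorySkew
  ne_zero := h.ne_zero
  measurable i :=
    measurable_tighten h.measurable_uncurry h.continuous (h.measurable i)
      ((h.measurable (i + 1)).comp h.measurable_base) (h.covers i)
  covers i θ := by
    have hle := ((h.covers (i + 1) (R θ)).tighten_fst_mem (h.continuous _)).2
    have hfst := h.tightenAll_fst_ge (i + 1) (R θ)
    have hsnd := h.tightenAll_snd_le (i + 1) (R θ)
    refine (h.covers i θ).covers_tighten (h.continuous θ) ?_ ?_ <;> rw [uIcc_of_le (h.le _ _)]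
    exacts [⟨hfst, hle.trans hsnd⟩, ⟨hfst.trans hle, hsnd⟩]

protected lemma iterate (h : CoverChain R g ε W) (n : ℕ) :
    CoverChain R g ε ((tightenAll R g ε)^[n] W) := by
  induction n with
  | zero => exact h
  | succ n ih => exact Function.iterate_succ_apply' (tightenAll R g ε) n W ▸ ih.tightenAll

lemma antitone_Icc (h : CoverChain R g ε W) (i : ℕ) (θ : X) :
    Antitone fun n => Icc ((tightenAll R g ε)^[n] W i θ).1 ((tightenAll R g ε)^[n] W i θ).2 := by
  refine antitone_nat_of_succ_le fun n => ?_
  have hn := h.iterate n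
  simp only [Function.iterate_succ_apply']
  exact Icc_subset_Icc (hn.tightenAll_fst_ge i θ) (hn.tightenAll_snd_le i θ)

lemma limitInterval_fst_mem (h : CoverChain R g ε W) (i : ℕ) (θ : X) (n : ℕ) :
    (limitInterval R g ε W i θ).1 ∈
      Icc ((tightenAll R g ε)^[n] W i θ).1 ((tightenAll R g ε)^[n] W i θ).2 :=
  mem_iInter.1 (ciSup_mem_iInter_Icc_of_antitone_Icc (h.antitone_Icc i θ)
    fun n => (h.iterate n).le i θ) n

lemma bddBelow_snd (h : CoverChain R g ε W) (i : ℕ) (θ : X) :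
    BddBelow (range fun n => ((tightenAll R g ε)^[n] W i θ).2) :=
  ⟨_, forall_mem_range.2 fun n => (h.limitInterval_fst_mem i θ n).2⟩

lemma limitInterval_snd_le (h : CoverChain R g ε W) (i : ℕ) (θ : X) (n : ℕ) :
    (limitInterval R g ε W i θ).2 ≤ ((tightenAll R g ε)^[n] W i θ).2 :=
  ciInf_le (h.bddBelow_snd i θ) n

lemma limitInterval_le (h : CoverChain R g ε W) (i : ℕ) (θ : X) :
    (limitInterval R g ε W i θ).1 ≤ (limitInterval R g ε W i θ).2 :=
  le_ciInf fun n => (h.limitInterval_fst_mem i θ n).2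

lemma Icc_limitInterval (h : CoverChain R g ε W) (i : ℕ) (θ : X) :
    Icc (limitInterval R g ε W i θ).1 (limitInterval R g ε W i θ).2 =
      ⋂ n, Icc ((tightenAll R g ε)^[n] W i θ).1 ((tightenAll R g ε)^[n] W i θ).2 := by
  refine (subset_iInter fun n => Icc_subset_Icc (h.limitInterval_fst_mem i θ n).1
    (h.limitInterval_snd_le i θ n)).antisymm fun x hx => ?_
  rw [mem_iInter] at hx
  exact ⟨ciSup_le fun n => (hx n).1, le_ciInf fun n => (hx n).2⟩

lemma image_limitInterval (h : CoverChain R g ε W) (i : ℕ) (θ : X) :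
    g θ '' Icc (limitInterval R g ε W i θ).1 (limitInterval R g ε W i θ).2 =
      Icc (limitInterval R g ε W (i + 1) (R θ)).1 (limitInterval R g ε W (i + 1) (R θ)).2 := by
  have hanti := h.antitone_Icc i θ
  rw [h.Icc_limitInterval, h.Icc_limitInterval, ← hanti.iInter_nat_add 1]
  refine (image_iInter_of_antitone_isCompact (fun _ _ hmn => hanti (Nat.succ_le_succ hmn))
    (fun _ => isCompact_Icc) (h.continuous θ)).trans (iInter_congr fun n => ?_)
  have hn := h.iterate n
  change g θ '' Icc ((tightenAll R g ε)^[n + 1] W i θ).1 _ = _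
  rw [Function.iterate_succ_apply', tightenAll, (hn.covers i θ).image_tighten (h.continuous θ)
    (hn.ne_zero i), uIcc_of_le (hn.le _ _)]

lemma measurable_limitInterval (h : CoverChain R g ε W) (i : ℕ) :
    Measurable (limitInterval R g ε W i) :=
  (Measurable.iSup fun n => ((h.iterate n).measurable i).fst).prodMk
    (.iInf fun n => ((h.iterate n).measurable i).snd)

lemma ordered_tightenAll_of_eq (h : CoverChain R g ε W) {i j : ℕ} (hW : W i = W j)
    (hε : ε i = ε j) (hord : Ordered (W (i + 1)) (W (j + 1))) :
    Ordered (tightenAll R g ε W i) (tightenAll R g ε W j) := by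
  wlog hij : ∀ θ, (W (i + 1) θ).2 ≤ (W (j + 1) θ).1 generalizing i j
  · exact (this hW.symm hε.symm hord.symm (hord.resolve_left hij)).symm
  have hij' := fun θ => hij (R θ)
  have hi := fun θ => h.le (i + 1) (R θ)
  have hj := fun θ => h.le (j + 1) (R θ)
  rcases (h.ne_zero i).lt_or_gt with hneg | hpos
  · refine .inr fun θ => ?_
    simp only [tightenAll, hW, ← hε]
    have hcov := h.covers i θ
    rw [hW] at hcov
    refine hcov.tighten_snd_le_tighten_fst (h.continuous θ) ?_
    rw [max_eq_left_iff.2 (mul_le_mul_of_nonpos_left (hj θ) hneg.le),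
      min_eq_right_iff.2 (mul_le_mul_of_nonpos_left (hi θ) hneg.le)]
    exact mul_le_mul_of_nonpos_left (hij' θ) hneg.le
  · refine .inl fun θ => ?_
    simp only [tightenAll, hW, hε] at hpos ⊢
    refine (h.covers j θ).tighten_snd_le_tighten_fst (h.continuous θ) ?_
    rw [max_eq_right_iff.2 (mul_le_mul_of_nonneg_left (hi θ) hpos.le),
      min_eq_left_iff.2 (mul_le_mul_of_nonneg_left (hj θ) hpos.le)]
    exact mul_le_mul_of_nonneg_left (hij' θ) hpos.le

lemma ordered_iterate (h : CoverChain R g ε W) {i j m : ℕ}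
    (hagree : ∀ n < m, W (i + n) = W (j + n) ∧ ε (i + n) = ε (j + n))
    (hord : Ordered (W (i + m)) (W (j + m))) :
    Ordered ((tightenAll R g ε)^[m] W i) ((tightenAll R g ε)^[m] W j) := by
  induction m generalizing W with
  | zero => exact hord
  | succ m ih =>
    refine ih h.tightenAll (fun n hn => ⟨?_, (hagree n (by omega)).2⟩) ?_
    · ext1 θ
      have hsucc := (hagree (n + 1) (by omega)).1
      simp only [← add_assoc] at hsucc
      simp only [tightenAll, hagree n (by omega), hsucc]
    · exact h.ordered_tightenAll_of_eq (hagree m m.lt_succ_self).1 (hagree m m.lt_succ_self).2 hord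

lemma ordered_limitInterval (h : CoverChain R g ε W) {i j m : ℕ}
    (hagree : ∀ n < m, W (i + n) = W (j + n) ∧ ε (i + n) = ε (j + n))
    (hord : Ordered (W (i + m)) (W (j + m))) :
    Ordered (limitInterval R g ε W i) (limitInterval R g ε W j) :=
  (h.ordered_iterate hagree hord).imp
    (fun hord θ => (h.limitInterval_snd_le i θ m).trans
      ((hord θ).trans (h.limitInterval_fst_mem j θ m).1))
    (fun hord θ => (h.limitInterval_snd_le j θ m).trans
      ((hord θ).trans (h.limitInterval_fst_mem i θ m).1))

end CoverChain

lemma limitInterval_congr {X : Type*} {R : X → X} {g : X → ℝ → ℝ} {ε : ℕ → ℝ}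
    {W : ℕ → X → ℝ × ℝ} {i j : ℕ} (hW : ∀ n, W (i + n) = W (j + n))
    (hε : ∀ n, ε (i + n) = ε (j + n)) :
    limitInterval R g ε W i = limitInterval R g ε W j := by
  have hiter : ∀ m n, (tightenAll R g ε)^[m] W (i + n) = (tightenAll R g ε)^[m] W (j + n) := by
    intro m
    induction m with
    | zero => exact hW
    | succ m ih =>
      intro n
      ext1 θ
      have hsucc := ih (n + 1)
      simp only [← add_assoc] at hsucc
      simp only [Function.iterate_succ_apply', tightenAll, ih n, hε n, hsucc]
  have hzero : ∀ m, (tightenAll R g ε)^[m] W i = (tightenAll R g ε)^[m] W j := fun m => hiter m 0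
  ext1 θ
  simp only [limitInterval, hzero]

/-! ### Cyclic permutations -/

lemma SharkGT.ne {p q : ℕ} (h : SharkGT p q) : p ≠ q := by
  rintro rfl
  obtain ⟨i, m, j, l, hm, hl, hp, hq, h⟩ := h
  have hdvd : ∀ {i j m l : ℕ}, Odd l → 2 ^ i * m = 2 ^ j * l → 2 ^ i ∣ 2 ^ j := fun hl h =>
    (hl.coprime_two_left.pow_left _).dvd_of_dvd_mul_right (Dvd.intro _ h)
  have hij : i = j := Nat.pow_right_injective le_rfl
    (Nat.dvd_antisymm (hdvd hl (hp.symm.trans hq)) (hdvd hm (hq.symm.trans hp)))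
  have hml : m = l := Nat.eq_of_mul_eq_mul_left (pow_pos two_pos i) (hp.symm.trans (hij ▸ hq))
  omega

lemma SharkGT.cases {p q : ℕ} (h : SharkGT p q) : 2 ≤ p ∧ 1 ≤ q ∧ (q = 1 ∨
    (p % 2 = 0 ∧ q % 2 = 0 ∧ SharkGT (p / 2) (q / 2)) ∨
    (p % 2 = 1 ∧ 2 ≤ q ∧ (q % 2 = 0 ∨ p + 2 ≤ q))) := by
  obtain ⟨i, m, j, l, hm, hl, rfl, rfl, h⟩ := h
  have hp : 0 < 2 ^ i * m := Nat.mul_pos (pow_pos two_pos i) hm.pos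
  have hq : 0 < 2 ^ j * l := Nat.mul_pos (pow_pos two_pos j) hl.pos
  have hm2 := Nat.odd_iff.1 hm
  have hl2 := Nat.odd_iff.1 hl
  rcases i with _ | i <;> rcases j with _ | j <;>
    simp only [pow_zero, one_mul, pow_succ', mul_assoc] at *
  · omega
  · omega
  · omega
  · exact ⟨by omega, by omega, .inr (.inl ⟨by omega, by omega, i, m, j, l, hm, hl, by omega,
      by omega, by omega⟩)⟩

/-- `t` permutes `{0, …, p - 1}` cyclically. -/
structure IsCycleBelow (t : ℕ → ℕ) (p : ℕ) : Prop where
  lt : ∀ k < p, t k < p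
  iterate_eq_iff : ∀ k < p, ∀ i j, t^[i] k = t^[j] k ↔ i ≡ j [MOD p]

/-- The reflection of a self-map of `{0, …, p - 1}` under `k ↦ p - 1 - k`. -/
def reflect (p : ℕ) (t : ℕ → ℕ) (k : ℕ) : ℕ := p - 1 - t (p - 1 - k)

namespace IsCycleBelow

variable {t : ℕ → ℕ} {p : ℕ}

lemma iterate_lt (h : IsCycleBelow t p) {k : ℕ} (hk : k < p) (n : ℕ) : t^[n] k < p :=
  Set.MapsTo.iterate (s := Iio p) (fun k hk => h.lt k hk) n hk

lemma exists_iterate_eq (h : IsCycleBelow t p) {k l : ℕ} (hk : k < p) (hl : l < p) :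
    ∃ j < p, t^[j] k = l := by
  have hinj : InjOn (fun j => t^[j] k) (Finset.range p) := fun i hi j hj hij =>
    ((h.iterate_eq_iff k hk i j).1 hij).eq_of_lt_of_lt (by simpa using hi) (by simpa using hj)
  obtain ⟨j, hj, hjl⟩ := Finset.surjOn_of_injOn_of_card_le _
    (fun j _ => by simpa using h.iterate_lt hk j) hinj le_rfl (by simpa using hl)
  exact ⟨j, by simpa using hj, hjl⟩

lemma forall_of_invariant (h : IsCycleBelow t p) {S : ℕ → Prop} {k : ℕ} (hk : k < p) (hSk : S k)
    (hS : ∀ m < p, S m → S (t m)) {l : ℕ} (hl : l < p) : S l := by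
  obtain ⟨j, -, rfl⟩ := h.exists_iterate_eq hk hl
  have hiter : ∀ n, S (t^[n] k) := by
    intro n
    induction n with
    | zero => exact hSk
    | succ n ih => exact Function.iterate_succ_apply' t n k ▸ hS _ (h.iterate_lt hk n) ih
  exact hiter j

lemma dvd_of_iterate_eq (h : IsCycleBelow t p) {k n : ℕ} (hk : k < p) (hn : t^[n] k = k) :
    p ∣ n :=
  (Nat.modEq_zero_iff_dvd).1 ((h.iterate_eq_iff k hk n 0).1 hn)

lemma injOn (h : IsCycleBelow t p) : InjOn t (Iio p) := by
  intro k hk l hl hkl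
  obtain ⟨j, -, rfl⟩ := h.exists_iterate_eq hk hl
  rw [← Function.iterate_succ_apply' t] at hkl
  have hj : 1 ≡ j + 1 [MOD p] := (h.iterate_eq_iff k hk 1 (j + 1)).1 hkl
  exact (h.iterate_eq_iff k hk 0 j).2 (Nat.ModEq.add_right_cancel' 1 (by rwa [zero_add]))

lemma apply_ne (h : IsCycleBelow t p) (hp : 2 ≤ p) {k : ℕ} (hk : k < p) : t k ≠ k := fun hfix => by
  have := Nat.le_of_dvd one_pos (h.dvd_of_iterate_eq (n := 1) hk hfix)
  omega

lemma iterate_reflect (h : IsCycleBelow t p) {k : ℕ} (hk : k < p) (n : ℕ) :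
    (reflect p t)^[n] k = p - 1 - t^[n] (p - 1 - k) := by
  induction n with
  | zero => simp only [Function.iterate_zero, id]; omega
  | succ n ih =>
    have := h.iterate_lt (k := p - 1 - k) (by omega) n
    rw [Function.iterate_succ_apply', Function.iterate_succ_apply', ih, reflect]
    congr 2
    omega

protected lemma reflect (h : IsCycleBelow t p) : IsCycleBelow (reflect p t) p where
  lt k hk := by rw [_root_.reflect]; omega
  iterate_eq_iff k hk i j := by
    have hlt := h.iterate_lt (k := p - 1 - k) (by omega)
    have hi := hlt i
    have hj := hlt j
    rw [h.iterate_reflect hk, h.iterate_reflect hk, ← h.iterate_eq_iff (p - 1 - k) (by omega)]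
    omega

end IsCycleBelow

/-- The edge `{u, u + 1}` of the half-line `ℕ` lies between `a` and `b`. -/
def Separates (u a b : ℕ) : Prop := ¬(a ≤ u ↔ b ≤ u)

lemma exists_separates_of_separates_apply {t : ℕ → ℕ} {a b v : ℕ} (h : Separates v (t a) (t b)) :
    ∃ u, Separates u a b ∧ Separates v (t u) (t (u + 1)) := by
  wlog hab : a ≤ b generalizing a b
  · obtain ⟨u, hu, huv⟩ := this (fun hiff => h hiff.symm) (Nat.le_of_not_le hab)
    exact ⟨u, fun hiff => hu hiff.symm, huv⟩
  induction b, hab using Nat.le_induction with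
  | base => exact absurd Iff.rfl h
  | succ b hab ih =>
    by_cases hb : Separates v (t b) (t (b + 1))
    · exact ⟨b, by unfold Separates; omega, hb⟩
    · obtain ⟨u, hu, huv⟩ := ih fun hiff => h (hiff.trans (not_not.1 hb))
      exact ⟨u, by unfold Separates at *; omega, huv⟩

/-- A loop of length `q` in the Markov graph of `t` on the edges of `{0, …, p - 1}`, the edge
`{u i, u i + 1}` being encoded by its left end. Distinct positions of the loop are told apart by
their itineraries, and no orbit of `t` follows the loop from two distinct positions. -/
structure IsSeparatedLoop (t : ℕ → ℕ) (p q : ℕ) (u : ℕ → ℕ) : Prop where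
  lt : ∀ i, u i + 1 < p
  periodic : Function.Periodic u q
  arrow : ∀ i, Separates (u (i + 1)) (t (u i)) (t (u i + 1))
  separated : ∀ i j, ¬i ≡ j [MOD q] → ∃ n, u (i + n) ≠ u (j + n)
  not_shadowed : ∀ i j, ¬i ≡ j [MOD q] → ∀ k < p, ∃ n,
    ¬(t^[n] k ∈ Icc (u (i + n)) (u (i + n) + 1) ∧ t^[n] k ∈ Icc (u (j + n)) (u (j + n) + 1))

namespace IsSeparatedLoop

variable {t u : ℕ → ℕ} {p q : ℕ}

lemma of_reflect (h : IsCycleBelow t p) (hu : IsSeparatedLoop (reflect p t) p q u) :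
    IsSeparatedLoop t p q fun i => p - 2 - u i where
  lt i := by have := hu.lt i; omega
  periodic i := by simp only [hu.periodic i]
  arrow i := by
    have hi := hu.lt i
    have harrow := hu.arrow i
    have hlt := hu.lt (i + 1)
    have h₀ := h.lt (p - 1 - u i) (by omega)
    have h₁ := h.lt (p - 1 - (u i + 1)) (by omega)
    rw [show p - 2 - u i = p - 1 - (u i + 1) by omega,
      show p - 1 - (u i + 1) + 1 = p - 1 - u i by omega]
    unfold Separates reflect at *
    omega
  separated i j hij := by
    obtain ⟨n, hn⟩ := hu.separated i j hij
    have hi := hu.lt (i + n)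
    have hj := hu.lt (j + n)
    exact ⟨n, by omega⟩
  not_shadowed i j hij k hk := by
    obtain ⟨n, hn⟩ := hu.not_shadowed i j hij (p - 1 - k) (by omega)
    have hi := hu.lt (i + n)
    have hj := hu.lt (j + n)
    have hkn := h.iterate_lt hk n
    rw [h.iterate_reflect (by omega), show p - 1 - (p - 1 - k) = k by omega] at hn
    exact ⟨n, by simp only [mem_Icc] at *; omega⟩

lemma of_threshold {w : ℕ} (hq : 0 < q) (hclosed : u q = u 0) (hlt : ∀ i < q, u i + 1 < p)
    (harrow : ∀ i < q, Separates (u (i + 1)) (t (u i)) (t (u i + 1))) (hw : w ≤ u 0)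
    (hw' : ∀ i < q, i ≠ 0 → u i < w)
    (hesc : ∃ m, t^[m] w ∉ Icc (u (m % q)) (u (m % q) + 1)) :
    IsSeparatedLoop t p q fun i => u (i % q) := by
  have hvisit : ∀ i j, ¬i ≡ j [MOD q] → ∃ n, (i + n) % q = 0 ∧ u ((j + n) % q) < w := by
    intro i j hij
    obtain ⟨n, hn⟩ : ∃ n, q ∣ i + n := ⟨(q - 1) * i, by
      rw [← one_add_mul, show 1 + (q - 1) = q by omega]
      exact dvd_mul_right q i⟩
    refine ⟨n, Nat.mod_eq_zero_of_dvd hn, hw' _ (Nat.mod_lt _ hq) fun hj => hij ?_⟩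
    exact Nat.ModEq.add_right_cancel' n ((Nat.mod_eq_zero_of_dvd hn).trans hj.symm)
  refine ⟨fun i => hlt _ (Nat.mod_lt i hq), fun i => by simp only [Nat.add_mod_right],
    fun i => ?_, fun i j hij => ?_, fun i j hij k _ => ?_⟩
  · have hi := harrow _ (Nat.mod_lt i hq)
    rw [← Nat.mod_add_mod]
    rcases (show i % q + 1 ≤ q from Nat.mod_lt i hq).lt_or_eq with hlt | heq
    · rwa [Nat.mod_eq_of_lt hlt]
    · rw [heq] at hi ⊢
      rwa [Nat.mod_self, ← hclosed]
  · obtain ⟨n, hi, hj⟩ := hvisit i j hij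
    exact ⟨n, hi ▸ (hj.trans_le hw).ne'⟩
  · obtain ⟨n, hi, hj⟩ := hvisit i j hij
    by_contra! hshadow
    obtain ⟨m, hm⟩ := hesc
    have hk : t^[n] k = w := by
      obtain ⟨hin, hjn⟩ := hshadow n
      rw [hi] at hin
      exact (hjn.2.trans hj).antisymm (hw.trans hin.1)
    have hmod : (i + (n + m)) % q = m % q := by
      rw [← add_assoc, Nat.add_mod, hi, zero_add, Nat.mod_mod]
    refine hm ?_
    rw [← hk, ← Function.iterate_add_apply, add_comm m n, ← hmod]
    exact (hshadow (n + m)).1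

end IsSeparatedLoop

/-- The edge `{c, c + 1}` is a center of `t` on `{0, …, p - 1}`: its ends move past each other. -/
structure IsCenter (t : ℕ → ℕ) (p c : ℕ) : Prop where
  lt : c + 1 < p
  left : c < t c
  right : t (c + 1) ≤ c

lemma exists_lt_apply_and_apply_succ_le {f : ℕ → ℕ} {a b : ℕ} (hab : a ≤ b) (ha : a < f a)
    (hb : f b < b) (hne : ∀ k ∈ Icc a b, f k ≠ k) :
    ∃ k, a ≤ k ∧ k < b ∧ k < f k ∧ f (k + 1) ≤ k := by
  have hle := Nat.findGreatest_le (P := fun k => k < f k) b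
  have hspec := Nat.findGreatest_spec (P := fun k => k < f k) hab ha
  have hak := Nat.le_findGreatest (P := fun k => k < f k) hab ha
  have hmax := Nat.findGreatest_is_greatest (P := fun k => k < f k) (n := b) (lt_add_one _)
  set k := Nat.findGreatest (fun k => k < f k) b
  have hkb : k < b := lt_of_le_of_ne hle fun h => hb.not_gt (h ▸ hspec)
  have := hmax hkb
  have := hne (k + 1) ⟨by omega, hkb⟩
  exact ⟨k, hak, hkb, hspec, by omega⟩

lemma IsCycleBelow.exists_isCenter {t : ℕ → ℕ} {p : ℕ} (h : IsCycleBelow t p) (hp : 2 ≤ p) :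
    ∃ c, IsCenter t p c := by
  have hne : ∀ k ∈ Icc 0 (p - 1), t k ≠ k := fun k hk => h.apply_ne hp (by
    have := hk.2
    omega)
  have h₀ := hne 0 ⟨le_rfl, by omega⟩
  have h₁ := hne (p - 1) ⟨by omega, le_rfl⟩
  have h₁' := h.lt (p - 1) (by omega)
  obtain ⟨c, -, hc, hleft, hright⟩ :=
    exists_lt_apply_and_apply_succ_le (Nat.zero_le _) (by omega) (by omega) hne
  exact ⟨c, by omega, hleft, hright⟩

lemma IsCenter.reflect {t : ℕ → ℕ} {p c : ℕ} (hc : IsCenter t p c) :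
    IsCenter (reflect p t) p (p - 2 - c) := by
  obtain ⟨hlt, hleft, hright⟩ := hc
  have h₁ : p - 1 - (p - 2 - c) = c + 1 := by omega
  have h₂ : p - 1 - (p - 2 - c + 1) = c := by omega
  refine ⟨by omega, ?_, ?_⟩ <;> simp only [_root_.reflect, h₁, h₂] <;> omega

lemma IsCenter.isSeparatedLoop_const {t : ℕ → ℕ} {p c : ℕ} (hc : IsCenter t p c) :
    IsSeparatedLoop t p 1 fun _ => c where
  lt _ := hc.lt
  periodic _ := rfl
  arrow _ := by
    have := hc.left
    have := hc.right
    unfold Separates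
    omega
  separated _ _ hij := absurd (Nat.modEq_one ..) hij
  not_shadowed _ _ hij := absurd (Nat.modEq_one ..) hij

section Doubling

variable {t : ℕ → ℕ} {m : ℕ}

lemma IsCycleBelow.eq_two_mul_of_switch {p c : ℕ} (h : IsCycleBelow t p) (hc : c + 1 ≤ p)
    (hswitch : ∀ k < p, c + 1 ≤ t k ↔ k < c + 1) : p = 2 * (c + 1) := by
  have hle := Finset.card_le_card_of_injOn t (s := Finset.range (c + 1)) (t := Finset.Ico (c + 1) p)
    (fun k hk => by
      have hkc : k < c + 1 := by simpa using hk
      simpa using ⟨(hswitch k (by omega)).2 hkc, h.lt k (by omega)⟩)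
    (h.injOn.mono fun k hk => by simp only [Finset.coe_range, mem_Iio] at hk ⊢; omega)
  have hge := Finset.card_le_card_of_injOn t (s := Finset.Ico (c + 1) p) (t := Finset.range (c + 1))
    (fun k hk => by
      simp only [Finset.coe_Ico, mem_Ico] at hk
      have := hswitch k hk.2
      simp only [Finset.coe_range, mem_Iio]
      omega)
    (h.injOn.mono fun k hk => by simp only [Finset.coe_Ico, mem_Ico] at hk; exact hk.2)
  simp only [Finset.card_range, Nat.card_Ico] at hle hge
  omega

lemma IsCycleBelow.iterate_two (h : IsCycleBelow t (2 * m))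
    (hswitch : ∀ k < 2 * m, m ≤ t k ↔ k < m) : IsCycleBelow t^[2] m where
  lt k hk := by
    have hk2 : k < 2 * m := by omega
    have h₁ := hswitch k hk2
    have h₂ := hswitch (t k) (h.lt k hk2)
    change t (t k) < m
    omega
  iterate_eq_iff k hk i j := by
    rw [← Function.iterate_mul, ← Function.iterate_mul, h.iterate_eq_iff k (by omega)]
    exact Nat.ModEq.mul_left_cancel_iff' two_ne_zero

lemma exists_add_eq_two_mul {i j : ℕ} (hij : i ≡ j [MOD 2]) :
    ∃ e a b, i + e = 2 * a ∧ j + e = 2 * b := by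
  refine ⟨i % 2, (i + i % 2) / 2, (j + i % 2) / 2, ?_, ?_⟩ <;> unfold Nat.ModEq at hij <;> omega

lemma IsSeparatedLoop.of_double {q : ℕ} {u u' : ℕ → ℕ} (hu : IsSeparatedLoop t^[2] m q u)
    (hlt : ∀ i, u' i + 1 < 2 * m) (hper : Function.Periodic u' (2 * q))
    (harrow : ∀ i, Separates (u' (i + 1)) (t (u' i)) (t (u' i + 1)))
    (heven : ∀ i, u' (2 * i) = u i) (hodd : ∀ i, m ≤ u' (2 * i + 1)) :
    IsSeparatedLoop t (2 * m) (2 * q) u' := by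
  have hside : ∀ i, (i % 2 = 0 ∧ u' i + 1 < m) ∨ (i % 2 = 1 ∧ m ≤ u' i) := fun i => by
    rcases Nat.even_or_odd' i with ⟨a, rfl | rfl⟩
    · exact .inl ⟨by omega, heven a ▸ hu.lt a⟩
    · exact .inr ⟨by omega, hodd a⟩
  have hhalf : ∀ {i j e a b : ℕ}, ¬i ≡ j [MOD 2 * q] → i + e = 2 * a → j + e = 2 * b →
      ¬a ≡ b [MOD q] := fun hij ha hb hab =>
    hij (Nat.ModEq.add_right_cancel' _ (ha ▸ hb ▸ hab.mul_left' 2))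
  refine ⟨hlt, hper, harrow, fun i j hij => ?_, fun i j hij k _ => ?_⟩ <;>
    by_cases hpar : i ≡ j [MOD 2]
  · obtain ⟨e, a, b, ha, hb⟩ := exists_add_eq_two_mul hpar
    obtain ⟨n, hn⟩ := hu.separated a b (hhalf hij ha hb)
    refine ⟨e + 2 * n, ?_⟩
    rwa [← add_assoc, ← add_assoc, ha, hb, ← mul_add, ← mul_add, heven, heven]
  · have hi := hside i
    have hj := hside j
    unfold Nat.ModEq at hpar
    exact ⟨0, by simp only [add_zero]; omega⟩
  · obtain ⟨e, a, b, ha, hb⟩ := exists_add_eq_two_mul hpar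
    by_cases hke : t^[e] k < m
    · obtain ⟨n, hn⟩ := hu.not_shadowed a b (hhalf hij ha hb) _ hke
      refine ⟨e + 2 * n, ?_⟩
      rwa [← add_assoc, ← add_assoc, ha, hb, ← mul_add, ← mul_add, heven, heven,
        add_comm e (2 * n), Function.iterate_add_apply, Function.iterate_mul]
    · refine ⟨e, fun hmem => hke ?_⟩
      rw [ha, heven] at hmem
      exact hmem.1.2.trans_lt (hu.lt a)
  · have hi := hside i
    have hj := hside j
    unfold Nat.ModEq at hpar
    refine ⟨0, ?_⟩
    simp only [add_zero, Function.iterate_zero, id, mem_Icc]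
    omega

lemma IsSeparatedLoop.exists_double {q : ℕ} {u : ℕ → ℕ} (h : IsCycleBelow t (2 * m))
    (hswitch : ∀ k < 2 * m, m ≤ t k ↔ k < m) (hu : IsSeparatedLoop t^[2] m q u) :
    ∃ u', IsSeparatedLoop t (2 * m) (2 * q) u' := by
  have hmid : ∀ x y, Separates y (t^[2] x) (t^[2] (x + 1)) →
      ∃ v, Separates v (t x) (t (x + 1)) ∧ Separates y (t v) (t (v + 1)) :=
    fun x y hxy => exists_separates_of_separates_apply hxy
  choose! v hv using hmid
  let u' : ℕ → ℕ := fun n => if n % 2 = 0 then u (n / 2) else v (u (n / 2)) (u (n / 2 + 1))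
  have heven : ∀ i, u' (2 * i) = u i := fun i => by simp [u']
  have hodd : ∀ i, u' (2 * i + 1) = v (u i) (u (i + 1)) := fun i => by
    simp only [u', show (2 * i + 1) % 2 = 1 by omega, show (2 * i + 1) / 2 = i by omega,
      one_ne_zero, if_false]
  have hrange : ∀ i, m ≤ u' (2 * i + 1) ∧ u' (2 * i + 1) + 1 < 2 * m := fun i => by
    have hi := hu.lt i
    have hsep := (hv _ _ (hu.arrow i)).1
    have h₀ := h.lt (u i) (by omega)
    have h₁ := h.lt (u i + 1) (by omega)
    have h₂ := (hswitch (u i) (by omega)).2 (by omega)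
    have h₃ := (hswitch (u i + 1) (by omega)).2 (by omega)
    rw [hodd]
    unfold Separates at hsep
    omega
  refine ⟨u', hu.of_double (fun i => ?_) (fun i => ?_) (fun i => ?_) heven fun i => (hrange i).1⟩
  · rcases Nat.even_or_odd' i with ⟨i, rfl | rfl⟩
    · have := hu.lt i
      rw [heven]
      omega
    · exact (hrange i).2
  · simp only [u', show (i + 2 * q) % 2 = i % 2 by omega, show (i + 2 * q) / 2 = i / 2 + q by omega,
      add_right_comm _ q 1, hu.periodic _]
  · rcases Nat.even_or_odd' i with ⟨i, rfl | rfl⟩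
    · rw [heven, hodd]
      exact (hv _ _ (hu.arrow i)).1
    · rw [hodd, show 2 * i + 1 + 1 = 2 * (i + 1) by omega, heven]
      exact (hv _ _ (hu.arrow i)).2

end Doubling

lemma exists_path_of_forall_exists {α : Type*} {r : α → α → Prop} {P : ℕ → α → Prop} {n : ℕ}
    (hback : ∀ j < n, ∀ v, P (j + 1) v → ∃ u, P j u ∧ r u v) {v : α} (hv : P n v) :
    ∃ s : ℕ → α, s n = v ∧ (∀ j ≤ n, P j (s j)) ∧ ∀ j < n, r (s j) (s (j + 1)) := by
  induction n generalizing v with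
  | zero => exact ⟨fun _ => v, rfl, fun j hj => Nat.le_zero.1 hj ▸ hv, by omega⟩
  | succ n ih =>
    obtain ⟨u, hu, huv⟩ := hback n n.lt_succ_self v hv
    obtain ⟨s, hsn, hP, hr⟩ := ih (fun j hj => hback j (by omega)) hu
    refine ⟨fun j => if j ≤ n then s j else v, by simp, fun j hj => ?_, fun j hj => ?_⟩
    · dsimp only
      split_ifs with hjn
      · exact hP j hjn
      · exact (by omega : j = n + 1) ▸ hv
    · rcases (Nat.lt_succ_iff.1 hj).lt_or_eq with hjn | rfl
      · simpa [hjn.le, Nat.succ_le_iff.2 hjn] using hr j hjn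
      · simpa [hsn] using huv

/-- The orbit of `k` under `t` when its `n`-th term is clamped to `[lo n, hi n]`. -/
def clampedOrbit (t lo hi : ℕ → ℕ) (k : ℕ) : ℕ → ℕ
  | 0 => k
  | n + 1 => max (lo (n + 1)) (min (hi (n + 1)) (t (clampedOrbit t lo hi k n)))

section ClampedOrbit

variable {t lo hi : ℕ → ℕ}

lemma clampedOrbit_succ (k n : ℕ) : clampedOrbit t lo hi k (n + 1) =
    max (lo (n + 1)) (min (hi (n + 1)) (t (clampedOrbit t lo hi k n))) :=
  rfl

lemma clampedOrbit_congr {k l m n : ℕ} (hmn : m ≤ n)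
    (hkl : clampedOrbit t lo hi k m = clampedOrbit t lo hi l m) :
    clampedOrbit t lo hi k n = clampedOrbit t lo hi l n := by
  induction n, hmn using Nat.le_induction with
  | base => exact hkl
  | succ n _ ih => rw [clampedOrbit_succ, clampedOrbit_succ, ih]

/-- A change of sign of `clampedOrbit · n - id` across an edge propagates backwards to a loop based
at that edge. -/
lemma exists_loop_of_clampedOrbit {a b q : ℕ} (hab : a ≤ b) (ha : a < clampedOrbit t lo hi a q)
    (hb : clampedOrbit t lo hi b q < b) (hne : ∀ k ∈ Icc a b, clampedOrbit t lo hi k q ≠ k) :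
    ∃ u : ℕ → ℕ, a ≤ u 0 ∧ u 0 < b ∧ u q = u 0 ∧ (∀ i < q, i ≠ 0 → lo i ≤ u i ∧ u i < hi i) ∧
      ∀ i < q, Separates (u (i + 1)) (t (u i)) (t (u i + 1)) := by
  obtain ⟨k, hak, hkb, hk, hk'⟩ := exists_lt_apply_and_apply_succ_le hab ha hb hne
  obtain ⟨u, huq, hP, harrow⟩ := exists_path_of_forall_exists
    (r := fun u v => Separates v (t u) (t (u + 1))) (n := q) (v := k)
    (P := fun j u => Separates u (clampedOrbit t lo hi k j) (clampedOrbit t lo hi (k + 1) j))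
    (fun j _ v hv => exists_separates_of_separates_apply (by
      simp only [clampedOrbit, Separates] at hv ⊢
      omega))
    (by unfold Separates; omega)
  have hu0 : u 0 = k := by
    have := hP 0 (Nat.zero_le q)
    simp only [clampedOrbit, Separates] at this
    omega
  refine ⟨u, by omega, by omega, by omega, fun i hi hi0 => ?_, harrow⟩
  obtain ⟨i, rfl⟩ := Nat.exists_eq_add_one_of_ne_zero hi0
  have := hP (i + 1) hi.le
  simp only [clampedOrbit, Separates] at this
  omega

end ClampedOrbit

/-- Points `z ≤ c < w < y` around the center `{c, c + 1}` of `t`, where `t` throws `w` over `z` and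
`z` over `y`, and `y` is the first point right of the center not sent to its left. -/
structure IsSpiral (t : ℕ → ℕ) (p c z w y : ℕ) : Prop where
  left_le : z ≤ c
  lt_mid : c < w
  mid_lt : w < y
  lt : y < p
  apply_mid : t w ≤ z
  apply_left : y ≤ t z
  apply_right : c < t y
  apply_le : ∀ k, c < k → k < y → t k ≤ c

section Spiral

variable {t : ℕ → ℕ} {p c : ℕ}

lemma IsCycleBelow.exists_isSpiral_of_escape (h : IsCycleBelow t p) (hc : IsCenter t p c) {k l : ℕ}
    (hkc : k ≤ c) (hk : ∀ m ≤ c, t m ≤ c → m < k) (hl : l < p) (hcl : c < l) (hcl' : c < t l)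
    (hlk : l ≤ t k) : ∃ z w y, IsSpiral t p c z w y := by
  obtain ⟨hcp, -, hright⟩ := hc
  have hy := Nat.find_spec (p := fun m => c < m ∧ c < t m) ⟨l, hcl, hcl'⟩
  have hyl := Nat.find_min' (p := fun m => c < m ∧ c < t m) ⟨l, hcl, hcl'⟩ ⟨hcl, hcl'⟩
  have hmin := fun m => Nat.find_min (p := fun m => c < m ∧ c < t m) ⟨l, hcl, hcl'⟩ (m := m)
  set y := Nat.find (p := fun m => c < m ∧ c < t m) ⟨l, hcl, hcl'⟩
  have hz := Nat.findGreatest_spec (P := (y ≤ t ·)) hkc (hyl.trans hlk)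
  have hkz := Nat.le_findGreatest (P := (y ≤ t ·)) hkc (hyl.trans hlk)
  have hzc := Nat.findGreatest_le (P := (y ≤ t ·)) c
  have hmax := fun m => Nat.findGreatest_is_greatest (P := (y ≤ t ·)) (n := c) (k := m)
  set z := Nat.findGreatest (y ≤ t ·) c
  have hne : y ≠ c + 1 := fun h => absurd hy.2 (h ▸ hright.not_gt)
  obtain ⟨w, hcw, hwy, hw⟩ : ∃ w, c < w ∧ w < y ∧ t w ≤ z := by
    by_contra! hnone
    refine lt_irrefl z (h.forall_of_invariant (S := fun m => z < m ∧ m < y) hcp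
      ⟨by omega, by omega⟩ (fun m _ ⟨hzm, hmy⟩ => ?_) (l := z) (by omega)).1
    rcases le_or_gt m c with hmc | hmc
    · have := hmax m hzm hmc
      have := mt (hk m hmc)
      omega
    · have := hnone m hmc hmy
      have := hmin m hmy
      omega
  exact ⟨z, w, y, hzc, hcw, hwy, by omega, hw, hz, hy.2,
    fun m hcm hmy => not_lt.1 fun hm => hmin m hmy ⟨hcm, hm⟩⟩

lemma IsCycleBelow.exists_isSpiral (h : IsCycleBelow t p) (hc : IsCenter t p c) {k : ℕ} (hk : k < p)
    (hside : c < t k ↔ c < k) : (∃ z w y, IsSpiral t p c z w y) ∨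
      ∃ z w y, IsSpiral (reflect p t) p (p - 2 - c) z w y := by
  by_contra! hnone
  obtain ⟨hspiral, hspiral'⟩ := hnone
  have hcp := hc.lt
  have hinner := h.forall_of_invariant (S := fun m =>
      (m ≤ c → ∀ l ≤ c, t l ≤ c → l < m) ∧ (c < m → ∀ l < p, c < l → c < t l → m < l)) (k := c)
    (by omega) ⟨fun _ l hl htl => lt_of_le_of_ne hl fun h => ?_, by omega⟩
    (fun m hm ⟨hleft, hright⟩ => ⟨fun htm l hl htl => ?_, fun htm l hl hcl htl => ?_⟩) hk
  · have := hinner.1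
    have := hinner.2
    rcases le_or_gt k c with hkc | hkc
    · exact lt_irrefl k (hinner.1 hkc k hkc (by omega))
    · exact lt_irrefl k (hinner.2 hkc k hk hkc (by omega))
  · exact absurd hc.left (h ▸ htl.not_gt)
  · by_contra! hlt
    have hcm : c < m := by
      by_contra! hmc
      exact lt_irrefl m (hleft hmc m hmc htm)
    obtain ⟨z, w, y, hzwy⟩ := h.reflect.exists_isSpiral_of_escape hc.reflect (k := p - 1 - m)
      (l := p - 1 - l) (by omega)
      (fun x hx htx => by
        have := hright hcm (p - 1 - x) (by omega) (by omega)
          (by have := h.lt (p - 1 - x) (by omega); unfold reflect at htx; omega)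
        omega)
      (by omega) (by omega)
      (by rw [reflect, show p - 1 - (p - 1 - l) = l by omega]; omega)
      (by rw [reflect, show p - 1 - (p - 1 - m) = m by omega]; omega)
    exact hspiral' z w y hzwy
  · by_contra! hlt
    have hmc : m ≤ c := by
      by_contra! hcm
      exact lt_irrefl m (hright hcm m hm hcm htm)
    obtain ⟨z, w, y, hzwy⟩ :=
      h.exists_isSpiral_of_escape hc hmc (hleft hmc) hl hcl htl hlt
    exact hspiral z w y hzwy

end Spiral

namespace IsSpiral

variable {t : ℕ → ℕ} {p q c z w y : ℕ}

/-- The left ends of a loop of intervals `[w, y] → [z, c + 1] → [c, w] → [z, c + 1] → ⋯` of even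
length `q` around a spiral. -/
def loopLeft (c z w q n : ℕ) : ℕ := if n % 2 = 1 then z else if n % q = 0 then w else c

/-- The right ends of the intervals with left ends `IsSpiral.loopLeft`. -/
def loopRight (c w y q n : ℕ) : ℕ := if n % 2 = 1 then c + 1 else if n % q = 0 then y else w

lemma clampedOrbit_loop (hc : IsCenter t p c) (hs : IsSpiral t p c z w y) (hq : Even q) {n : ℕ}
    (hn : n ≠ 0) (hnq : n ≤ q) :
    clampedOrbit t (loopLeft c z w q) (loopRight c w y q) w n =
        (if n % 2 = 1 then z else if n % q = 0 then y else w) ∧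
      clampedOrbit t (loopLeft c z w q) (loopRight c w y q) y n =
        (if n % 2 = 1 then c + 1 else if n % q = 0 then w else c) := by
  obtain ⟨hzc, hcw, hwy, -, htw, htz, hty, -⟩ := hs
  obtain ⟨-, hleft, hright⟩ := hc
  have hq2 := Nat.even_iff.1 hq
  induction n, Nat.one_le_iff_ne_zero.2 hn using Nat.le_induction with
  | base =>
    rw [clampedOrbit_succ, clampedOrbit_succ]
    simp only [clampedOrbit, loopLeft, loopRight, Nat.one_mod, if_true]
    omega
  | succ n hn ih =>
    obtain ⟨hw, hy⟩ := ih (by omega) (by omega)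
    rw [clampedOrbit_succ, clampedOrbit_succ, hw, hy, loopLeft, loopRight,
      Nat.mod_eq_of_lt (by omega : n < q), if_neg (by omega : n ≠ 0), if_neg (by omega : n ≠ 0)]
    rcases Nat.mod_two_eq_zero_or_one n with hpar | hpar
    · simp only [show (n + 1) % 2 = 1 by omega, hpar, if_true, zero_ne_one, if_false]
      omega
    · simp only [show (n + 1) % 2 = 0 by omega, hpar, if_true, zero_ne_one, if_false]
      split_ifs <;> omega

lemma clampedOrbit_loop_eq_iterate (hc : IsCenter t p c) (hs : IsSpiral t p c z w y) (hq : Even q)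
    {k n : ℕ} (hnq : n ≤ q)
    (hne : ∀ m ≤ n, clampedOrbit t (loopLeft c z w q) (loopRight c w y q) k m ∉
      ({clampedOrbit t (loopLeft c z w q) (loopRight c w y q) w m,
        clampedOrbit t (loopLeft c z w q) (loopRight c w y q) y m} : Set ℕ)) :
    clampedOrbit t (loopLeft c z w q) (loopRight c w y q) k n = t^[n] k := by
  induction n with
  | zero => rfl
  | succ n ih =>
    have hn := hne (n + 1) le_rfl
    obtain ⟨hw, hy⟩ := clampedOrbit_loop hc hs hq n.succ_ne_zero hnq
    rw [hw, hy, mem_insert_iff, mem_singleton_iff] at hn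
    rw [Function.iterate_succ_apply', ← ih (by omega) fun m hm => hne m (by omega)]
    simp only [clampedOrbit, loopLeft, loopRight] at hn ⊢
    split_ifs at hn ⊢ <;> omega

/-- The intervals are covered `q - 1` times with reversed orientation, so a fixed point of the
clamped map avoids its endpoints, hence is never clamped and belongs to the cycle. -/
lemma clampedOrbit_loop_ne (h : IsCycleBelow t p) (hc : IsCenter t p c)
    (hs : IsSpiral t p c z w y) (hq : Even q) (hq0 : q ≠ 0) (hpq : p ≠ q) {k : ℕ}
    (hk : k ∈ Icc w y) : clampedOrbit t (loopLeft c z w q) (loopRight c w y q) k q ≠ k := by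
  intro hfix
  set orbit := clampedOrbit t (loopLeft c z w q) (loopRight c w y q)
  obtain ⟨hqw, hqy⟩ : orbit w q = y ∧ orbit y q = w := by
    simpa [Nat.even_iff.1 hq] using clampedOrbit_loop hc hs hq hq0 le_rfl
  have hend : ∀ n ≤ q, orbit k n ∉ ({orbit w n, orbit y n} : Set ℕ) := by
    have := hs.mid_lt
    rintro n hn (heq | heq)
    · obtain rfl : k = y := hfix.symm.trans ((clampedOrbit_congr hn heq).trans hqw)
      omega
    · obtain rfl : k = w := hfix.symm.trans ((clampedOrbit_congr hn heq).trans hqy)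
      omega
  have horbit : ∀ n ≤ q, orbit k n = t^[n] k := fun n hn =>
    clampedOrbit_loop_eq_iterate hc hs hq hn fun m hm => hend m (hm.trans hn)
  have hkp : k < p := hk.2.trans_lt hs.lt
  have hdvd : p ∣ q := h.dvd_of_iterate_eq hkp (by rw [← horbit q le_rfl, hfix])
  have hlt : p < q := (Nat.le_of_dvd (by omega) hdvd).lt_of_ne hpq
  have hkw : k ≠ w := fun hkw => hend 0 (Nat.zero_le q) (.inl hkw)
  have hle : orbit k p ≤ w := by
    obtain ⟨n, rfl⟩ := Nat.exists_eq_add_one_of_ne_zero (by omega : p ≠ 0)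
    have := hs.left_le
    have := hs.lt_mid
    simp only [orbit, clampedOrbit_succ, loopLeft, loopRight, Nat.mod_eq_of_lt hlt,
      Nat.add_one_ne_zero, if_false]
    split_ifs <;> omega
  have hret : orbit k p = k := by
    rw [horbit p hlt.le]
    exact (h.iterate_eq_iff k hkp p 0).2 (by simp [Nat.ModEq])
  have := hk.1
  omega

lemma exists_iterate_notMem (hc : IsCenter t p c) (hs : IsSpiral t p c z w y) {u : ℕ → ℕ}
    (hq : Even q) (hq0 : q ≠ 0) (hu₀ : w ≤ u 0) (hu₀' : u 0 < y) (hu₁ : z ≤ u 1) (hu₁' : u 1 ≤ c)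
    (hu₂ : 2 < q → u 2 < w) : ∃ m, t^[m] w ∉ Icc (u (m % q)) (u (m % q) + 1) := by
  by_contra! hmem
  have hq2 := Nat.even_iff.1 hq
  obtain ⟨-, hcw, -, -, htw, htz, hty, -⟩ := hs
  have h₁ : t w ∈ Icc (u 1) (u 1 + 1) := by simpa [Nat.mod_eq_of_lt (by omega : 1 < q)] using hmem 1
  have htw' : t w = z := htw.antisymm (hu₁.trans h₁.1)
  rcases (by omega : 2 ≤ q).lt_or_eq with hq' | rfl
  · have h₂ : t (t w) ∈ Icc (u 2) (u 2 + 1) := by simpa [Nat.mod_eq_of_lt hq'] using hmem 2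
    have := hu₂ hq'
    rw [htw', mem_Icc] at h₂
    omega
  · have h₂ : t (t w) ∈ Icc (u 0) (u 0 + 1) := hmem 2
    have h₃ : t (t (t w)) ∈ Icc (u 1) (u 1 + 1) := hmem 3
    have h₄ : t (t (t (t w))) ∈ Icc (u 0) (u 0 + 1) := hmem 4
    simp only [htw', mem_Icc] at h₁ h₂ h₃ h₄
    rw [show t z = y by omega] at h₃ h₄
    rw [show t y = c + 1 by omega] at h₄
    have := hc.right
    have := hc.left
    omega

lemma exists_isSeparatedLoop_of_even (h : IsCycleBelow t p) (hc : IsCenter t p c)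
    (hs : IsSpiral t p c z w y) (hq : Even q) (hq0 : q ≠ 0) (hpq : p ≠ q) :
    ∃ u, IsSeparatedLoop t p q u := by
  obtain ⟨hqw, hqy⟩ := clampedOrbit_loop hc hs hq hq0 le_rfl
  simp only [Nat.even_iff.1 hq, zero_ne_one, if_false, Nat.mod_self, if_true] at hqw hqy
  have hq2 := Nat.even_iff.1 hq
  have hcw := hs.lt_mid
  have hwy := hs.mid_lt
  have hyp := hs.lt
  obtain ⟨u, hwu, huy, hclosed, hmem, harrow⟩ := exists_loop_of_clampedOrbit hwy.le
    (by rwa [hqw]) (by rwa [hqy]) fun k hk => clampedOrbit_loop_ne h hc hs hq hq0 hpq hk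
  have hodd : ∀ i < q, i % 2 = 1 → z ≤ u i ∧ u i ≤ c := fun i hi hi2 => by
    have := hmem i hi (by omega)
    simp only [loopLeft, loopRight, hi2, if_true] at this
    omega
  have hlt : ∀ i < q, i ≠ 0 → u i < w := fun i hi hi0 => by
    rcases Nat.mod_two_eq_zero_or_one i with hi2 | hi2
    · have := hmem i hi hi0
      simp only [loopLeft, loopRight, hi2, zero_ne_one, Nat.mod_eq_of_lt hi, hi0, if_false] at this
      omega
    · have := hodd i hi hi2
      omega
  obtain ⟨h₁, h₁'⟩ := hodd 1 (by omega) rfl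
  refine ⟨_, .of_threshold (by omega) hclosed (fun i hi => ?_) harrow hwu hlt
    (exists_iterate_notMem hc hs hq hq0 hwu huy h₁ h₁' fun hq => hlt 2 hq two_ne_zero)⟩
  rcases eq_or_ne i 0 with rfl | hi0
  · omega
  · have := hlt i hi hi0
    omega

end IsSpiral

lemma IsCycleBelow.exists_iterate_notMem_center {t : ℕ → ℕ} {p c k : ℕ} (h : IsCycleBelow t p)
    (hc : IsCenter t p c) (hp : 3 ≤ p) (hk : k < p) :
    ∃ m ≠ 0, m ≤ 3 ∧ t^[m] k ∉ Icc c (c + 1) := by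
  by_contra! hmem
  have h₁ : t k ∈ Icc c (c + 1) := hmem 1 one_ne_zero (by omega)
  have h₂ : t (t k) ∈ Icc c (c + 1) := hmem 2 two_ne_zero (by omega)
  have h₃ : t (t (t k)) ∈ Icc c (c + 1) := hmem 3 three_ne_zero le_rfl
  have hleft := hc.left
  have hright := hc.right
  have hfix : t^[2] (t k) = t k := by
    change t (t (t k)) = t k
    obtain htk | htk : t k = c ∨ t k = c + 1 := by
      rw [mem_Icc] at h₁
      omega
    · have htc : t c = c + 1 := (htk ▸ h₂.2).antisymm hleft
      rw [htk, htc] at h₃ ⊢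
      exact hright.antisymm h₃.1
    · have htc : t (c + 1) = c := hright.antisymm (htk ▸ h₂.1)
      rw [htk, htc] at h₃ ⊢
      exact h₃.2.antisymm hleft
  exact absurd (Nat.le_of_dvd two_pos (h.dvd_of_iterate_eq (h.lt k hk) hfix)) (by omega)

/-- The edge `{v, v + 1}` lies in the convex hull of `k` and the center `{c, c + 1}`. -/
def InCentralHull (c k v : ℕ) : Prop := k ≤ v ∧ v ≤ c ∨ c ≤ v ∧ v < k

lemma IsCenter.exists_arrow {t : ℕ → ℕ} {p c k v : ℕ} (hc : IsCenter t p c)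
    (hv : InCentralHull c (t k) v) :
    ∃ u, InCentralHull c k u ∧ Separates v (t u) (t (u + 1)) := by
  obtain ⟨e, he, hsep⟩ : ∃ e, (e = c ∨ e = c + 1) ∧ Separates v (t e) (t k) := by
    have hleft := hc.left
    have hright := hc.right
    unfold InCentralHull at hv
    rcases le_or_gt (t k) c with hk | hk
    · exact ⟨c, .inl rfl, by unfold Separates; omega⟩
    · exact ⟨c + 1, .inr rfl, by unfold Separates; omega⟩
  obtain ⟨u, hu, huv⟩ := exists_separates_of_separates_apply hsep
  refine ⟨u, ?_, huv⟩
  unfold Separates at hu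
  unfold InCentralHull
  omega

namespace IsSpiral

variable {t : ℕ → ℕ} {p q c z w y : ℕ}

lemma exists_path_from_center (h : IsCycleBelow t p) (hc : IsCenter t p c)
    (hs : IsSpiral t p c z w y) : ∃ (D : ℕ) (s : ℕ → ℕ), 0 < D ∧ D < p ∧ s 0 = c ∧ s D = y - 1 ∧
      (∀ j < D, s j < y - 1) ∧ ∀ j < D, Separates (s (j + 1)) (t (s j)) (t (s j + 1)) := by
  have hcw := hs.lt_mid
  have hwy := hs.mid_lt
  obtain ⟨j, hjp, hj⟩ := h.exists_iterate_eq hc.lt hs.lt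
  have hD := Nat.find_spec (p := fun j => y ≤ t^[j] (c + 1)) ⟨j, hj.ge⟩
  have hDj := Nat.find_min' (p := fun j => y ≤ t^[j] (c + 1)) ⟨j, hj.ge⟩ hj.ge
  have hmin := fun m => Nat.find_min (p := fun j => y ≤ t^[j] (c + 1)) ⟨j, hj.ge⟩ (m := m)
  set D := Nat.find (p := fun j => y ≤ t^[j] (c + 1)) ⟨j, hj.ge⟩
  obtain ⟨s, hsD, hhull, harrow⟩ := exists_path_of_forall_exists
    (r := fun u v => Separates v (t u) (t (u + 1))) (n := D) (v := y - 1)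
    (P := fun j u => InCentralHull c (t^[j] (c + 1)) u)
    (fun j _ v hv => hc.exists_arrow (Function.iterate_succ_apply' t j _ ▸ hv))
    (by unfold InCentralHull; omega)
  refine ⟨D, s, Nat.pos_of_ne_zero fun h₀ => ?_, by omega, ?_, hsD, fun j hj => ?_, harrow⟩
  · rw [h₀, Function.iterate_zero, id] at hD
    omega
  · have := hhull 0 (Nat.zero_le D)
    simp only [InCentralHull, Function.iterate_zero, id] at this
    omega
  · have := hmin j hj
    have := hhull j hj.le
    simp only [InCentralHull] at this
    omega

lemma exists_isSeparatedLoop_of_add_two_le (h : IsCycleBelow t p) (hc : IsCenter t p c)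
    (hs : IsSpiral t p c z w y) (hp : 3 ≤ p) (hpq : p + 2 ≤ q) :
    ∃ u, IsSeparatedLoop t p q u := by
  obtain ⟨D, s, hD, hDp, hs₀, hsD, hlt, harrow⟩ := hs.exists_path_from_center h hc
  have hcw := hs.lt_mid
  have hwy := hs.mid_lt
  have hyp := hs.lt
  have hleft := hc.left
  have hright := hc.right
  have hty := hs.apply_right
  have hpred := hs.apply_le (y - 1) (by omega) (by omega)
  set u : ℕ → ℕ := fun i => if i = 0 then y - 1 else s (i - (q - D))
  have hu₀ : u 0 = y - 1 := if_pos rfl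
  have hu_ne : ∀ {i}, i ≠ 0 → u i = s (i - (q - D)) := fun hi => if_neg hi
  have huc : ∀ {i}, i ≠ 0 → i ≤ q - D → u i = c := fun hi hiD => by
    rw [hu_ne hi, Nat.sub_eq_zero_of_le hiD, hs₀]
  have hu_lt : ∀ i < q, i ≠ 0 → u i < y - 1 := fun i hi hi0 => hu_ne hi0 ▸ hlt _ (by omega)
  refine ⟨_, .of_threshold (w := y - 1) (u := u) (by omega) ?_ (fun i hi => ?_) (fun i hi => ?_)
    hu₀.ge hu_lt ?_⟩
  · rw [hu₀, hu_ne (by omega), Nat.sub_sub_self (by omega), hsD]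
  · rcases eq_or_ne i 0 with rfl | hi0
    · omega
    · have := hu_lt i hi hi0
      omega
  · rcases eq_or_ne i 0 with rfl | hi0
    · rw [zero_add, hu₀, huc one_ne_zero (by omega), Nat.sub_add_cancel (by omega)]
      unfold Separates
      omega
    · rcases lt_or_ge i (q - D) with hiD | hiD
      · rw [huc hi0 hiD.le, huc i.succ_ne_zero hiD]
        unfold Separates
        omega
      · rw [hu_ne hi0, hu_ne (Nat.add_one_ne_zero i), Nat.sub_add_comm hiD]
        exact harrow _ (by omega)
  · obtain ⟨m, hm0, hm3, hm⟩ := h.exists_iterate_notMem_center hc hp (k := y - 1) (by omega)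
    refine ⟨m, ?_⟩
    rwa [Nat.mod_eq_of_lt (by omega), huc hm0 (by omega)]

lemma exists_isSeparatedLoop (h : IsCycleBelow t p) (hc : IsCenter t p c)
    (hs : IsSpiral t p c z w y) (hq : q ≠ 0) (hpq : p ≠ q) (hq' : Even q ∨ 3 ≤ p ∧ p + 2 ≤ q) :
    ∃ u, IsSeparatedLoop t p q u := by
  rcases hq' with heven | ⟨hp, hpq'⟩
  · exact hs.exists_isSeparatedLoop_of_even h hc heven hq hpq
  · exact hs.exists_isSeparatedLoop_of_add_two_le h hc hp hpq'

end IsSpiral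

lemma IsCycleBelow.exists_isSeparatedLoop {t : ℕ → ℕ} {p q : ℕ} (h : IsCycleBelow t p)
    (hpq : SharkGT p q) : ∃ u, IsSeparatedLoop t p q u := by
  induction p using Nat.strong_induction_on generalizing t q with
  | _ p ih =>
  obtain ⟨hp, hq, hcases⟩ := hpq.cases
  obtain ⟨c, hc⟩ := h.exists_isCenter hp
  have hcp := hc.lt
  rcases eq_or_ne q 1 with rfl | hq1
  · exact ⟨_, hc.isSeparatedLoop_const⟩
  by_cases hswitch : ∀ k < p, c + 1 ≤ t k ↔ k < c + 1
  · obtain rfl : p = 2 * (c + 1) := h.eq_two_mul_of_switch hcp.le hswitch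
    obtain ⟨u, hu⟩ := ih (c + 1) (by omega) (h.iterate_two hswitch) (q := q / 2) (by
      obtain hq1' | ⟨-, -, hhalf⟩ | hodd := hcases
      · exact absurd hq1' hq1
      · rwa [Nat.mul_div_cancel_left _ two_pos] at hhalf
      · omega)
    rw [show q = 2 * (q / 2) by omega]
    exact hu.exists_double h hswitch
  · push Not at hswitch
    obtain ⟨k, hk, hside⟩ := hswitch
    have hq' : Even q ∨ 3 ≤ p ∧ p + 2 ≤ q := by
      rw [Nat.even_iff]
      omega
    obtain ⟨z, w, y, hs⟩ | ⟨z, w, y, hs⟩ := h.exists_isSpiral hc hk (by omega)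
    · exact hs.exists_isSeparatedLoop h hc (by omega) hpq.ne hq'
    · obtain ⟨u, hu⟩ := hs.exists_isSeparatedLoop h.reflect hc.reflect (by omega) hpq.ne hq'
      exact ⟨_, hu.of_reflect h⟩

/-! ### Interval orbits of skew products -/

/-- The skew product of the base map `R` and the fiber maps `g`. -/
def skew {X : Type*} (R : X → X) (g : X → ℝ → ℝ) (z : X × ℝ) : X × ℝ := (R z.1, g z.1 z.2)

/-- The region swept out by a family of intervals. -/
def region {X : Type*} (A : X → ℝ × ℝ) : Set (X × ℝ) := {z | z.2 ∈ Icc (A z.1).1 (A z.1).2}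

/-- A temporally indexed cycle of `p` disjoint families of intervals, ordered uniformly in the
parameter, with each one mapped exactly onto the next by the skew product of `R` and `g`: the
measurable counterpart of a `p`-periodic strip. -/
structure IsIntervalOrbit {X : Type*} [MeasurableSpace X] (R : X → X) (g : X → ℝ → ℝ) (p : ℕ)
    (A : ℕ → X → ℝ × ℝ) : Prop extends CaratheodorySkew R g where
  measurable : ∀ i, Measurable (A i)
  periodic : Function.Periodic A p
  le : ∀ i θ, (A i θ).1 ≤ (A i θ).2
  image : ∀ i θ, g θ '' Icc (A i θ).1 (A i θ).2 = Icc (A (i + 1) (R θ)).1 (A (i + 1) (R θ)).2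
  ordered : ∀ i j, ¬i ≡ j [MOD p] →
    (∀ θ, (A i θ).2 < (A j θ).1) ∨ ∀ θ, (A j θ).2 < (A i θ).1

/-- A cycle of disjoint families of intervals indexed from left to right and permuted according
to `t`. -/
structure IsIntervalCycle {X : Type*} [MeasurableSpace X] (R : X → X) (g : X → ℝ → ℝ)
    (t : ℕ → ℕ) (p : ℕ) (Q : ℕ → X → ℝ × ℝ) : Prop extends CaratheodorySkew R g where
  isCycleBelow : IsCycleBelow t p
  measurable : ∀ k, Measurable (Q k)
  le : ∀ k θ, (Q k θ).1 ≤ (Q k θ).2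
  lt : ∀ k l, k < l → l < p → ∀ θ, (Q k θ).2 < (Q l θ).1
  mapsTo : ∀ k < p, MapsTo (skew R g) (region (Q k)) (region (Q (t k)))

lemma exists_sort_of_periodic {α : Type*} [LinearOrder α] {v : ℕ → α} {p : ℕ} (hp : p ≠ 0)
    (hper : Function.Periodic v p) (hinj : ∀ i j, v i = v j → i ≡ j [MOD p]) :
    ∃ s r : ℕ → ℕ, StrictMonoOn (v ∘ s) (Iio p) ∧ (∀ i, r i < p) ∧
      (∀ i j, r i = r j ↔ i ≡ j [MOD p]) ∧ ∀ k < p, r (s k) = k := by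
  have hv : ∀ i j, v i = v j ↔ i ≡ j [MOD p] := fun i j =>
    ⟨hinj i j, fun hij => by rw [← hper.map_mod_nat i, hij, hper.map_mod_nat]⟩
  have hcard : ((Finset.range p).image v).card = p :=
    (Finset.card_image_of_injOn fun i hi j hj hij => (hinj i j hij).eq_of_lt_of_lt
      (by simpa using hi) (by simpa using hj)).trans (Finset.card_range p)
  set e := ((Finset.range p).image v).orderEmbOfFin hcard
  have hr : ∀ i, ∃ k, ∃ hk : k < p, e ⟨k, hk⟩ = v i := fun i => by
    have hmem : v i ∈ range e := by
      rw [Finset.range_orderEmbOfFin, Finset.mem_coe, ← hper.map_mod_nat i]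
      exact Finset.mem_image_of_mem v (Finset.mem_range.2 (Nat.mod_lt i (Nat.pos_of_ne_zero hp)))
    obtain ⟨k, hk⟩ := hmem
    exact ⟨k, k.2, hk⟩
  have hs : ∀ k, ∃ i, ∀ hk : k < p, v i = e ⟨k, hk⟩ := fun k => by
    by_cases hk : k < p
    · obtain ⟨i, -, hi⟩ := Finset.mem_image.1 (Finset.orderEmbOfFin_mem _ hcard ⟨k, hk⟩)
      exact ⟨i, fun _ => hi⟩
    · exact ⟨0, fun hk' => absurd hk' hk⟩
  choose r hrp hr using hr
  choose s hs using hs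
  refine ⟨s, r, fun k hk l hl hkl => ?_, hrp, fun i j => ?_, fun k hk =>
    congrArg Fin.val (e.injective ((hr (s k)).trans (hs k hk)))⟩
  · simp only [Function.comp_apply, hs k hk, hs l hl]
    exact e.strictMono hkl
  · rw [← hv, ← hr i, ← hr j, e.injective.eq_iff, Fin.mk.injEq]

lemma exists_isCycleBelow_of_periodic {α : Type*} [LinearOrder α] {v : ℕ → α} {p : ℕ}
    (hp : p ≠ 0) (hper : Function.Periodic v p) (hinj : ∀ i j, v i = v j → i ≡ j [MOD p]) :
    ∃ s t : ℕ → ℕ, IsCycleBelow t p ∧ StrictMonoOn (v ∘ s) (Iio p) ∧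
      ∀ k < p, s (t k) ≡ s k + 1 [MOD p] := by
  obtain ⟨s, r, hmono, hrp, hr, hrs⟩ := exists_sort_of_periodic hp hper hinj
  have hsr : ∀ i, s (r i) ≡ i [MOD p] := fun i => (hr _ _).1 (hrs _ (hrp i))
  have hiter : ∀ k < p, ∀ n, (fun k => r (s k + 1))^[n] k = r (s k + n) := fun k hk n => by
    induction n with
    | zero => exact (hrs k hk).symm
    | succ n ih =>
      rw [Function.iterate_succ_apply', ih, hr]
      exact (hsr _).add_right 1
  refine ⟨s, fun k => r (s k + 1), ⟨fun k _ => hrp _, fun k hk i j => ?_⟩, hmono, fun k _ => hsr _⟩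
  rw [hiter k hk, hiter k hk, hr]
  exact ⟨Nat.ModEq.add_left_cancel' (s k), Nat.ModEq.add_left (s k)⟩

namespace IsIntervalOrbit

variable {X : Type*} [MeasurableSpace X] {R : X → X} {g : X → ℝ → ℝ} {p : ℕ} {A : ℕ → X → ℝ × ℝ}

lemma eq_of_modEq (h : IsIntervalOrbit R g p A) {i j : ℕ} (hij : i ≡ j [MOD p]) : A i = A j := by
  rw [← h.periodic.map_mod_nat i, hij, h.periodic.map_mod_nat]

lemma mapsTo (h : IsIntervalOrbit R g p A) (i : ℕ) :
    MapsTo (skew R g) (region (A i)) (region (A (i + 1))) :=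
  fun z hz => (h.image i z.1).subset (mem_image_of_mem (g z.1) hz)

lemma exists_isIntervalCycle [Nonempty X] (h : IsIntervalOrbit R g p A) (hp : p ≠ 0) :
    ∃ t Q, IsIntervalCycle R g t p Q := by
  obtain ⟨θ₀⟩ := ‹Nonempty X›
  obtain ⟨s, t, ht, hs, hst⟩ := exists_isCycleBelow_of_periodic (v := fun i => (A i θ₀).1) hp
    (fun i => by simp only [h.periodic i]) fun i j hij => by
      by_contra hne
      have hi := h.le i θ₀
      have hj := h.le j θ₀
      rcases h.ordered i j hne with hlt | hlt <;> linarith [hlt θ₀]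
  refine ⟨t, fun k => A (s k), h.toCaratheodorySkew, ht, fun k => h.measurable _, fun k => h.le _,
    fun k l hkl hl => ?_, fun k hk => ?_⟩
  · have hlt₀ : (A (s k) θ₀).1 < (A (s l) θ₀).1 := hs (hkl.trans hl) hl hkl
    refine (h.ordered _ _ fun hmod => ?_).resolve_right fun hlt => ?_
    · rw [h.eq_of_modEq hmod] at hlt₀
      exact hlt₀.false
    · linarith [hlt θ₀, h.le (s l) θ₀]
  · simp only [h.eq_of_modEq (hst k hk)]
    exact h.mapsTo (s k)

end IsIntervalOrbit

/-- The interval between the `k`-th and the `(k+1)`-st one of a family. -/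
def gap {X : Type*} (Q : ℕ → X → ℝ × ℝ) (k : ℕ) (θ : X) : ℝ × ℝ := ((Q k θ).2, (Q (k + 1) θ).1)

/-- The sign, as a real number, with which `t` maps the edge `{k, k + 1}`. -/
def orientation (t : ℕ → ℕ) (k : ℕ) : ℝ := if t k < t (k + 1) then 1 else -1

/-- The intervals whose orbits follow the loop `u` through the gaps of `Q`. -/
def loopInterval {X : Type*} (R : X → X) (g : X → ℝ → ℝ) (t : ℕ → ℕ) (Q : ℕ → X → ℝ × ℝ)
    (u : ℕ → ℕ) : ℕ → X → ℝ × ℝ :=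
  limitInterval R g (fun i => orientation t (u i)) fun i => gap Q (u i)

namespace IsIntervalCycle

variable {X : Type*} [MeasurableSpace X] {R : X → X} {g : X → ℝ → ℝ} {t u : ℕ → ℕ} {p q : ℕ}
  {Q : ℕ → X → ℝ × ℝ}

lemma fst_le_fst (h : IsIntervalCycle R g t p Q) {k l : ℕ} (hkl : k ≤ l) (hl : l < p) (θ : X) :
    (Q k θ).1 ≤ (Q l θ).1 := by
  rcases hkl.eq_or_lt with rfl | hkl
  · rfl
  · exact (h.le k θ).trans (h.lt k l hkl hl θ).le

lemma snd_le_snd (h : IsIntervalCycle R g t p Q) {k l : ℕ} (hkl : k ≤ l) (hl : l < p) (θ : X) :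
    (Q k θ).2 ≤ (Q l θ).2 := by
  rcases hkl.eq_or_lt with rfl | hkl
  · rfl
  · exact (h.lt k l hkl hl θ).le.trans (h.le l θ)

lemma gap_le (h : IsIntervalCycle R g t p Q) {k : ℕ} (hk : k + 1 < p) (θ : X) :
    (gap Q k θ).1 ≤ (gap Q k θ).2 :=
  (h.lt k (k + 1) k.lt_succ_self hk θ).le

lemma covers_gap (h : IsIntervalCycle R g t p Q) {k l : ℕ} (hk : k + 1 < p) (hl : l + 1 < p)
    (hkl : Separates l (t k) (t (k + 1))) (θ : X) :
    Covers (orientation t k) (g θ) (gap Q k θ) (gap Q l (R θ)) := by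
  have hleft : g θ (gap Q k θ).1 ∈ Icc (Q (t k) (R θ)).1 (Q (t k) (R θ)).2 :=
    h.mapsTo k (by omega) (x := (θ, (Q k θ).2)) ⟨h.le k θ, le_rfl⟩
  have hright : g θ (gap Q k θ).2 ∈ Icc (Q (t (k + 1)) (R θ)).1 (Q (t (k + 1)) (R θ)).2 :=
    h.mapsTo (k + 1) hk (x := (θ, (Q (k + 1) θ).1)) ⟨le_rfl, h.le (k + 1) θ⟩
  have hgap := h.gap_le hl (R θ)
  have ht := h.isCycleBelow.lt k (by omega)
  have ht' := h.isCycleBelow.lt (k + 1) hk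
  unfold Separates at hkl
  by_cases hlt : t k < t (k + 1)
  · have hl₁ := h.snd_le_snd (show t k ≤ l by omega) (by omega) (R θ)
    have hl₂ := h.fst_le_fst (show l + 1 ≤ t (k + 1) by omega) ht' (R θ)
    simp only [orientation, if_pos hlt]
    refine ⟨h.gap_le hk θ, ?_, ?_⟩ <;> simp only [one_mul]
    · exact (hleft.2.trans hl₁).trans_eq (min_eq_left hgap).symm
    · exact (max_eq_right hgap).trans_le (hl₂.trans hright.1)
  · have hl₁ := h.fst_le_fst (show l + 1 ≤ t k by omega) ht (R θ)
    have hl₂ := h.snd_le_snd (show t (k + 1) ≤ l by omega) (by omega) (R θ)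
    simp only [orientation, if_neg hlt]
    refine ⟨h.gap_le hk θ, ?_, ?_⟩ <;> simp only [neg_one_mul]
    · rw [min_neg_neg, neg_le_neg_iff, max_eq_right hgap]
      exact hl₁.trans hleft.1
    · rw [max_neg_neg, neg_le_neg_iff, min_eq_left hgap]
      exact hright.2.trans hl₂

lemma coverChain (h : IsIntervalCycle R g t p Q) (hu : IsSeparatedLoop t p q u) :
    CoverChain R g (fun i => orientation t (u i)) fun i => gap Q (u i) where
  toCaratheodorySkew := h.toCaratheodorySkew
  ne_zero i := by
    unfold orientation
    split_ifs <;> norm_num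
  measurable i := (h.measurable _).snd.prodMk (h.measurable _).fst
  covers i θ := h.covers_gap (hu.lt i) (hu.lt (i + 1)) (hu.arrow i) θ

lemma ordered_gap (h : IsIntervalCycle R g t p Q) {k l : ℕ} (hk : k + 1 < p) (hl : l + 1 < p)
    (hkl : k ≠ l) : Ordered (gap Q k) (gap Q l) := by
  wlog hlt : k < l generalizing k l
  · exact (this hl hk hkl.symm (by omega)).symm
  · exact .inl fun θ => (h.fst_le_fst hlt (by omega) θ).trans (h.le l θ)

lemma mem_Icc_of_mem_region (h : IsIntervalCycle R g t p Q) {k l : ℕ} {z : X × ℝ}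
    (hk : k + 1 < p) (hl : l < p) (hgap : z ∈ region (gap Q k)) (hz : z ∈ region (Q l)) :
    l ∈ Icc k (k + 1) := by
  by_contra hmem
  rcases not_and_or.1 hmem with hlk | hkl
  · have := h.lt l k (by omega) (by omega) z.1
    linarith [hz.2, hgap.1, h.le k z.1, show (gap Q k z.1).1 = (Q k z.1).2 from rfl]
  · have := h.lt (k + 1) l (by omega) hl z.1
    linarith [hz.1, hgap.2, h.le (k + 1) z.1, show (gap Q k z.1).2 = (Q (k + 1) z.1).1 from rfl]

lemma exists_mem_region_of_mem_gap (h : IsIntervalCycle R g t p Q) {k l : ℕ} {z : X × ℝ}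
    (hk : k + 1 < p) (hl : l + 1 < p) (hkl : k ≠ l) (hzk : z ∈ region (gap Q k))
    (hzl : z ∈ region (gap Q l)) : ∃ n < p, z ∈ region (Q n) := by
  wlog hlt : k < l generalizing k l
  · exact this hl hk hkl.symm hzl hzk (by omega)
  · exact ⟨l, by omega, (h.le l z.1).trans hzl.1,
      hzk.2.trans ((h.fst_le_fst hlt (by omega) z.1).trans (h.le l z.1))⟩

lemma iterate_mem_region (h : IsIntervalCycle R g t p Q) {k : ℕ} (hk : k < p) {z : X × ℝ}
    (hz : z ∈ region (Q k)) (n : ℕ) : (skew R g)^[n] z ∈ region (Q (t^[n] k)) := by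
  induction n with
  | zero => exact hz
  | succ n ih =>
    rw [Function.iterate_succ_apply', Function.iterate_succ_apply']
    exact h.mapsTo _ (h.isCycleBelow.iterate_lt hk n) ih

lemma iterate_mem_loopInterval (h : IsIntervalCycle R g t p Q) (hu : IsSeparatedLoop t p q u)
    {i : ℕ} {z : X × ℝ} (hz : z ∈ region (loopInterval R g t Q u i)) (n : ℕ) :
    (skew R g)^[n] z ∈ region (loopInterval R g t Q u (i + n)) := by
  induction n with
  | zero => exact hz
  | succ n ih =>
    rw [Function.iterate_succ_apply', ← add_assoc]
    exact ((h.coverChain hu).image_limitInterval _ _).subset (mem_image_of_mem _ ih)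

lemma iterate_mem_gap (h : IsIntervalCycle R g t p Q) (hu : IsSeparatedLoop t p q u)
    {i : ℕ} {z : X × ℝ} (hz : z ∈ region (loopInterval R g t Q u i)) (n : ℕ) :
    (skew R g)^[n] z ∈ region (gap Q (u (i + n))) :=
  Icc_subset_Icc ((h.coverChain hu).limitInterval_fst_mem _ _ 0).1
    ((h.coverChain hu).limitInterval_snd_le _ _ 0) (h.iterate_mem_loopInterval hu hz n)

lemma disjoint_loopInterval (h : IsIntervalCycle R g t p Q) (hu : IsSeparatedLoop t p q u)
    {i j : ℕ} (hij : ¬i ≡ j [MOD q]) :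
    Disjoint (region (loopInterval R g t Q u i)) (region (loopInterval R g t Q u j)) := by
  refine disjoint_left.2 fun z hzi hzj => ?_
  have hgi := h.iterate_mem_gap hu hzi
  have hgj := h.iterate_mem_gap hu hzj
  obtain ⟨n, hn⟩ := hu.separated i j hij
  obtain ⟨k, hk, hzk⟩ := h.exists_mem_region_of_mem_gap (hu.lt _) (hu.lt _) hn (hgi n) (hgj n)
  obtain ⟨m, hm⟩ := hu.not_shadowed (i + n) (j + n)
    (fun hmod => hij (Nat.ModEq.add_right_cancel' n hmod)) k hk
  have hkm := h.isCycleBelow.iterate_lt hk m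
  have hzm := h.iterate_mem_region hk hzk m
  rw [← Function.iterate_add_apply, add_comm m n] at hzm
  rw [add_assoc, add_assoc] at hm
  exact hm ⟨h.mem_Icc_of_mem_region (hu.lt _) hkm (hgi _) hzm,
    h.mem_Icc_of_mem_region (hu.lt _) hkm (hgj _) hzm⟩

lemma isIntervalOrbit_loopInterval (h : IsIntervalCycle R g t p Q) (hu : IsSeparatedLoop t p q u) :
    IsIntervalOrbit R g q (loopInterval R g t Q u) where
  toCaratheodorySkew := h.toCaratheodorySkew
  measurable := (h.coverChain hu).measurable_limitInterval
  periodic i := by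
    have hper : ∀ n, u (i + q + n) = u (i + n) := fun n => by rw [add_right_comm, hu.periodic]
    exact limitInterval_congr (fun n => by simp only [hper]) fun n => by simp only [hper]
  le := (h.coverChain hu).limitInterval_le
  image := (h.coverChain hu).image_limitInterval
  ordered i j hij := by
    have hle := (h.coverChain hu).limitInterval_le
    have hdisj := disjoint_left.1 (h.disjoint_loopInterval hu hij)
    have hsep := hu.separated i j hij
    have hagree : ∀ n < Nat.find hsep, u (i + n) = u (j + n) := fun n hn =>
      not_not.1 (Nat.find_min hsep hn)
    refine ((h.coverChain hu).ordered_limitInterval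
      (fun n hn => by simp only [hagree n hn, and_self])
      (h.ordered_gap (hu.lt _) (hu.lt _) (Nat.find_spec hsep))).imp
      (fun hord θ => (hord θ).lt_of_ne fun heq => ?_)
      fun hord θ => (hord θ).lt_of_ne fun heq => ?_
    · exact hdisj (a := (θ, (loopInterval R g t Q u i θ).2)) ⟨hle i θ, le_rfl⟩
        ⟨heq.ge, heq.trans_le (hle j θ)⟩
    · exact hdisj (a := (θ, (loopInterval R g t Q u j θ).2)) ⟨heq.ge, heq.trans_le (hle i θ)⟩
        ⟨hle j θ, le_rfl⟩

end IsIntervalCycle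

theorem IsIntervalOrbit.exists_of_sharkGT {X : Type*} [MeasurableSpace X] [Nonempty X] {R : X → X}
    {g : X → ℝ → ℝ} {p q : ℕ} {A : ℕ → X → ℝ × ℝ} (h : IsIntervalOrbit R g p A)
    (hpq : SharkGT p q) : ∃ A', IsIntervalOrbit R g q A' := by
  have hp := hpq.cases.1
  obtain ⟨t, Q, hQ⟩ := h.exists_isIntervalCycle (by omega)
  obtain ⟨u, hu⟩ := hQ.isCycleBelow.exists_isSeparatedLoop hpq
  exact ⟨_, hQ.isIntervalOrbit_loopInterval hu⟩

/-! ### Strips -/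

lemma exists_residual_continuousOn {X Y : Type*} [TopologicalSpace X] [MeasurableSpace X]
    [BorelSpace X] [TopologicalSpace Y] [SecondCountableTopology Y] [MeasurableSpace Y]
    [OpensMeasurableSpace Y] {φ : X → Y} (h : Measurable φ) :
    ∃ G ∈ residual X, ContinuousOn φ G := by
  obtain ⟨b, hb, -, hbasis⟩ := TopologicalSpace.exists_countable_basis Y
  have hopen : ∀ U ∈ b, ∃ V : Set X, IsOpen V ∧ φ ⁻¹' U =ᶠ[residual X] V := fun U hU =>
    (h (hbasis.isOpen hU).measurableSet).residualEq_isOpen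
  choose! V hV hUV using hopen
  refine ⟨{θ | ∀ U ∈ b, θ ∈ φ ⁻¹' U ↔ θ ∈ V U},
    (eventually_countable_ball hb).2 fun U hU => (hUV U hU).mem_iff, fun θ hθ => ?_⟩
  rw [ContinuousWithinAt, hbasis.nhds_hasBasis.tendsto_right_iff]
  rintro U ⟨hU, hmem⟩
  filter_upwards [mem_nhdsWithin_of_mem_nhds ((hV U hU).mem_nhds ((hθ U hU).1 hmem)),
    self_mem_nhdsWithin] with x hxV hx using (hx U hU).2 hxV

lemma eq_univ_of_isClosed_of_forall_add_mem {G : Type*} [TopologicalSpace G] [AddGroup G]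
    [ContinuousAdd G] {w : G} (hw : DenseRange fun n : ℕ => n • w) {Z : Set G} (hZ : IsClosed Z)
    (hne : Z.Nonempty) (hadd : ∀ z ∈ Z, z + w ∈ Z) : Z = univ := by
  obtain ⟨z, hz⟩ := hne
  have hdense : DenseRange fun n : ℕ => z + n • w :=
    (Homeomorph.addLeft z).surjective.denseRange.comp hw (Homeomorph.addLeft z).continuous
  refine eq_univ_of_univ_subset (hdense.closure_range ▸ hZ.closure_subset_iff.2 ?_)
  rintro _ ⟨n, rfl⟩
  induction n with
  | zero => simpa only [zero_smul, add_zero] using hz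
  | succ n ih => simpa only [succ_nsmul, add_assoc] using hadd _ ih

/-- `F` is a continuous skew product over the rotation of the circle by `w`. -/
structure IsSkewRotation (F : Cyl → Cyl) (w : S1) : Prop where
  continuous : Continuous F
  fst_apply : ∀ z, (F z).1 = z.1 + w

/-- `H` is a residual Borel set of angles invariant under the rotation by `w`. -/
structure IsInvariantResidual (w : S1) (H : Set S1) : Prop where
  mem_residual : H ∈ residual S1
  measurableSet : MeasurableSet H
  add_mem_iff : ∀ θ, θ + w ∈ H ↔ θ ∈ H

lemma exists_isInvariantResidual_subset {G : Set S1} (hG : G ∈ residual S1) (w : S1) :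
    ∃ H ⊆ G, IsInvariantResidual w H := by
  obtain ⟨H, hHG, hH, hdense⟩ := mem_residual.1 hG
  refine ⟨⋂ n : ℤ, (fun θ => θ + n • w) ⁻¹' H, fun θ hθ => hHG ?_, ?_, ?_, fun θ => ?_⟩
  · simpa only [zero_smul, add_zero, mem_preimage] using mem_iInter.1 hθ 0
  · exact countable_iInter_mem.2 fun n => tendsto_residual_of_isOpenMap (continuous_add_const _)
      (isOpenMap_add_right (n • w)) (mem_residual.2 ⟨H, subset_rfl, hH, hdense⟩)
  · exact .iInter fun n => (continuous_add_const _).measurable hH.measurableSet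
  · simp only [mem_iInter, mem_preimage, add_assoc, ← one_add_zsmul]
    exact ⟨fun h n => by simpa only [add_sub_cancel] using h (n - 1), fun h n => h (1 + n)⟩

namespace IsInvariantResidual

variable {w : S1} {H : Set S1}

/-- The rotation by `w` restricted to an invariant set. -/
def rotate (hH : IsInvariantResidual w H) (θ : H) : H := ⟨θ + w, (hH.add_mem_iff θ).2 θ.2⟩

lemma surjective_rotate (hH : IsInvariantResidual w H) : Function.Surjective hH.rotate := fun θ =>
  ⟨⟨θ - w, (hH.add_mem_iff _).1 (by simpa only [sub_add_cancel] using θ.2)⟩,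
    Subtype.ext (sub_add_cancel _ _)⟩

lemma measurable_rotate (hH : IsInvariantResidual w H) : Measurable hH.rotate :=
  (measurable_subtype_coe.add_const w).subtype_mk

lemma nonempty (hH : IsInvariantResidual w H) : Nonempty H :=
  (dense_of_mem_residual hH.mem_residual).nonempty.to_subtype

end IsInvariantResidual

/-- The fiber map of `F` over `θ`, extended to the real line by precomposing with the retraction
onto the unit interval. -/
def fiberMap (F : Cyl → Cyl) (θ : S1) (x : ℝ) : ℝ := (F (θ, projIcc 0 1 zero_le_one x)).2

lemma fiberMap_coe (F : Cyl → Cyl) (θ : S1) (x : II) : fiberMap F θ x = (F (θ, x)).2 := by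
  rw [fiberMap, projIcc_val]

lemma fiberMap_mem (F : Cyl → Cyl) (θ : S1) (x : ℝ) : fiberMap F θ x ∈ Icc (0 : ℝ) 1 :=
  Subtype.prop _

namespace IsSkewRotation

variable {F : Cyl → Cyl} {w : S1}

lemma iterate (hF : IsSkewRotation F w) (n : ℕ) : IsSkewRotation F^[n] (n • w) := by
  refine ⟨hF.continuous.iterate n, fun z => ?_⟩
  induction n with
  | zero => rw [zero_smul, add_zero]; rfl
  | succ n ih => rw [Function.iterate_succ_apply', hF.fst_apply, ih, add_assoc, succ_nsmul]

lemma continuous_uncurry_fiberMap (hF : IsSkewRotation F w) :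
    Continuous (Function.uncurry (fiberMap F)) :=
  continuous_subtype_val.comp (hF.continuous.comp
    (continuous_fst.prodMk (continuous_projIcc.comp continuous_snd))).snd

lemma caratheodorySkew (hF : IsSkewRotation F w) {H : Set S1} (hH : IsInvariantResidual w H) :
    CaratheodorySkew hH.rotate fun θ => fiberMap F θ where
  measurable_base := hH.measurable_rotate
  measurable_uncurry := hF.continuous_uncurry_fiberMap.measurable.comp
    (measurable_subtype_coe.prodMap measurable_id)
  continuous θ := hF.continuous_uncurry_fiberMap.comp (Continuous.prodMk_right (θ : S1))

lemma fiber_image (hF : IsSkewRotation F w) (A : Set Cyl) (θ : S1) :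
    fiber (F '' A) (θ + w) = (fun x => (F (θ, x)).2) '' fiber A θ := by
  ext y
  constructor
  · rintro ⟨⟨θ', x⟩, hx, hy⟩
    obtain rfl : θ' = θ :=
      add_right_cancel ((hF.fst_apply (θ', x)).symm.trans (congrArg Prod.fst hy))
    exact ⟨x, hx, congrArg Prod.snd hy⟩
  · rintro ⟨x, hx, rfl⟩
    exact ⟨(θ, x), hx, Prod.ext (hF.fst_apply _) rfl⟩

end IsSkewRotation

lemma isCompact_coe_fiber {A : Set Cyl} (hA : IsClosed A) (θ : S1) :
    IsCompact (Subtype.val '' fiber A θ) :=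
  (hA.preimage (Continuous.prodMk_right θ)).isCompact.image continuous_subtype_val

lemma isLeast_mA {A : Set Cyl} (hA : IsClosed A) {θ : S1} (hne : (fiber A θ).Nonempty) :
    IsLeast (Subtype.val '' fiber A θ) (mA A θ) :=
  (isCompact_coe_fiber hA θ).isLeast_sInf (hne.image _)

lemma isGreatest_MA {A : Set Cyl} (hA : IsClosed A) {θ : S1} (hne : (fiber A θ).Nonempty) :
    IsGreatest (Subtype.val '' fiber A θ) (MA A θ) :=
  (isCompact_coe_fiber hA θ).isGreatest_sSup (hne.image _)

lemma coe_fiber_eq_Icc {A : Set Cyl} (hA : IsClosed A) {θ : S1} (hconn : IsConnected (fiber A θ)) :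
    Subtype.val '' fiber A θ = Icc (mA A θ) (MA A θ) :=
  eq_Icc_of_connected_compact (hconn.image _ continuous_subtype_val.continuousOn)
    (isCompact_coe_fiber hA θ)

lemma measurableSet_exists_mem_fiber {A : Set Cyl} (hA : IsClosed A) {C : Set ℝ} (hC : IsClosed C) :
    MeasurableSet {θ | ∃ x ∈ Subtype.val '' fiber A θ, x ∈ C} := by
  have hproj : {θ | ∃ x ∈ Subtype.val '' fiber A θ, x ∈ C} =
      Prod.fst '' (A ∩ {z | (z.2 : ℝ) ∈ C}) := by
    ext θ
    constructor
    · rintro ⟨_, ⟨x, hx, rfl⟩, hxC⟩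
      exact ⟨(θ, x), ⟨hx, hxC⟩, rfl⟩
    · rintro ⟨⟨θ, x⟩, ⟨hx, hxC⟩, rfl⟩
      exact ⟨x, ⟨x, hx, rfl⟩, hxC⟩
  have hclosed : IsClosed (A ∩ {z | (z.2 : ℝ) ∈ C}) :=
    hA.inter (hC.preimage (continuous_subtype_val.comp continuous_snd))
  exact hproj ▸ (hclosed.isCompact.image continuous_fst).isClosed.measurableSet

lemma measurable_mA {X : Type*} [MeasurableSpace X] {φ : X → S1} (hφ : Measurable φ) {A : Set Cyl}
    (hA : IsClosed A) (hne : ∀ x, (fiber A (φ x)).Nonempty) : Measurable fun x => mA A (φ x) := by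
  refine measurable_of_Iic fun c => ?_
  convert hφ (measurableSet_exists_mem_fiber hA (isClosed_Iic (a := c))) using 1
  ext x
  have hleast := isLeast_mA hA (hne x)
  exact ⟨fun hx => ⟨_, hleast.1, hx⟩, fun ⟨y, hy, hyc⟩ => (hleast.2 hy).trans hyc⟩

lemma measurable_MA {X : Type*} [MeasurableSpace X] {φ : X → S1} (hφ : Measurable φ) {A : Set Cyl}
    (hA : IsClosed A) (hne : ∀ x, (fiber A (φ x)).Nonempty) : Measurable fun x => MA A (φ x) := by
  refine measurable_of_Ici fun c => ?_
  convert hφ (measurableSet_exists_mem_fiber hA (isClosed_Ici (a := c))) using 1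
  ext x
  have hgreatest := isGreatest_MA hA (hne x)
  exact ⟨fun hx => ⟨_, hgreatest.1, hx⟩, fun ⟨y, hy, hyc⟩ => le_trans hyc (hgreatest.2 hy)⟩

lemma IsSkewRotation.isConnected_fiber_image {F : Cyl → Cyl} {w : S1} {H : Set S1} {A : Set Cyl}
    (hF : IsSkewRotation F w) (hH : IsInvariantResidual w H)
    (hA : ∀ θ : H, IsConnected (fiber A θ)) (θ : H) : IsConnected (fiber (F '' A) θ) := by
  obtain ⟨θ, rfl⟩ := hH.surjective_rotate θ
  have hcont : Continuous fun x => (F ((θ : S1), x)).2 :=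
    (hF.continuous.comp (Continuous.prodMk_right (θ : S1))).snd
  exact (hF.fiber_image A θ).symm ▸ (hA θ).image _ hcont.continuousOn

namespace IsPeriodicStripOrbit

variable {F : Cyl → Cyl} {p : ℕ} {B : Set Cyl}

lemma periodic_image (h : IsPeriodicStripOrbit F p B) :
    Function.Periodic (fun i => F^[i] '' B) p := fun i => by
  simp only [Function.iterate_add, image_comp, h.2.1]

lemma stripOrdered (h : IsPeriodicStripOrbit F p B) (hp : p ≠ 0) {i j : ℕ}
    (hij : ¬i ≡ j [MOD p]) : StripOrdered (F^[i] '' B) (F^[j] '' B) := by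
  have hmod : ∀ n, n % p < p := fun n => Nat.mod_lt n (Nat.pos_of_ne_zero hp)
  have hper : ∀ n, F^[n % p] '' B = F^[n] '' B := h.periodic_image.map_mod_nat
  rw [← hper i, ← hper j]
  rcases Nat.lt_or_gt_of_ne hij with hlt | hlt
  · exact (h.2.2 _ _ hlt (hmod j)).2
  · exact (h.2.2 _ _ hlt (hmod i)).2.symm

lemma exists_isInvariantResidual (h : IsPeriodicStripOrbit F p B) (w : S1) :
    ∃ H, IsInvariantResidual w H ∧ (∀ θ : H, IsConnected (fiber B θ)) ∧
      ∀ i j, stripLT (F^[i] '' B) (F^[j] '' B) →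
        ∀ θ : H, MA (F^[i] '' B) θ < mA (F^[j] '' B) θ := by
  obtain ⟨⟨-, -, G, hG, hIcc⟩, -⟩ := h
  have hlt : ∀ᶠ θ in residual S1, ∀ i j, stripLT (F^[i] '' B) (F^[j] '' B) →
      MA (F^[i] '' B) θ < mA (F^[j] '' B) θ :=
    eventually_countable_forall.2 fun i => eventually_countable_forall.2 fun j =>
      Filter.eventually_imp_distrib_left.2 fun ⟨G, hG, hlt⟩ => Filter.mem_of_superset hG hlt
  obtain ⟨H, hsub, hH⟩ := exists_isInvariantResidual_subset (Filter.inter_mem hG hlt) w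
  refine ⟨H, hH, fun θ => ?_, fun i j hij θ => (hsub θ.2).2 i j hij⟩
  obtain ⟨a, b, hab, hfib⟩ := hIcc θ (hsub θ.2).1
  exact hfib ▸ isConnected_Icc hab

lemma exists_isIntervalOrbit {w : S1} (h : IsPeriodicStripOrbit F p B) (hF : IsSkewRotation F w)
    (hp : p ≠ 0) : ∃ H, ∃ hH : IsInvariantResidual w H, ∃ A,
      IsIntervalOrbit hH.rotate (fun θ => fiberMap F θ) p A := by
  obtain ⟨H, hH, hconn₀, hlt⟩ := h.exists_isInvariantResidual w
  have hclosed : ∀ i, IsClosed (F^[i] '' B) := fun i =>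
    (h.1.1.isCompact.image (hF.continuous.iterate i)).isClosed
  have hsucc : ∀ i, F^[i + 1] '' B = F '' (F^[i] '' B) := fun i => by
    rw [Function.iterate_succ', image_comp]
  have hconn : ∀ i, ∀ θ : H, IsConnected (fiber (F^[i] '' B) θ) := fun i => by
    induction i with
    | zero => simpa only [Function.iterate_zero, image_id] using hconn₀
    | succ i ih => exact hsucc i ▸ hF.isConnected_fiber_image hH ih
  have hIcc : ∀ i, ∀ θ : H, Subtype.val '' fiber (F^[i] '' B) θ =
      Icc (mA (F^[i] '' B) θ) (MA (F^[i] '' B) θ) := fun i θ =>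
    coe_fiber_eq_Icc (hclosed i) (hconn i θ)
  refine ⟨H, hH, fun i θ => (mA (F^[i] '' B) θ, MA (F^[i] '' B) θ), hF.caratheodorySkew hH,
    fun i => ?_, fun i => ?_, fun i θ => ?_, fun i θ => ?_, fun i j hij => ?_⟩
  · have hne : ∀ θ : H, (fiber (F^[i] '' B) θ).Nonempty := fun θ => (hconn i θ).nonempty
    exact (measurable_mA measurable_subtype_coe (hclosed i) hne).prodMk
      (measurable_MA measurable_subtype_coe (hclosed i) hne)
  · have hper : F^[i + p] '' B = F^[i] '' B := h.periodic_image i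
    simp only [hper]
  · exact nonempty_Icc.1 (hIcc i θ ▸ (hconn i θ).nonempty.image _)
  · have hfib : fiber (F^[i + 1] '' B) (hH.rotate θ) =
        (fun x => (F ((θ : S1), x)).2) '' fiber (F^[i] '' B) θ :=
      hsucc i ▸ hF.fiber_image _ θ
    rw [← hIcc i θ, ← hIcc (i + 1) (hH.rotate θ), hfib, image_image, image_image]
    simp only [fiberMap_coe]
  · exact (h.stripOrdered hp hij).imp (hlt i j) (hlt j i)

end IsPeriodicStripOrbit

lemma IsIntervalOrbit.comp {X Y : Type*} [MeasurableSpace X] [MeasurableSpace Y] {R : X → X}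
    {R' : Y → Y} {φ : Y → X} {g : X → ℝ → ℝ} {p : ℕ} {A : ℕ → X → ℝ × ℝ}
    (h : IsIntervalOrbit R g p A) (hR' : Measurable R') (hφ : Measurable φ)
    (hsemi : Function.Semiconj φ R' R) :
    IsIntervalOrbit R' (fun y => g (φ y)) p fun i y => A i (φ y) where
  measurable_base := hR'
  measurable_uncurry := h.measurable_uncurry.comp (hφ.prodMap measurable_id)
  continuous y := h.continuous (φ y)
  measurable i := (h.measurable i).comp hφ
  periodic i := by simp only [h.periodic i]
  le i y := h.le i (φ y)
  image i y := by simpa only [hsemi y] using h.image i (φ y)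
  ordered i j hij := (h.ordered i j hij).imp (fun hlt y => hlt (φ y)) fun hlt y => hlt (φ y)

lemma IsIntervalOrbit.Icc_subset {X : Type*} [MeasurableSpace X] {R : X → X} {g : X → ℝ → ℝ}
    {p : ℕ} {A : ℕ → X → ℝ × ℝ} (h : IsIntervalOrbit R g p A) (hp : p ≠ 0)
    (hR : Function.Surjective R) {s : Set ℝ} (hg : ∀ θ x, g θ x ∈ s) (i : ℕ) (θ : X) :
    Icc (A i θ).1 (A i θ).2 ⊆ s := by
  obtain ⟨n, hn⟩ := Nat.exists_eq_succ_of_ne_zero (show i + p ≠ 0 by omega)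
  obtain ⟨θ, rfl⟩ := hR θ
  rw [← h.periodic i, hn, Nat.succ_eq_add_one, ← h.image n θ]
  exact image_subset_iff.2 fun x _ => hg θ x

lemma IsIntervalOrbit.exists_continuous {w : S1} {H : Set S1} {hH : IsInvariantResidual w H}
    {g : S1 → ℝ → ℝ} {p : ℕ} {A : ℕ → H → ℝ × ℝ}
    (h : IsIntervalOrbit hH.rotate (fun θ => g θ) p A) :
    ∃ K, ∃ hK : IsInvariantResidual w K, ∃ A' : ℕ → K → ℝ × ℝ,
      IsIntervalOrbit hK.rotate (fun θ => g θ) p A' ∧ ∀ i, Continuous (A' i) := by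
  obtain ⟨a, ha, haA⟩ := (MeasurableEmbedding.subtype_coe hH.measurableSet).exists_measurable_extend
    (measurable_pi_lambda (fun θ i => A i θ) h.measurable) fun _ => ⟨0⟩
  obtain ⟨G, hG, hcont⟩ := exists_residual_continuousOn ha
  obtain ⟨K, hKsub, hK⟩ := exists_isInvariantResidual_subset (Filter.inter_mem hH.mem_residual hG) w
  have hKH : K ⊆ H := fun θ hθ => (hKsub hθ).1
  refine ⟨K, hK, fun i θ => A i (inclusion hKH θ),
    h.comp hK.measurable_rotate (measurable_inclusion hKH) fun _ => rfl, fun i => ?_⟩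
  have hcontK : Continuous (K.domRestrict a) := (hcont.mono fun θ hθ => (hKsub hθ).2).domRestrict
  refine ((continuous_apply i).comp hcontK).congr fun θ => ?_
  exact congrFun (congrFun haA (inclusion hKH θ)) i

/-- The closure in the cylinder of the part of it lying over `K` and between the endpoints of a
family of intervals. -/
def band {K : Set S1} (A : K → ℝ × ℝ) : Set Cyl :=
  closure (Prod.map Subtype.val id '' {z : K × II | (z.2 : ℝ) ∈ Icc (A z.1).1 (A z.1).2})

section Band

variable {K : Set S1} {A : K → ℝ × ℝ}

lemma isClosed_band (A : K → ℝ × ℝ) : IsClosed (band A) := isClosed_closure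

lemma fiber_band (hA : Continuous A) (θ : K) :
    fiber (band A) θ = Subtype.val ⁻¹' Icc (A θ).1 (A θ).2 := by
  have hclosed : IsClosed {z : K × II | (z.2 : ℝ) ∈ Icc (A z.1).1 (A z.1).2} := by
    have hsnd : Continuous fun z : K × II => (z.2 : ℝ) := continuous_subtype_val.comp continuous_snd
    exact (isClosed_le (hA.comp continuous_fst).fst hsnd).inter
      (isClosed_le hsnd (hA.comp continuous_fst).snd)
  have hind : Topology.IsInducing (Prod.map Subtype.val id : K × II → Cyl) :=
    .prodMap .subtypeVal .id
  ext x
  exact (Set.ext_iff.1 ((hind.closure_eq_preimage_closure_image _).symm.trans hclosed.closure_eq)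
    (θ, x))

lemma coe_fiber_band (hA : Continuous A) (hIcc : ∀ θ, Icc (A θ).1 (A θ).2 ⊆ Icc 0 1) (θ : K) :
    Subtype.val '' fiber (band A) θ = Icc (A θ).1 (A θ).2 := by
  rw [fiber_band hA, Subtype.image_preimage_coe, inter_eq_right.2 (hIcc θ)]

lemma mA_band (hA : Continuous A) (hIcc : ∀ θ, Icc (A θ).1 (A θ).2 ⊆ Icc 0 1) {θ : K}
    (hle : (A θ).1 ≤ (A θ).2) : mA (band A) θ = (A θ).1 := by
  rw [mA, coe_fiber_band hA hIcc, csInf_Icc hle]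

lemma MA_band (hA : Continuous A) (hIcc : ∀ θ, Icc (A θ).1 (A θ).2 ⊆ Icc 0 1) {θ : K}
    (hle : (A θ).1 ≤ (A θ).2) : MA (band A) θ = (A θ).2 := by
  rw [MA, coe_fiber_band hA hIcc, csSup_Icc hle]

lemma isStrip_band (hK : K ∈ residual S1) (hA : Continuous A)
    (hIcc : ∀ θ, Icc (A θ).1 (A θ).2 ⊆ Icc 0 1) (hle : ∀ θ, (A θ).1 ≤ (A θ).2) :
    IsStrip (band A) := by
  have hfiber : ∀ θ : K, ∃ a b : II, a ≤ b ∧ fiber (band A) θ = Icc a b := fun θ =>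
    ⟨⟨_, hIcc θ (left_mem_Icc.2 (hle θ))⟩, ⟨_, hIcc θ (right_mem_Icc.2 (hle θ))⟩, hle θ,
      fiber_band hA θ⟩
  refine ⟨isClosed_band A, fun θ => ?_, K, hK, fun θ hθ => hfiber ⟨θ, hθ⟩⟩
  have hclosed : IsClosed (Prod.fst '' band A) :=
    ((isClosed_band A).isCompact.image continuous_fst).isClosed
  have hsub : K ⊆ Prod.fst '' band A := fun θ hθ => by
    obtain ⟨a, b, hab, hfib⟩ := hfiber ⟨θ, hθ⟩
    exact ⟨(θ, a), hfib.ge (left_mem_Icc.2 hab), rfl⟩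
  obtain ⟨⟨θ, x⟩, hx, rfl⟩ := hclosed.closure_subset_iff.2 hsub (dense_of_mem_residual hK θ)
  exact ⟨x, hx⟩

lemma stripLT_band {A' : K → ℝ × ℝ} (hK : K ∈ residual S1) (hA : Continuous A)
    (hA' : Continuous A') (hIcc : ∀ θ, Icc (A θ).1 (A θ).2 ⊆ Icc 0 1)
    (hIcc' : ∀ θ, Icc (A' θ).1 (A' θ).2 ⊆ Icc 0 1) (hle : ∀ θ, (A θ).1 ≤ (A θ).2)
    (hle' : ∀ θ, (A' θ).1 ≤ (A' θ).2) (hlt : ∀ θ, (A θ).2 < (A' θ).1) :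
    stripLT (band A) (band A') :=
  ⟨K, hK, fun θ hθ => (MA_band hA hIcc (hle ⟨θ, hθ⟩)).trans_lt
    ((hlt _).trans_eq (mA_band hA' hIcc' (hle' ⟨θ, hθ⟩)).symm)⟩

lemma IsSkewRotation.image_band {F : Cyl → Cyl} {w : S1} {A' : K → ℝ × ℝ}
    (hF : IsSkewRotation F w) (hK : IsInvariantResidual w K)
    (hIcc : ∀ θ, Icc (A θ).1 (A θ).2 ⊆ Icc 0 1)
    (himage : ∀ θ : K, fiberMap F θ '' Icc (A θ).1 (A θ).2 =
      Icc (A' (hK.rotate θ)).1 (A' (hK.rotate θ)).2) : F '' band A = band A' := by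
  rw [band, band, ← hF.continuous.isClosedMap.closure_image_eq_of_continuous hF.continuous]
  congr 1
  ext ⟨θ', y⟩
  constructor
  · rintro ⟨_, ⟨⟨θ, x⟩, hx, rfl⟩, hy⟩
    obtain rfl : θ' = θ + w := (congrArg Prod.fst hy).symm.trans (hF.fst_apply _)
    have hy' : fiberMap F θ x = y := (fiberMap_coe F θ x).trans (congrArg (fun z => (z.2 : ℝ)) hy)
    exact ⟨(hK.rotate θ, y), (himage θ).subset ⟨x, hx, hy'⟩, rfl⟩
  · rintro ⟨⟨θ, y⟩, hy, hθy⟩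
    obtain ⟨rfl, rfl⟩ := Prod.ext_iff.1 hθy
    obtain ⟨θ, rfl⟩ := hK.surjective_rotate θ
    obtain ⟨x, hx, hxy⟩ := (himage θ).superset hy
    lift x to II using hIcc θ hx
    exact ⟨_, ⟨(θ, x), hx, rfl⟩,
      Prod.ext (hF.fst_apply _) (Subtype.ext ((fiberMap_coe F θ x).symm.trans hxy))⟩

end Band

lemma IsSkewRotation.disjoint_of_disjoint_fiber {F : Cyl → Cyl} {w : S1} {C D : Set Cyl}
    (hF : IsSkewRotation F w) (hw : DenseRange fun n : ℕ => n • w) (hC : IsClosed C)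
    (hD : IsClosed D) (hFC : MapsTo F C C) (hFD : MapsTo F D D) {θ : S1}
    (hθ : Disjoint (fiber C θ) (fiber D θ)) : Disjoint C D := by
  by_contra hCD
  have huniv : Prod.fst '' (C ∩ D) = univ := by
    refine eq_univ_of_isClosed_of_forall_add_mem hw
      ((hC.inter hD).isCompact.image continuous_fst).isClosed
      ((not_disjoint_iff_nonempty_inter.1 hCD).image _) ?_
    rintro _ ⟨z, ⟨hzC, hzD⟩, rfl⟩
    exact ⟨F z, ⟨hFC hzC, hFD hzD⟩, hF.fst_apply z⟩
  obtain ⟨⟨_, x⟩, ⟨hxC, hxD⟩, rfl⟩ := huniv.ge (mem_univ θ)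
  exact disjoint_left.1 hθ hxC hxD

lemma denseRange_nsmul_coe {ω : ℝ} (hω : Irrational ω) :
    DenseRange fun n : ℕ => n • (ω : S1) :=
  denseRange_zsmul_iff_nsmul.1 (AddCircle.denseRange_zsmul_coe_iff.2 (by rwa [div_one]))

lemma IsIntervalOrbit.exists_isPeriodicStripOrbit {F : Cyl → Cyl} {ω : ℝ} {H : Set S1} {p : ℕ}
    {A : ℕ → H → ℝ × ℝ} {hH : IsInvariantResidual (ω : S1) H}
    (h : IsIntervalOrbit hH.rotate (fun θ => fiberMap F θ) p A) (hF : IsSkewRotation F ω)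
    (hω : Irrational ω) (hp : p ≠ 0) : ∃ C, IsPeriodicStripOrbit F p C := by
  obtain ⟨K, hK, A, h, hA⟩ := h.exists_continuous
  have hIcc : ∀ i θ, Icc (A i θ).1 (A i θ).2 ⊆ Icc 0 1 :=
    h.Icc_subset hp hK.surjective_rotate fun θ => fiberMap_mem F θ
  have hiter : ∀ n i, F^[n] '' band (A i) = band (A (i + n)) := fun n i => by
    induction n with
    | zero => exact image_id _
    | succ n ih =>
      rw [Function.iterate_succ', image_comp, ih, ← add_assoc]
      exact hF.image_band hK (hIcc _) (h.image _)
  have hmaps : ∀ i, MapsTo F^[p] (band (A i)) (band (A i)) := fun i =>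
    mapsTo_iff_image_subset.2 (by rw [hiter, h.periodic])
  have hdense : DenseRange fun n : ℕ => n • p • (ω : S1) := by
    have hpω : p • (ω : S1) = ((p * ω : ℝ) : S1) := by rw [← nsmul_eq_mul, AddCircle.coe_nsmul]
    exact hpω ▸ denseRange_nsmul_coe (hω.natCast_mul hp)
  obtain ⟨θ⟩ := hK.nonempty
  have hdisj : ∀ i j, ¬i ≡ j [MOD p] → Disjoint (band (A i)) (band (A j)) := fun i j hij => by
    refine (hF.iterate p).disjoint_of_disjoint_fiber hdense (isClosed_band _) (isClosed_band _)
      (hmaps i) (hmaps j) (θ := θ) ?_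
    rw [fiber_band (hA i), fiber_band (hA j)]
    refine Disjoint.preimage _ (disjoint_left.2 fun x hxi hxj => ?_)
    rcases h.ordered i j hij with hlt | hlt <;> linarith [hlt θ, hxi.1, hxi.2, hxj.1, hxj.2]
  have hlt : ∀ i j, (∀ θ, (A i θ).2 < (A j θ).1) → stripLT (band (A i)) (band (A j)) := fun i j =>
    stripLT_band hK.mem_residual (hA i) (hA j) (hIcc i) (hIcc j) (h.le i) (h.le j)
  refine ⟨band (A 0), isStrip_band hK.mem_residual (hA 0) (hIcc 0) (h.le 0),
    by rw [hiter, h.periodic], fun i j hij hj => ?_⟩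
  rw [hiter, hiter, zero_add, zero_add]
  have hmod : ¬i ≡ j [MOD p] := fun hmod => hij.ne (hmod.eq_of_lt_of_lt (hij.trans hj) hj)
  exact ⟨hdisj i j hmod, (h.ordered i j hmod).imp (hlt i j) (hlt j i)⟩

end

/-- Sharkovskiĭ theorem for `S(Ω)`. -/
theorem sharkovskii_for_SOmega (F : Cyl → Cyl) (hF : IsQPF F)
    (p : ℕ) (B : Set Cyl) (hB : IsPeriodicStripOrbit F p B)
    (q : ℕ) (hpq : SharkGT p q) :
    ∃ C : Set Cyl, IsPeriodicStripOrbit F q C := by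
  obtain ⟨hcont, ω, hω, hfst⟩ := hF
  have hskew : IsSkewRotation F ω := ⟨hcont, hfst⟩
  have hcases := hpq.cases
  obtain ⟨H, hH, A, hA⟩ := hB.exists_isIntervalOrbit hskew (by omega)
  have := hH.nonempty
  obtain ⟨A', hA'⟩ := hA.exists_of_sharkGT hpq
  exact hA'.exists_isPeriodicStripOrbit hskew hω (by omega)
end

section
/- If a map F ∈ S(Ω) exhibits the strips pattern τ, then h(F) ≥ h(F_τ) = h(f_τ), where f_τ is a τ-linear interval map and F_τ is the quasiperiodic τ-linear map. -/
open Dynamics Set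

/-!
Both entropies are compared with the growth rate of the number of paths in the Markov graph of `τ`.

Each lap of `f_τ` meets every preimage of a finite `ε`-grid at most once along a given path, so the
points at which an iterate of `f_τ` crosses the grid are at most polynomially more numerous than
the paths, and together they form a dynamical cover.

Conversely, over the orbit of a generic base point `θ` the strips meet the fibres in compact sets in
their spatial order, and the gaps between consecutive ones are carried across each other by `F` at
least as the arrows prescribe; hence every path is followed by a point over `θ`. The points
following a given word may form an interval too thin for a fixed resolution, which is why paths are
cut into blocks of length `m`: by uniform continuity of `F^m` the intervals belonging to single
blocks have length at least some `η > 0`, so a point of an `η`-cover determines the block up to its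
position relative to the interval. This loses a factor `4` per block, that is `log 4 / m` in the
growth rate, and `m` is arbitrary.

The base rotation is an isometry of a compact space and contributes no entropy.
-/

open Filter Topology Uniformity ExpGrowth
open scoped ENNReal

section ExponentialGrowth

theorem expGrowthSup_natCast : expGrowthSup (fun n ↦ (n : ℝ≥0∞)) = 0 := by
  refine le_antisymm ?_ (Nat.mono_cast.expGrowthSup_nonneg fun h ↦ ?_)
  swap
  · exact one_ne_zero (Nat.cast_one (R := ℝ≥0∞) ▸ congrFun h 1)
  refine EReal.le_of_forall_lt_iff_le.mp fun c hc ↦ ?_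
  rw [EReal.coe_pos] at hc
  rw [← expGrowthSup_exp (a := (c : EReal))]
  refine expGrowthSup_of_eventually_ge (ENNReal.ofReal_pos.mpr hc).ne' (.of_forall fun n ↦ ?_)
  calc ENNReal.ofReal c * n = ENNReal.ofReal (c * n) := by
        rw [ENNReal.ofReal_mul hc.le, ENNReal.ofReal_natCast]
    _ ≤ ENNReal.ofReal (Real.exp (c * n)) :=
        ENNReal.ofReal_le_ofReal (by linarith [Real.add_one_le_exp (c * n)])
    _ = EReal.exp (c * n) := by rw [← EReal.exp_coe, EReal.coe_mul, EReal.coe_natCast]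

theorem le_of_forall_natCast_mul_le {g h : EReal} {c : ℝ}
    (hgh : ∀ m : ℕ, m ≠ 0 → m * g ≤ c + m * h) : g ≤ h := by
  have h_one := hgh 1 one_ne_zero
  rw [Nat.cast_one, one_mul, one_mul] at h_one
  induction h with
  | top => exact le_top
  | bot => simpa using h_one
  | coe h =>
    induction g with
    | bot => exact bot_le
    | top => simp only [← EReal.coe_add, top_le_iff, EReal.coe_ne_top] at h_one
    | coe g =>
      rw [EReal.coe_le_coe_iff]
      by_contra! hlt
      obtain ⟨m, hm⟩ := exists_lt_nsmul (sub_pos.mpr hlt) (max c 0)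
      have hm0 : m ≠ 0 := by
        rintro rfl
        exact absurd hm (by simp)
      have hle : m * g ≤ c + m * h := by exact_mod_cast hgh m hm0
      rw [nsmul_eq_mul, max_lt_iff] at hm
      linarith

end ExponentialGrowth

section PathGrowth

variable {V : Type*} {E : V → V → Prop}

/-- Infinite paths in the directed graph with arrow relation `E`. -/
def IsPath (E : V → V → Prop) (v : ℕ → V) : Prop := ∀ i, E (v i) (v (i + 1))

/-- The words of length `L` that label paths in the directed graph `E`. Only words that begin an
infinite path are admitted, so that they can be prolonged at will. -/
def pathWords (E : V → V → Prop) (L : ℕ) : Set (Fin L → V) :=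
  {w | ∃ v, IsPath E v ∧ ∀ i, w i = v i}

/-- The exponential growth rate of the number of words of a directed graph; for a finite graph in
which every vertex has an outgoing arrow this is the logarithm of the spectral radius of the
adjacency matrix. -/
noncomputable def pathGrowth (E : V → V → Prop) : EReal :=
  expGrowthSup fun L ↦ ((pathWords E L).ncard : ℝ≥0∞)

theorem IsPath.shift {v : ℕ → V} (hv : IsPath E v) (j : ℕ) : IsPath E fun i ↦ v (j + i) :=
  fun i ↦ hv (j + i)

theorem monotone_ncard_pathWords [Finite V] (E : V → V → Prop) :
    Monotone fun L ↦ (pathWords E L).ncard := by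
  intro L L' hL
  have hsub : pathWords E L ⊆ (fun w i ↦ w (Fin.castLE hL i)) '' pathWords E L' := by
    rintro w ⟨v, hv, hw⟩
    exact ⟨fun i ↦ v i, ⟨v, hv, fun _ ↦ rfl⟩, funext fun i ↦ (hw i).symm⟩
  exact (ncard_le_ncard hsub).trans (ncard_image_le (toFinite _))

theorem exists_isPath_iterate_mem {X : Type*} {f : X → X} {C : V → Set X}
    (hC : ∀ k, ∀ x ∈ C k, ∃ l, E k l ∧ f x ∈ C l) {k : V} {x : X} (hx : x ∈ C k) :
    ∃ v, IsPath E v ∧ ∀ i, f^[i] x ∈ C (v i) := by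
  choose! next hE hnext using hC
  let step (q : V × X) : V × X := (next q.1 q.2, f q.2)
  have hsnd (i : ℕ) : (step^[i] (k, x)).2 = f^[i] x :=
    Function.Semiconj.iterate_right (f := Prod.snd) (ga := step) (gb := f) (fun _ ↦ rfl) i (k, x)
  have hmem (i : ℕ) : (step^[i] (k, x)).2 ∈ C (step^[i] (k, x)).1 := by
    induction i with
    | zero => exact hx
    | succ i ih =>
      rw [Function.iterate_succ_apply']
      exact hnext _ _ ih
  refine ⟨fun i ↦ (step^[i] (k, x)).1, fun i ↦ ?_, fun i ↦ hsnd i ▸ hmem i⟩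
  simp only [Function.iterate_succ_apply']
  exact hE _ _ (hmem i)

theorem injOn_iterate_itinerary {X : Type*} {f : X → X} {C : V → Set X}
    (hinj : ∀ k, InjOn f (C k)) (v : ℕ → V) (j : ℕ) :
    InjOn f^[j] {x | ∀ i < j, f^[i] x ∈ C (v i)} := by
  induction j with
  | zero => exact injOn_id _
  | succ j ih =>
    intro x hx y hy hxy
    rw [Function.iterate_succ_apply', Function.iterate_succ_apply'] at hxy
    exact ih (fun i hi ↦ hx i (hi.trans j.lt_succ_self)) (fun i hi ↦ hy i (hi.trans j.lt_succ_self))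
      (hinj _ (hx j j.lt_succ_self) (hy j j.lt_succ_self) hxy)

theorem finite_ncard_setOf_exists_iterate_mem_le [Finite V] {X : Type*} {f : X → X} {C : V → Set X}
    (hC : ∀ k, ∀ x ∈ C k, ∃ l, E k l ∧ f x ∈ C l) (hinj : ∀ k, InjOn f (C k)) {Q : Set X}
    (hQ : Q.Finite) (K : ℕ) :
    {x ∈ ⋃ k, C k | ∃ j < K, f^[j] x ∈ Q}.Finite ∧
      {x ∈ ⋃ k, C k | ∃ j < K, f^[j] x ∈ Q}.ncard ≤ K * (Q.ncard * (pathWords E K).ncard) := by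
  have hA : ∀ x ∈ {x ∈ ⋃ k, C k | ∃ j < K, f^[j] x ∈ Q}, ∃ j v, j < K ∧ f^[j] x ∈ Q ∧
      IsPath E v ∧ ∀ i, f^[i] x ∈ C (v i) := by
    rintro x ⟨hx, j, hjK, hjQ⟩
    obtain ⟨k, hk⟩ := mem_iUnion.mp hx
    obtain ⟨v, hv, hxv⟩ := exists_isPath_iterate_mem hC hk
    exact ⟨j, v, hjK, hjQ, hv, hxv⟩
  cases isEmpty_or_nonempty V
  · simp
  choose! j v hjK hjQ hv hxv using hA
  let φ (x : X) : ℕ × X × (Fin K → V) := (j x, f^[j x] x, fun i ↦ v x i)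
  have hmaps : MapsTo φ {x ∈ ⋃ k, C k | ∃ j < K, f^[j] x ∈ Q} (Iio K ×ˢ Q ×ˢ pathWords E K) :=
    fun x hx ↦ ⟨hjK x hx, hjQ x hx, v x, hv x hx, fun _ ↦ rfl⟩
  have hφ : InjOn φ {x ∈ ⋃ k, C k | ∃ j < K, f^[j] x ∈ Q} := by
    intro x hx y hy hxy
    obtain ⟨hj, hq, hw⟩ : j x = j y ∧ f^[j x] x = f^[j y] y ∧ _ := by
      simpa only [φ, Prod.mk.injEq] using hxy
    refine injOn_iterate_itinerary hinj (v x) (j x) (fun i _ ↦ hxv x hx i) (fun i hi ↦ ?_) ?_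
    · rw [congrFun hw ⟨i, hi.trans (hjK x hx)⟩]
      exact hxv y hy i
    · rw [hq, hj]
  have hfin : (Iio K ×ˢ Q ×ˢ pathWords E K).Finite :=
    (finite_Iio K).prod (hQ.prod (toFinite _))
  refine ⟨hfin.of_injOn hmaps hφ, (ncard_le_ncard_of_injOn φ hmaps hφ hfin).trans_eq ?_⟩
  rw [ncard_prod, ncard_prod, ← Finset.coe_Iio, ncard_coe_finset, Nat.card_Iio]

end PathGrowth

section CoverEntropy

variable {X Y : Type*} [PseudoMetricSpace X] [PseudoMetricSpace Y]

theorem isDynCoverOf_univ_dist_lt_iff {T : X → X} {ε : ℝ} {n : ℕ} {s : Set X} :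
    IsDynCoverOf T univ {p | dist p.1 p.2 < ε} n s ↔
      ∀ x, ∃ z ∈ s, ∀ j < n, dist (T^[j] x) (T^[j] z) < ε := by
  simp only [IsDynCoverOf, SetRel.IsCover, mem_univ, mem_dynEntourage, forall_true_left,
    mem_ofPred_eq]

theorem isometry_iterate {R : X → X} (hR : Isometry R) (j : ℕ) : Isometry R^[j] := by
  induction j with
  | zero => exact isometry_id
  | succ j ih => exact ih.comp hR

theorem coverMincard_prodMap_isometry_le {R : X → X} (hR : Isometry R) (f : Y → Y) {ε : ℝ}
    {Q : Finset X} (hQ : ∀ x, ∃ q ∈ Q, dist x q < ε) (n : ℕ) :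
    coverMincard (Prod.map R f) univ {p | dist p.1 p.2 < ε} n ≤
      Q.card * coverMincard f univ {p | dist p.1 p.2 < ε} n := by
  rcases isEmpty_or_nonempty X with hX | ⟨⟨x₀⟩⟩
  · rw [(coverMincard_eq_zero_iff _ _ _ _).mpr (univ_eq_empty_iff.mpr inferInstance)]
    exact zero_le
  rcases eq_top_or_lt_top (coverMincard f univ {p | dist p.1 p.2 < ε} n) with htop | hfin
  · obtain ⟨q, hq, -⟩ := hQ x₀
    rw [htop, ENat.mul_top (by exact_mod_cast Finset.card_ne_zero_of_mem hq)]
    exact le_top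
  obtain ⟨s, hs, hcard⟩ := (coverMincard_finite_iff _ _ _ _).mp hfin
  rw [isDynCoverOf_univ_dist_lt_iff] at hs
  have hcover : IsDynCoverOf (Prod.map R f) univ {p | dist p.1 p.2 < ε} n ↑(Q ×ˢ s) := by
    refine isDynCoverOf_univ_dist_lt_iff.mpr fun ⟨x, y⟩ ↦ ?_
    obtain ⟨q, hq, hxq⟩ := hQ x
    obtain ⟨z, hz, hyz⟩ := hs y
    refine ⟨(q, z), Finset.mk_mem_product hq hz, fun j hj ↦ ?_⟩
    rw [Prod.map_iterate]
    exact max_lt (((isometry_iterate hR j).dist_eq x q).trans_lt hxq) (hyz j hj)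
  calc coverMincard (Prod.map R f) univ {p | dist p.1 p.2 < ε} n ≤ (Q ×ˢ s).card :=
        hcover.coverMincard_le_card
    _ = Q.card * coverMincard f univ {p | dist p.1 p.2 < ε} n := by
        rw [Finset.card_product, Nat.cast_mul, hcard]

theorem coverEntropy_prodMap_isometry [CompactSpace X] [Nonempty X] {R : X → X} (hR : Isometry R)
    (f : Y → Y) : coverEntropy (Prod.map R f) univ = coverEntropy f univ := by
  apply le_antisymm
  · rw [coverEntropy_eq_iSup_basis Metric.uniformity_basis_dist]
    refine iSup₂_le fun ε hε ↦ le_trans ?_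
      (coverEntropyEntourage_le_coverEntropy f univ (Metric.dist_mem_uniformity hε))
    obtain ⟨Q, -, hQfin, hQ⟩ := finite_cover_balls_of_compact (isCompact_univ (X := X)) hε
    have hQ' (x : X) : ∃ q ∈ hQfin.toFinset, dist x q < ε := by
      simpa using hQ (mem_univ x)
    refine expGrowthSup_le_of_eventually_le (ENNReal.natCast_ne_top hQfin.toFinset.card)
      (.of_forall fun n ↦ ?_)
    exact_mod_cast coverMincard_prodMap_isometry_le hR f hQ' n
  · have hfactor := coverEntropy_image_le_of_uniformContinuous (S := Prod.map R f) (T := f)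
      (φ := Prod.snd) (fun _ ↦ rfl) uniformContinuous_snd univ
    rwa [image_univ_of_surjective Prod.snd_surjective] at hfactor

end CoverEntropy

section UpperBound

theorem exists_finset_mem_Ioo_of_le_dist {ε : ℝ} (hε : 0 < ε) :
    ∃ Q : Finset II, ∀ x y : II, ε ≤ dist x y → ∃ q ∈ Q, q ∈ Ioo (x ⊓ y) (x ⊔ y) := by
  obtain ⟨Q, -, hQfin, hQ⟩ :=
    finite_cover_balls_of_compact (isCompact_univ (X := II)) (half_pos hε)
  refine ⟨hQfin.toFinset, fun x y hdist ↦ ?_⟩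
  wlog hxy : x ≤ y generalizing x y
  · rw [inf_comm, sup_comm]
    exact this y x (dist_comm x y ▸ hdist) (le_of_not_ge hxy)
  rw [inf_eq_left.mpr hxy, sup_eq_right.mpr hxy]
  have hle : (x : ℝ) ≤ y := hxy
  have hmid : ((x : ℝ) + y) / 2 ∈ Icc (0 : ℝ) 1 := by
    constructor <;> linarith [x.2.1, x.2.2, y.2.1, y.2.2]
  obtain ⟨q, hqQ, hq⟩ := mem_iUnion₂.mp (hQ (mem_univ ⟨_, hmid⟩))
  rw [Metric.mem_ball, Subtype.dist_eq, Real.dist_eq, abs_lt] at hq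
  rw [Subtype.dist_eq, dist_comm, Real.dist_eq, abs_of_nonneg (sub_nonneg.mpr hle)] at hdist
  refine ⟨q, hQfin.mem_toFinset.mpr hqQ, Subtype.coe_lt_coe.mp ?_, Subtype.coe_lt_coe.mp ?_⟩ <;>
    linarith

theorem exists_mem_Ioo_apply_eq {α β : Type*} [ConditionallyCompleteLinearOrder α]
    [TopologicalSpace α] [OrderTopology α] [DenselyOrdered α] [LinearOrder β] [TopologicalSpace β]
    [OrderClosedTopology β] {g : α → β} {a b : α} (hab : a ≤ b) (hg : ContinuousOn g (Icc a b))
    {q : β} (hq : q ∈ Ioo (g a ⊓ g b) (g a ⊔ g b)) : ∃ x ∈ Ioo a b, g x = q := by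
  rcases le_total (g a) (g b) with h | h
  · rw [inf_eq_left.mpr h, sup_eq_right.mpr h] at hq
    exact intermediate_value_Ioo hab hg hq
  · rw [inf_eq_right.mpr h, sup_eq_left.mpr h] at hq
    exact intermediate_value_Ioo' hab hg hq

theorem isDynCoverOf_cutPoints {f : II → II} (hf : Continuous f) {a b : II}
    (hfa : ∀ x ≤ a, f x = f a) (hfb : ∀ x, b ≤ x → f x = f b) {ε : ℝ} (hε : 0 < ε) {Q : Finset II}
    (hQ : ∀ x y : II, ε ≤ dist x y → ∃ q ∈ Q, q ∈ Ioo (x ⊓ y) (x ⊔ y)) {K : ℕ} {S : Finset II}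
    (hS : ∀ x ∈ Ioo a b, ∀ j < K, f^[j] x ∈ Q → x ∈ S) :
    IsDynCoverOf f univ {p | dist p.1 p.2 < ε} K ↑({0, a, b} ∪ Q ∪ S) := by
  -- The largest cut point `z ≤ x` shadows `x`: if an iterate separated them by `ε`, it would send a
  -- point strictly between them into `Q`, and that point would itself be a cut point.
  set C : Finset II := {0, a, b} ∪ Q ∪ S with hC
  obtain ⟨h0C, haC, hbC⟩ : 0 ∈ C ∧ a ∈ C ∧ b ∈ C := by simp [hC]
  refine isDynCoverOf_univ_dist_lt_iff.mpr fun x ↦ ?_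
  obtain ⟨z, hz, hzmax⟩ := {c ∈ C | c ≤ x}.exists_max_image id ⟨0, by simp [h0C]⟩
  obtain ⟨hzC, hzx⟩ := Finset.mem_filter.mp hz
  have hgap (c : II) (hc : c ∈ C) (hcx : c ≤ x) : c ≤ z :=
    hzmax c (Finset.mem_filter.mpr ⟨hc, hcx⟩)
  refine ⟨z, hzC, fun j hj ↦ ?_⟩
  by_contra! hfar
  obtain ⟨q, hqQ, hq⟩ := hQ _ _ (dist_comm (f^[j] x) _ ▸ hfar)
  obtain ⟨y, ⟨hzy, hyx⟩, rfl⟩ := exists_mem_Ioo_apply_eq hzx (hf.iterate j).continuousOn hq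
  rcases j with _ | j
  · exact hzy.not_ge (hgap y (by simp [hC, show y ∈ Q from hqQ]) hyx.le)
  have hne : f x ≠ f z := by
    intro heq
    rw [Function.iterate_succ_apply, Function.iterate_succ_apply, heq, dist_self] at hfar
    exact hfar.not_gt hε
  have hax : a < x := lt_of_not_ge fun hxa ↦ hne (by rw [hfa x hxa, hfa z (hzx.trans hxa)])
  have hzb : z < b := lt_of_not_ge fun hbz ↦ hne (by rw [hfb x (hbz.trans hzx), hfb z hbz])
  have hxb : x < b := lt_of_not_ge fun hbx ↦ hzb.not_ge (hgap b hbC hbx)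
  have hyS : y ∈ S := hS y ⟨(hgap a haC hax.le).trans_lt hzy, hyx.trans hxb⟩ (j + 1) hj hqQ
  exact hzy.not_ge (hgap y (Finset.mem_union_right _ hyS) hyx.le)

theorem coverEntropy_le_sup_pathGrowth {V : Type*} [Finite V] {E : V → V → Prop} {f : II → II}
    (hf : Continuous f) {a b : II} (hfa : ∀ x ≤ a, f x = f a) (hfb : ∀ x, b ≤ x → f x = f b)
    {C : V → Set II} (hC : ∀ k, ∀ x ∈ C k, ∃ l, E k l ∧ f x ∈ C l) (hinj : ∀ k, InjOn f (C k))
    (hab : Ioo a b ⊆ ⋃ k, C k) : coverEntropy f univ ≤ 0 ⊔ pathGrowth E := by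
  rw [coverEntropy_eq_iSup_basis Metric.uniformity_basis_dist]
  refine iSup₂_le fun ε hε ↦ ?_
  obtain ⟨Q, hQ⟩ := exists_finset_mem_Ioo_of_le_dist hε
  let bound (K : ℕ) : ℕ := 3 + Q.card + Q.card * (K * (pathWords E K).ncard)
  have hcard (K : ℕ) : coverMincard f univ {p | dist p.1 p.2 < ε} K ≤ bound K := by
    obtain ⟨hfin, hncard⟩ :=
      finite_ncard_setOf_exists_iterate_mem_le hC hinj Q.finite_toSet K
    rw [ncard_eq_toFinset_card _ hfin, ncard_coe_finset, mul_left_comm] at hncard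
    have hcover := isDynCoverOf_cutPoints hf hfa hfb hε hQ (S := hfin.toFinset)
      fun x hx j hj hjQ ↦ hfin.mem_toFinset.mpr ⟨hab hx, j, hj, hjQ⟩
    refine hcover.coverMincard_le_card.trans (Nat.cast_le.mpr ?_)
    refine (Finset.card_union_le _ _).trans (Nat.add_le_add ?_ hncard)
    exact (Finset.card_union_le _ _).trans (Nat.add_le_add_right Finset.card_le_three _)
  have hmul : expGrowthSup (fun K ↦ (K : ℝ≥0∞) * (pathWords E K).ncard) ≤ pathGrowth E := by
    refine (expGrowthSup_mul_le ?_ ?_).trans_eq ?_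
    · simp [expGrowthSup_natCast]
    · simp [expGrowthSup_natCast]
    · rw [expGrowthSup_natCast, zero_add, pathGrowth]
  calc coverEntropyEntourage f univ {p | dist p.1 p.2 < ε}
      ≤ expGrowthSup fun K ↦ (bound K : ℝ≥0∞) :=
        expGrowthSup_monotone fun K ↦
          (ENat.toENNReal_le.mpr (hcard K)).trans_eq (ENat.toENNReal_coe _)
    _ = expGrowthSup ((fun _ ↦ ((3 + Q.card : ℕ) : ℝ≥0∞)) +
          fun K ↦ (Q.card : ℝ≥0∞) * (K * (pathWords E K).ncard)) := by
        congr 1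
        ext K
        simp [bound]
    _ ≤ 0 ⊔ pathGrowth E := by
        rw [expGrowthSup_add, expGrowthSup_const (by simp) (ENNReal.natCast_ne_top _)]
        exact sup_le_sup_left ((expGrowthSup_le_of_eventually_le (ENNReal.natCast_ne_top _)
          (.of_forall fun _ ↦ le_rfl)).trans hmul) 0

end UpperBound

section MarkovGraph

theorem AffineOnIcc.injOn {f : II → II} {a b : II} (hf : AffineOnIcc f a b) (hab : f a ≠ f b) :
    InjOn f (Icc a b) := by
  intro x hx y hy hxy
  have hx' := hf x hx.1 hx.2
  rw [hxy, hf y hy.1 hy.2] at hx'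
  have hne : (f b : ℝ) - f a ≠ 0 := sub_ne_zero.mpr fun h ↦ hab (Subtype.ext h.symm)
  exact Subtype.ext (sub_left_injective (mul_right_cancel₀ hne hx').symm)

theorem AffineOnIcc.map_mem_uIcc {f : II → II} {a b x : II} (hf : AffineOnIcc f a b)
    (hx : x ∈ Icc a b) : f x ∈ uIcc (f a) (f b) := by
  rcases (hx.1.trans hx.2).eq_or_lt with rfl | hab
  · rw [le_antisymm hx.2 hx.1]
    exact left_mem_uIcc
  have hfx := hf x hx.1 hx.2
  have hax : (a : ℝ) ≤ x := hx.1
  have hxb : (x : ℝ) ≤ b := hx.2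
  have hab' : (a : ℝ) < b := hab
  rw [mem_uIcc]
  simp only [← Subtype.coe_le_coe]
  rcases le_total (f a : ℝ) (f b) with h | h
  · left
    constructor <;> nlinarith
  · right
    constructor <;> nlinarith

variable {n : ℕ}

/-- The intervals `J_k = [p k, p (k+1)]` cut out by consecutive points. -/
def basicInterval {α : Type*} [Preorder α] (p : Fin (n + 1) → α) (k : Fin n) : Set α :=
  Icc (p k.castSucc) (p k.succ)

/-- The arrows `J_k → J_l` of the (unsigned) Markov graph of a pattern `σ`, read off on the indices:
`[l, l+1]` lies between `σ k` and `σ (k+1)`. -/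
def MarkovArrow (σ : Fin (n + 1) → Fin (n + 1)) (k l : Fin n) : Prop :=
  Icc l.castSucc l.succ ⊆ uIcc (σ k.castSucc) (σ k.succ)

theorem exists_mem_basicInterval {α : Type*} [LinearOrder α] {p : Fin (n + 1) → α}
    {i i' : Fin (n + 1)} (hii' : i < i') {x : α} (hx : x ∈ Icc (p i) (p i')) :
    ∃ l, Icc l.castSucc l.succ ⊆ Icc i i' ∧ x ∈ basicInterval p l := by
  induction i' using Fin.induction with
  | zero => exact absurd hii' (Fin.not_lt_zero _)
  | succ l ih =>
    have hil : i ≤ l.castSucc := Fin.le_castSucc_iff.mpr hii'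
    rcases le_or_gt (p l.castSucc) x with hlx | hxl
    · exact ⟨l, Icc_subset_Icc_left hil, hlx, hx.2⟩
    · have hne : i ≠ l.castSucc := by
        rintro rfl
        exact hxl.not_ge hx.1
      obtain ⟨l', hl', hxl'⟩ := ih (lt_of_le_of_ne hil hne) ⟨hx.1, hxl.le⟩
      exact ⟨l', hl'.trans (Icc_subset_Icc_right Fin.castSucc_lt_succ.le), hxl'⟩

theorem exists_markovArrow_map_mem {σ : Fin (n + 1) → Fin (n + 1)} (hσ : σ.Injective) {f : II → II}
    {p : Fin (n + 1) → II} (hp : Monotone p) (hf : IsPLinear f p) (hpat : ∀ i, f (p i) = p (σ i))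
    (k : Fin n) (x : II) (hx : x ∈ basicInterval p k) :
    ∃ l, MarkovArrow σ k l ∧ f x ∈ basicInterval p l := by
  have hfx := (hf.2.1 k).map_mem_uIcc hx
  rw [hpat, hpat] at hfx
  simp only [MarkovArrow]
  rcases lt_or_gt_of_ne (hσ.ne (Fin.castSucc_lt_succ (i := k)).ne) with hlt | hlt
  · rw [uIcc_of_lt hlt]
    rw [uIcc_of_le (hp hlt.le)] at hfx
    exact exists_mem_basicInterval hlt hfx
  · rw [uIcc_of_gt hlt]
    rw [uIcc_of_ge (hp hlt.le)] at hfx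
    exact exists_mem_basicInterval hlt hfx

theorem injOn_basicInterval {σ : Fin (n + 1) → Fin (n + 1)} (hσ : σ.Injective) {f : II → II}
    {p : Fin (n + 1) → II} (hp : p.Injective) (hf : IsPLinear f p)
    (hpat : ∀ i, f (p i) = p (σ i)) (k : Fin n) : InjOn f (basicInterval p k) := by
  refine (hf.2.1 k).injOn ?_
  rw [hpat, hpat]
  exact hp.ne (hσ.ne Fin.castSucc_lt_succ.ne)

theorem Ioo_subset_iUnion_basicInterval {α : Type*} [LinearOrder α] (p : Fin (n + 1) → α) :
    Ioo (p 0) (p (Fin.last n)) ⊆ ⋃ k, basicInterval p k := by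
  intro x hx
  have hne : 0 ≠ Fin.last n := fun h ↦ (hx.1.trans hx.2).ne (congrArg p h)
  obtain ⟨l, -, hl⟩ := exists_mem_basicInterval (Fin.pos_of_ne_zero hne.symm) ⟨hx.1.le, hx.2.le⟩
  exact mem_iUnion_of_mem l hl

theorem coverEntropy_le_sup_pathGrowth_markovArrow {σ : Fin (n + 1) → Fin (n + 1)}
    (hσ : σ.Injective) {f : II → II} {p : Fin (n + 1) → II} (hp : StrictMono p)
    (hf : IsPLinear f p) (hpat : ∀ i, f (p i) = p (σ i)) :
    coverEntropy f univ ≤ 0 ⊔ pathGrowth (MarkovArrow σ) :=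
  coverEntropy_le_sup_pathGrowth hf.1 hf.2.2.1 hf.2.2.2
    (exists_markovArrow_map_mem hσ hp.monotone hf hpat)
    (injOn_basicInterval hσ hp.injective hf hpat) (Ioo_subset_iUnion_basicInterval p)

end MarkovGraph

section Tracking

variable {α : Type*} [ConditionallyCompleteLinearOrder α] [TopologicalSpace α] [OrderTopology α]
  [DenselyOrdered α]

theorem exists_Icc_mapsTo_Ioo_of_le {β : Type*} [LinearOrder β] [TopologicalSpace β]
    [OrderClosedTopology β] {g : α → β} (hg : Continuous g) {a b : α} {c d : β} (hab : a ≤ b)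
    (hcd : c < d) (hac : g a ≤ c) (hdb : d ≤ g b) :
    ∃ a' b', a' < b' ∧ Icc a' b' ⊆ Icc a b ∧ g a' = c ∧ g b' = d ∧
      MapsTo g (Ioo a' b') (Ioo c d) := by
  have hivt {u v : α} (huv : u ≤ v) : Icc (g u) (g v) ⊆ g '' Icc u v :=
    intermediate_value_Icc huv hg.continuousOn
  obtain ⟨w, hw, hwd⟩ := hivt hab ⟨hac.trans hcd.le, hdb⟩
  obtain ⟨b', ⟨hb', hgb'⟩, hb'min⟩ :=
    (isCompact_Icc.inter_right (isClosed_singleton.preimage hg)).exists_isLeast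
      (⟨w, hw, hwd⟩ : (Icc a b ∩ g ⁻¹' {d}).Nonempty)
  obtain ⟨w, hw, hwc⟩ := hivt hb'.1 ⟨hac, hcd.le.trans (ge_of_eq hgb')⟩
  obtain ⟨a', ⟨ha', hga'⟩, ha'max⟩ :=
    (isCompact_Icc.inter_right (isClosed_singleton.preimage hg)).exists_isGreatest
      (⟨w, hw, hwc⟩ : (Icc a b' ∩ g ⁻¹' {c}).Nonempty)
  rw [mem_preimage, mem_singleton_iff] at hga' hgb'
  have hlt : a' < b' := ha'.2.lt_of_ne fun h ↦ hcd.ne (by rw [← hga', ← hgb', h])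
  refine ⟨a', b', hlt, Icc_subset_Icc ha'.1 hb'.2, hga', hgb', fun x hx ↦ ⟨?_, ?_⟩⟩
  · by_contra! hxc
    obtain ⟨z, hz, hzc⟩ := hivt hx.2.le ⟨hxc, hcd.le.trans (ge_of_eq hgb')⟩
    exact (hx.1.trans_le hz.1).not_ge (ha'max ⟨⟨ha'.1.trans (hx.1.le.trans hz.1), hz.2⟩, hzc⟩)
  · by_contra! hdx
    obtain ⟨z, hz, hzd⟩ := hivt (ha'.1.trans hx.1.le) ⟨hac.trans hcd.le, hdx⟩
    exact (hz.2.trans_lt hx.2).not_ge (hb'min ⟨⟨hz.1, hz.2.trans (hx.2.le.trans hb'.2)⟩, hzd⟩)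

theorem exists_Icc_mapsTo_Ioo {β : Type*} [LinearOrder β] [TopologicalSpace β]
    [OrderClosedTopology β] {g : α → β} (hg : Continuous g) {a b : α} {c d : β} (hab : a ≤ b)
    (hcd : c < d) (h : Icc c d ⊆ uIcc (g a) (g b)) :
    ∃ a' b', a' < b' ∧ Icc a' b' ⊆ Icc a b ∧ (g a' = c ∧ g b' = d ∨ g a' = d ∧ g b' = c) ∧
      MapsTo g (Ioo a' b') (Ioo c d) := by
  have hc := h (left_mem_Icc.mpr hcd.le)
  have hd := h (right_mem_Icc.mpr hcd.le)
  rcases le_total (g a) (g b) with hle | hle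
  · rw [uIcc_of_le hle] at hc hd
    obtain ⟨a', b', hlt, hsub, ha', hb', hmaps⟩ :=
      exists_Icc_mapsTo_Ioo_of_le hg hab hcd hc.1 hd.2
    exact ⟨a', b', hlt, hsub, .inl ⟨ha', hb'⟩, hmaps⟩
  · rw [uIcc_of_ge hle] at hc hd
    obtain ⟨a', b', hlt, hsub, ha', hb', hmaps⟩ :=
      exists_Icc_mapsTo_Ioo_of_le (continuous_toDual.comp hg) hab
        (OrderDual.toDual_lt_toDual.mpr hcd) hd.2 hc.1
    exact ⟨a', b', hlt, hsub, .inr ⟨ha', hb'⟩, fun x hx ↦ (hmaps hx).symm⟩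

theorem exists_Icc_forall_iterate_mem_Ioo {Y : Type*} [TopologicalSpace Y] {T : Y × α → Y × α}
    (hT : Continuous T) (k : ℕ) {y : ℕ → Y} {a b : ℕ → α} (hy : ∀ j x, (T (y j, x)).1 = y (j + 1))
    (hab : ∀ j, a j < b j)
    (hcov : ∀ j, Icc (a (j + 1)) (b (j + 1)) ⊆ uIcc (T (y j, a j)).2 (T (y j, b j)).2) :
    ∃ c d, c < d ∧ Icc c d ⊆ Icc (a 0) (b 0) ∧
      Icc (a k) (b k) ⊆ uIcc (T^[k] (y 0, c)).2 (T^[k] (y 0, d)).2 ∧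
      ∀ x ∈ Ioo c d, ∀ i ≤ k, (T^[i] (y 0, x)).2 ∈ Ioo (a i) (b i) := by
  induction k generalizing y a b with
  | zero =>
    refine ⟨a 0, b 0, hab 0, le_rfl, Icc_subset_uIcc, fun x hx i hi ↦ ?_⟩
    rwa [Nat.le_zero.mp hi]
  | succ k ih =>
    obtain ⟨c', d', hcd', hsub', hend', htrack'⟩ :=
      ih (fun j ↦ hy (j + 1)) (fun j ↦ hab (j + 1)) (fun j ↦ hcov (j + 1))
    have hiter (x : α) (i : ℕ) : T^[i + 1] (y 0, x) = T^[i] (y 1, (T (y 0, x)).2) := by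
      rw [Function.iterate_succ_apply, ← hy 0 x]
    obtain ⟨c, d, hcd, hsub, hend, hmaps⟩ := exists_Icc_mapsTo_Ioo
      (g := fun x ↦ (T (y 0, x)).2) (by fun_prop) (hab 0).le hcd' (hsub'.trans (hcov 0))
    refine ⟨c, d, hcd, hsub, ?_, fun x hx i hi ↦ ?_⟩
    · rw [hiter, hiter]
      rcases hend with ⟨hc, hd⟩ | ⟨hc, hd⟩
      · rwa [hc, hd]
      · rwa [hc, hd, uIcc_comm]
    · rcases i with _ | i
      · exact ⟨(hsub ⟨le_rfl, hcd.le⟩).1.trans_lt hx.1, hx.2.trans_le (hsub ⟨hcd.le, le_rfl⟩).2⟩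
      · rw [hiter]
        exact htrack' _ (hmaps hx) i (Nat.le_of_succ_le_succ hi)

end Tracking

section LowerBound

variable {Y V : Type*} {E : V → V → Prop} {T : Y × II → Y × II} {y : ℕ → Y} {a b : ℕ → V → II}

/-- Intervals `(a j k, b j k)` in the fibres over the base orbit `y 0, y 1, …` of a skew product
`T` that cross one another along the arrows `k → l` of the graph `E`. -/
structure IsMarkovFamily (E : V → V → Prop) (T : Y × II → Y × II) (y : ℕ → Y)
    (a b : ℕ → V → II) : Prop where
  fst_eq : ∀ j x, (T (y j, x)).1 = y (j + 1)
  lt : ∀ j k, a j k < b j k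
  disjoint : ∀ j, Pairwise (Function.onFun Disjoint fun k ↦ Ioo (a j k) (b j k))
  covers : ∀ j k l, E k l →
    Icc (a (j + 1) l) (b (j + 1) l) ⊆ uIcc (T (y j, a j k)).2 (T (y j, b j k)).2

theorem IsMarkovFamily.iterate_fst_eq (h : IsMarkovFamily E T y a b) (m j : ℕ) (x : II) :
    (T^[m] (y j, x)).1 = y (j + m) := by
  induction m with
  | zero => rfl
  | succ m ih =>
    rw [Function.iterate_succ_apply', ← Prod.mk.eta (p := T^[m] (y j, x)), ih, h.fst_eq]
    rfl

/-- The code `κ` records on which side of a subinterval of length at least `η` the point `z` lies;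
the points of the subinterval follow the word `r 0, …, r m` from time `j` on, and one of them is
`η`-close to `z`. -/
def IsBlockCode (T : Y × II → Y × II) (y : ℕ → Y) (a b : ℕ → V → II) (η : ℝ) (m j : ℕ)
    (r : ℕ → V) (z : II) (κ : Prop × Prop) : Prop :=
  ∃ c d, η ≤ dist c d ∧ (∃ x ∈ Ioo c d, dist x z < η) ∧ κ = (d ≤ z, z ≤ c) ∧
    ∀ u ∈ Ioo c d, ∀ s ≤ m, (T^[s] (y j, u)).2 ∈ Ioo (a (j + s) (r s)) (b (j + s) (r s))

theorem lt_of_mem_Ioo_of_dist_lt {η c d c' d' x x' z : ℝ} (hcd : η ≤ dist c d)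
    (hcd' : η ≤ dist c' d') (hx : x ∈ Ioo c d) (hx' : x' ∈ Ioo c' d') (hxz : dist x z < η)
    (hxz' : dist x' z < η) (hd : d ≤ z ↔ d' ≤ z) (hc : z ≤ c ↔ z ≤ c') : c' < d := by
  by_contra! hdc
  rw [dist_comm, Real.dist_eq, abs_of_pos (sub_pos.mpr (hx.1.trans hx.2))] at hcd
  rw [dist_comm, Real.dist_eq, abs_of_pos (sub_pos.mpr (hx'.1.trans hx'.2))] at hcd'
  rw [Real.dist_eq, abs_lt] at hxz hxz'
  have hzd : z < d := by
    rw [← not_le, hd]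
    intro hdz
    linarith [hx.2]
  have hcz : c' < z := by
    rw [← not_le, ← hc]
    intro hzc
    linarith [hx'.1]
  linarith

theorem nonempty_Ioo_inter_Ioo_of_dist_lt {η : ℝ} {c d c' d' x x' z : II} (hcd : η ≤ dist c d)
    (hcd' : η ≤ dist c' d') (hx : x ∈ Ioo c d) (hx' : x' ∈ Ioo c' d') (hxz : dist x z < η)
    (hxz' : dist x' z < η) (hd : d ≤ z ↔ d' ≤ z) (hc : z ≤ c ↔ z ≤ c') :
    (Ioo c d ∩ Ioo c' d').Nonempty := by
  have hlt : c' < d := lt_of_mem_Ioo_of_dist_lt hcd hcd' hx hx' hxz hxz' hd hc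
  have hlt' : c < d' := lt_of_mem_Ioo_of_dist_lt hcd' hcd hx' hx hxz' hxz hd.symm hc.symm
  rw [Ioo_inter_Ioo, nonempty_Ioo, sup_lt_iff, lt_inf_iff, lt_inf_iff]
  exact ⟨⟨hx.1.trans hx.2, hlt'⟩, hlt, hx'.1.trans hx'.2⟩

theorem IsMarkovFamily.eq_of_isBlockCode (h : IsMarkovFamily E T y a b) {η : ℝ} {m j : ℕ}
    {r r' : ℕ → V} {z : II} {κ : Prop × Prop} (hr : IsBlockCode T y a b η m j r z κ)
    (hr' : IsBlockCode T y a b η m j r' z κ) {s : ℕ} (hs : s ≤ m) : r s = r' s := by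
  obtain ⟨c, d, hcd, ⟨x, hx, hxz⟩, rfl, htrack⟩ := hr
  obtain ⟨c', d', hcd', ⟨x', hx', hxz'⟩, hκ, htrack'⟩ := hr'
  rw [Prod.mk.injEq] at hκ
  obtain ⟨u, hu, hu'⟩ := nonempty_Ioo_inter_Ioo_of_dist_lt hcd hcd' hx hx' hxz hxz'
    (iff_of_eq hκ.1) (iff_of_eq hκ.2)
  by_contra hne
  exact (h.disjoint (j + s) hne).le_bot ⟨htrack u hu s hs, htrack' u hu' s hs⟩

variable [PseudoMetricSpace Y]

theorem IsMarkovFamily.exists_Icc_of_isPath (h : IsMarkovFamily E T y a b) (hT : Continuous T)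
    {v : ℕ → V} (hv : IsPath E v) (j m : ℕ) {η δ : ℝ}
    (hgap : ∀ k, δ ≤ dist (a (j + m) k) (b (j + m) k))
    (hT_η : ∀ p q, dist p q < η → dist (T^[m] p) (T^[m] q) < δ) :
    ∃ c d, c < d ∧ Icc c d ⊆ Icc (a j (v 0)) (b j (v 0)) ∧
      Icc (a (j + m) (v m)) (b (j + m) (v m)) ⊆ uIcc (T^[m] (y j, c)).2 (T^[m] (y j, d)).2 ∧
      η ≤ dist c d ∧
      ∀ u ∈ Ioo c d, ∀ s ≤ m, (T^[s] (y j, u)).2 ∈ Ioo (a (j + s) (v s)) (b (j + s) (v s)) := by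
  obtain ⟨c, d, hcd, hsub, hend, htrack⟩ := exists_Icc_forall_iterate_mem_Ioo hT m
    (y := fun i ↦ y (j + i)) (a := fun i ↦ a (j + i) (v i)) (b := fun i ↦ b (j + i) (v i))
    (fun i ↦ h.fst_eq (j + i)) (fun i ↦ h.lt (j + i) (v i))
    (fun i ↦ h.covers (j + i) (v i) (v (i + 1)) (hv i))
  refine ⟨c, d, hcd, hsub, hend, ?_, htrack⟩
  by_contra! hdist
  have hclose : dist (T^[m] (y j, c)).2 (T^[m] (y j, d)).2 < δ :=
    (le_max_right _ _).trans_lt (hT_η (y j, c) (y j, d) (by simpa [Prod.dist_eq] using hdist))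
  have hle := (h.lt (j + m) (v m)).le
  refine ((hgap (v m)).trans ?_).not_gt hclose
  have hcoe {p q : II} : MapsTo Subtype.val (uIcc p q) (uIcc (p : ℝ) q) :=
    (Subtype.mono_coe _).mapsTo_uIcc
  exact Real.dist_le_of_mem_uIcc (hcoe (hend (left_mem_Icc.mpr hle)))
    (hcoe (hend (right_mem_Icc.mpr hle)))

theorem IsMarkovFamily.exists_forall_isBlockCode (h : IsMarkovFamily E T y a b)
    (hT : Continuous T) {v : ℕ → V} (hv : IsPath E v) {m : ℕ} (hm : 0 < m) {η δ : ℝ}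
    (hgap : ∀ j k, δ ≤ dist (a j k) (b j k))
    (hT_η : ∀ p q, dist p q < η → dist (T^[m] p) (T^[m] q) < δ) (k : ℕ) :
    ∃ x, ∀ z, (∀ j < m * k, dist (T^[j] x) (T^[j] z) < η) → ∀ i < k,
      ∃ κ, IsBlockCode T y a b η m (m * i) (fun s ↦ v (m * i + s)) (T^[m * i] z).2 κ := by
  choose c d hcd hsub hend hη_le htrack using fun i ↦
    h.exists_Icc_of_isPath hT (hv.shift (m * i)) (m * i) m (hgap _) hT_η
  obtain ⟨c₀, d₀, hcd₀, -, -, hblock⟩ := exists_Icc_forall_iterate_mem_Ioo (hT.iterate m) k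
    (y := fun i ↦ y (m * i)) (fun i ↦ h.iterate_fst_eq m (m * i)) hcd
    (fun i ↦ (hsub (i + 1)).trans (hend i))
  obtain ⟨x, hx⟩ := exists_between hcd₀
  refine ⟨(y 0, x), fun z hz i hi ↦ ⟨_, c i, d i, hη_le i,
    ⟨(T^[m * i] (y 0, x)).2, ?_, ?_⟩, rfl, htrack i⟩⟩
  · rw [Function.iterate_mul]
    exact hblock x hx i hi.le
  · exact (le_max_right _ _).trans_lt (hz (m * i) (Nat.mul_lt_mul_of_pos_left hi hm))

theorem IsMarkovFamily.ncard_pathWords_le (h : IsMarkovFamily E T y a b)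
    (hT : Continuous T) {m : ℕ} (hm : 0 < m) {η δ : ℝ}
    (hgap : ∀ j k, δ ≤ dist (a j k) (b j k))
    (hT_η : ∀ p q, dist p q < η → dist (T^[m] p) (T^[m] q) < δ) {k : ℕ} {t : Finset (Y × II)}
    (ht : IsDynCoverOf T univ {p | dist p.1 p.2 < η} (m * k) t) :
    (pathWords E (m * k)).ncard ≤ 4 ^ k * t.card := by
  rw [isDynCoverOf_univ_dist_lt_iff] at ht
  have hcode (w : pathWords E (m * k)) : ∃ (v : ℕ → V) (z : t) (κ : Fin k → Prop × Prop),
      (∀ i, w.1 i = v i) ∧ ∀ i : Fin k,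
        IsBlockCode T y a b η m (m * i) (fun s ↦ v (m * i + s)) (T^[m * i] z.1).2 (κ i) := by
    obtain ⟨-, v, hv, hwv⟩ := w
    obtain ⟨x, hx⟩ := h.exists_forall_isBlockCode hT hv hm hgap hT_η k
    obtain ⟨z, hzt, hz⟩ := ht x
    choose κ hκ using fun i : Fin k ↦ hx z hz i i.2
    exact ⟨v, ⟨z, hzt⟩, κ, hwv, hκ⟩
  choose v z κ hwv hκ using hcode
  have hinj : Function.Injective fun w ↦ (κ w, z w) := by
    intro w w' hww'
    obtain ⟨hκ_eq, hz_eq⟩ := Prod.mk.injEq _ _ _ _ ▸ hww'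
    refine Subtype.ext (funext fun s ↦ ?_)
    have hs : (s : ℕ) / m < k := Nat.div_lt_of_lt_mul s.2
    have hw := hκ w ⟨s / m, hs⟩
    rw [hκ_eq, hz_eq] at hw
    have := h.eq_of_isBlockCode hw (hκ w' ⟨s / m, hs⟩) (Nat.mod_lt s hm).le
    rwa [Nat.div_add_mod, ← hwv, ← hwv] at this
  calc (pathWords E (m * k)).ncard = Nat.card (pathWords E (m * k)) := rfl
    _ ≤ Nat.card ((Fin k → Prop × Prop) × t) := Nat.card_le_card_of_injective _ hinj
    _ = 4 ^ k * t.card := by simp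

theorem IsMarkovFamily.pathGrowth_le_coverEntropy [Finite V] (h : IsMarkovFamily E T y a b)
    (hT : UniformContinuous T) {δ : ℝ} (hδ : 0 < δ)
    (hgap : ∀ j k, δ ≤ dist (a j k) (b j k)) : pathGrowth E ≤ coverEntropy T univ := by
  refine le_of_forall_natCast_mul_le (c := Real.log 4) fun m hm ↦ ?_
  obtain ⟨η, hη, hT_η⟩ := Metric.uniformContinuous_iff.mp (.iterate T m hT) δ hδ
  set U : SetRel (Y × II) (Y × II) := {p | dist p.1 p.2 < η}
  have hcount (k : ℕ) : ((pathWords E (m * k)).ncard : ℝ≥0∞) ≤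
      4 ^ k * (coverMincard T univ U (m * k) : ℝ≥0∞) := by
    rcases eq_top_or_lt_top (coverMincard T univ U (m * k)) with htop | hfin
    · simp [htop]
    obtain ⟨t, ht, hcard⟩ := (coverMincard_finite_iff _ _ _ _).mp hfin
    rw [← hcard]
    exact_mod_cast h.ncard_pathWords_le hT.continuous hm.bot_lt hgap (fun _ _ ↦ @hT_η _ _) ht
  have hpow : expGrowthSup (fun k ↦ (4 : ℝ≥0∞) ^ k) = Real.log 4 := by
    rw [expGrowthSup_pow, ENNReal.log_pos_real (by simp) (by simp), ENNReal.toReal_ofNat]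
  have hmono : Monotone fun k ↦ (coverMincard T univ U k : ℝ≥0∞) :=
    fun _ _ hkl ↦ ENat.toENNReal_mono (coverMincard_monotone_time T univ U hkl)
  calc m * pathGrowth E = expGrowthSup fun k ↦ ((pathWords E (m * k)).ncard : ℝ≥0∞) :=
        ((Nat.mono_cast.comp (monotone_ncard_pathWords E)).expGrowthSup_comp_mul hm).symm
    _ ≤ expGrowthSup ((fun k ↦ (4 : ℝ≥0∞) ^ k) * fun k ↦ (coverMincard T univ U (m * k) : ℝ≥0∞)) :=
        expGrowthSup_monotone hcount
    _ ≤ Real.log 4 + expGrowthSup fun k ↦ (coverMincard T univ U (m * k) : ℝ≥0∞) := by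
        refine (expGrowthSup_mul_le ?_ ?_).trans_eq (by rw [hpow]) <;> simp [hpow]
    _ = Real.log 4 + m * coverEntropyEntourage T univ U :=
        congrArg _ (hmono.expGrowthSup_comp_mul hm)
    _ ≤ Real.log 4 + m * coverEntropy T univ := by
        gcongr
        exact coverEntropyEntourage_le_coverEntropy T univ (Metric.dist_mem_uniformity hη)

end LowerBound

section OrderedSets

variable {α : Type*} [LinearOrder α]

theorem le_of_mem_of_isGreatest {ι : Type*} [PartialOrder ι] {C : ι → Set α}
    (hC : ∀ i j, i < j → ∀ x ∈ C i, ∀ y ∈ C j, x < y) {i j : ι} (hij : i ≤ j) {x t : α}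
    (hx : x ∈ C i) (ht : IsGreatest (C j) t) : x ≤ t := by
  rcases hij.eq_or_lt with rfl | hij
  · exact ht.2 hx
  · exact (hC i j hij x hx t ht.1).le

theorem le_of_isLeast_of_mem {ι : Type*} [PartialOrder ι] {C : ι → Set α}
    (hC : ∀ i j, i < j → ∀ x ∈ C i, ∀ y ∈ C j, x < y) {i j : ι} (hij : i ≤ j) {y b : α}
    (hb : IsLeast (C i) b) (hy : y ∈ C j) : b ≤ y := by
  rcases hij.eq_or_lt with rfl | hij
  · exact hb.2 hy
  · exact (hC i j hij b hb.1 y hy).le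

variable {n : ℕ} {C : Fin (n + 1) → Set α} {bot top : Fin (n + 1) → α}

theorem pairwise_disjoint_Ioo_top_bot (hC : ∀ i j, i < j → ∀ x ∈ C i, ∀ y ∈ C j, x < y)
    (hbot : ∀ i, IsLeast (C i) (bot i)) (htop : ∀ i, IsGreatest (C i) (top i)) :
    Pairwise (Function.onFun Disjoint fun k : Fin n ↦ Ioo (top k.castSucc) (bot k.succ)) := by
  refine (pairwise_disjoint_on _).mpr fun k l hkl ↦ ?_
  have hle : bot k.succ ≤ top l.castSucc :=
    le_of_mem_of_isGreatest hC (Fin.succ_le_castSucc_iff.mpr hkl) (hbot _).1 (htop _)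
  exact disjoint_left.mpr fun x hk hl ↦ (hk.2.trans_le hle).not_gt hl.1

theorem MarkovArrow.Icc_top_bot_subset_uIcc {σ : Fin (n + 1) → Fin (n + 1)} {k l : Fin n}
    (hkl : MarkovArrow σ k l) (hC : ∀ i j, i < j → ∀ x ∈ C i, ∀ y ∈ C j, x < y)
    (hbot : ∀ i, IsLeast (C i) (bot i)) (htop : ∀ i, IsGreatest (C i) (top i)) {x y : α}
    (hx : x ∈ C (σ k.castSucc)) (hy : y ∈ C (σ k.succ)) :
    Icc (top l.castSucc) (bot l.succ) ⊆ uIcc x y := by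
  have hl := hkl (left_mem_Icc.mpr Fin.castSucc_lt_succ.le)
  have hr := hkl (right_mem_Icc.mpr Fin.castSucc_lt_succ.le)
  rcases le_total (σ k.castSucc) (σ k.succ) with hle | hle
  · rw [uIcc_of_le hle] at hl hr
    exact (Icc_subset_Icc (le_of_mem_of_isGreatest hC hl.1 hx (htop _))
      (le_of_isLeast_of_mem hC hr.2 (hbot _) hy)).trans Icc_subset_uIcc
  · rw [uIcc_of_ge hle] at hl hr
    exact (Icc_subset_Icc (le_of_mem_of_isGreatest hC hl.1 hy (htop _))
      (le_of_isLeast_of_mem hC hr.2 (hbot _) hx)).trans Icc_subset_uIcc'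

end OrderedSets

section Strips

theorem exists_forall_add_nsmul_of_eventually_residual {G : Type*} [AddGroup G]
    [TopologicalSpace G] [ContinuousAdd G] [BaireSpace G] {P : G → Prop}
    (hP : ∀ᶠ θ in residual G, P θ) (β : G) : ∃ θ, ∀ j : ℕ, P (θ + j • β) := by
  have hall : ∀ᶠ θ in residual G, ∀ j : ℕ, P (θ + j • β) :=
    eventually_countable_forall.mpr fun j ↦
      (tendsto_residual_of_isOpenMap (f := (· + j • β)) (by fun_prop)
        (isOpenMap_add_right _)).eventually hP
  exact (dense_of_mem_residual hall).nonempty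

theorem exists_pos_forall_le_dist {ι X : Type*} [Finite ι] [MetricSpace X] {B : ι → Set X}
    (hB : ∀ i, IsCompact (B i)) (hdisj : Pairwise (Function.onFun Disjoint B)) :
    ∃ δ > 0, ∀ i j, i ≠ j → ∀ x ∈ B i, ∀ y ∈ B j, δ ≤ dist x y := by
  have hsep (i j : ι) (hij : i ≠ j) :
      ∀ᶠ δ in 𝓝[>] (0 : ℝ), ∀ x ∈ B i, ∀ y ∈ B j, δ ≤ dist x y := by
    obtain ⟨r, hr, hlt⟩ := Metric.exists_pos_forall_lt_edist (hB i) (hB j).isClosed (hdisj hij)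
    filter_upwards [Ioo_mem_nhdsGT hr] with δ hδ x hx y hy
    have hlt_xy := hlt x hx y hy
    rw [edist_nndist, ENNReal.coe_lt_coe] at hlt_xy
    exact hδ.2.le.trans (NNReal.coe_le_coe.mpr hlt_xy.le)
  have hall : ∀ᶠ δ in 𝓝[>] (0 : ℝ), ∀ i j, i ≠ j → ∀ x ∈ B i, ∀ y ∈ B j, δ ≤ dist x y := by
    simpa only [eventually_all] using hsep
  exact (eventually_mem_nhdsWithin.and hall).exists

theorem stripLT.eventually_forall_lt {A B : Set Cyl} (hAB : stripLT A B) :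
    ∀ᶠ θ in residual S1, ∀ x ∈ fiber A θ, ∀ y ∈ fiber B θ, x < y := by
  obtain ⟨G, hG, hlt⟩ := hAB
  filter_upwards [hG] with θ hθ x hx y hy
  have hsub (S : Set II) : Subtype.val '' S ⊆ Icc (0 : ℝ) 1 := by
    rintro _ ⟨z, -, rfl⟩
    exact z.2
  calc (x : ℝ) ≤ MA A θ := le_csSup (bddAbove_Icc.mono (hsub _)) (mem_image_of_mem _ hx)
    _ < mA B θ := hlt θ hθ
    _ ≤ y := csInf_le (bddBelow_Icc.mono (hsub _)) (mem_image_of_mem _ hy)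

theorem IsStrip.isCompact_fiber {A : Set Cyl} (hA : IsStrip A) (θ : S1) : IsCompact (fiber A θ) :=
  (hA.1.preimage (by fun_prop : Continuous fun x : II ↦ (θ, x))).isCompact

theorem exists_isMarkovFamily_of_exhibitsStripPattern {n : ℕ} {τ : Equiv.Perm (Fin (n + 1))}
    {F : Cyl → Cyl} {α : S1} (hα : ∀ q, (F q).1 = q.1 + α) (hF : ExhibitsStripPattern F τ) :
    ∃ y a b, IsMarkovFamily (MarkovArrow τ) F y a b ∧
      ∃ δ > 0, ∀ j k, δ ≤ dist (a j k) (b j k) := by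
  obtain ⟨B, hB, hlt, hdisj, hFB⟩ := hF
  choose bot hbot using fun i θ ↦ ((hB i).isCompact_fiber θ).exists_isLeast ((hB i).2.1 θ)
  choose top htop using fun i θ ↦ ((hB i).isCompact_fiber θ).exists_isGreatest ((hB i).2.1 θ)
  obtain ⟨θ₀, hθ₀⟩ : ∃ θ₀, ∀ j : ℕ, ∀ i i', i < i' → ∀ x ∈ fiber (B i) (θ₀ + j • α),
      ∀ y ∈ fiber (B i') (θ₀ + j • α), x < y := by
    refine exists_forall_add_nsmul_of_eventually_residual (P := fun θ ↦ ∀ i i', i < i' →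
      ∀ x ∈ fiber (B i) θ, ∀ y ∈ fiber (B i') θ, x < y) ?_ α
    simp only [eventually_countable_forall]
    exact fun i i' hii' ↦ (hlt i i' hii').eventually_forall_lt
  have hmem {j i x} (hx : x ∈ fiber (B i) (θ₀ + j • α)) :
      (F (θ₀ + j • α, x)).2 ∈ fiber (B (τ i)) (θ₀ + (j + 1) • α) := by
    have hFx : F (θ₀ + j • α, x) ∈ B (τ i) := hFB i ▸ mem_image_of_mem F hx
    rwa [← Prod.mk.eta (p := F _), hα, add_assoc, ← succ_nsmul] at hFx
  obtain ⟨δ, hδ, hgap⟩ := exists_pos_forall_le_dist (fun i ↦ (hB i).1.isCompact) hdisj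
  refine ⟨fun j ↦ θ₀ + j • α, fun j k ↦ top k.castSucc (θ₀ + j • α),
    fun j k ↦ bot k.succ (θ₀ + j • α), ⟨?_, ?_, ?_, ?_⟩, δ, hδ, ?_⟩
  · exact fun j x ↦ by rw [hα, add_assoc, ← succ_nsmul]
  · exact fun j k ↦ hθ₀ j _ _ Fin.castSucc_lt_succ _ (htop _ _).1 _ (hbot _ _).1
  · exact fun j ↦ pairwise_disjoint_Ioo_top_bot (hθ₀ j) (fun i ↦ hbot i _) (fun i ↦ htop i _)
  · exact fun j k l hkl ↦ hkl.Icc_top_bot_subset_uIcc (hθ₀ (j + 1)) (fun i ↦ hbot i _)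
      (fun i ↦ htop i _) (hmem (htop _ _).1) (hmem (hbot _ _).1)
  · intro j k
    have hle := hgap _ _ Fin.castSucc_lt_succ.ne _ (htop k.castSucc (θ₀ + j • α)).1 _
      (hbot k.succ (θ₀ + j • α)).1
    simpa [Prod.dist_eq] using hle

theorem pathGrowth_markovArrow_le_hTop {n : ℕ} {τ : Equiv.Perm (Fin (n + 1))} {F : Cyl → Cyl}
    (hF : Continuous F) {α : S1} (hα : ∀ q, (F q).1 = q.1 + α) (hEx : ExhibitsStripPattern F τ) :
    pathGrowth (MarkovArrow τ) ≤ hTop F := by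
  obtain ⟨y, a, b, hfam, δ, hδ, hgap⟩ := exists_isMarkovFamily_of_exhibitsStripPattern hα hEx
  exact hfam.pathGrowth_le_coverEntropy (CompactSpace.uniformContinuous_of_continuous hF) hδ hgap

end Strips

theorem entropy_ge_tau_linear_general {n : ℕ} (τ : Equiv.Perm (Fin (n + 1))) (fτ : II → II)
    (p : Fin (n + 1) → II) (hp : StrictMono p) (hlin : IsPLinear fτ p)
    (hpat : ∀ i, fτ (p i) = p (τ i)) (β : S1) (Fτ : Cyl → Cyl)
    (hFτ : ∀ q : Cyl, Fτ q = (q.1 + β, fτ q.2)) (F : Cyl → Cyl) (hF : Continuous F) (α : S1)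
    (hα : ∀ q : Cyl, (F q).1 = q.1 + α) (hEx : ExhibitsStripPattern F τ) :
    hTop Fτ ≤ hTop F ∧ hTop Fτ = hTop fτ := by
  have hprod : hTop Fτ = hTop fτ := by
    obtain rfl : Fτ = Prod.map (· + β) fτ := funext hFτ
    exact coverEntropy_prodMap_isometry (isometry_add_right β) fτ
  refine ⟨hprod.trans_le ?_, hprod⟩
  calc hTop fτ ≤ 0 ⊔ pathGrowth (MarkovArrow τ) :=
        coverEntropy_le_sup_pathGrowth_markovArrow τ.injective hp hlin hpat
    _ ≤ hTop F :=
        sup_le (coverEntropy_nonneg F univ_nonempty) (pathGrowth_markovArrow_le_hTop hF hα hEx)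

/-- if `F` exhibits the strips pattern `τ` then
`h(F) ≥ h(F_τ) = h(f_τ)`. -/
theorem entropy_ge_tau_linear {n : ℕ}
    (τ : Equiv.Perm (Fin (n + 1))) (hτ : IsCyclicPerm τ)
    (fτ : II → II) (p : Fin (n + 1) → II) (hp : StrictMono p)
    (hlin : IsPLinear fτ p) (hpat : ∀ i, fτ (p i) = p (τ i))
    (ω : ℝ) (hω : Irrational ω)
    (Fτ : Cyl → Cyl) (hFτ : ∀ q : Cyl, Fτ q = (q.1 + (ω : S1), fτ q.2))
    (F : Cyl → Cyl) (hF : IsQPF F) (hEx : ExhibitsStripPattern F τ) :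
    hTop Fτ ≤ hTop F ∧ hTop Fτ = hTop fτ :=
  let ⟨hF_cont, α, _, hα⟩ := hF
  entropy_ge_tau_linear_general τ fτ p hp hlin hpat ω Fτ hFτ F hF_cont α hα hEx
end
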